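/- arXiv:1507.03116 — 2 statements merged into one kernel-verified Lean document; each statement's English description precedes it below -/
import Mathlib

section
/- Consider the singular ODE z h (dW/dz) = blockdiag(A_{11}, A_{22})(z,h) W + h^p Θ(z,h) W, p ≥ 1, where A_{11}, A_{22}, Θ are analytic in z and continuous in h on B(0,r) × (0,h₀] ⊂ ℂ × ℝ⁺, and suppose A_{11}(0) and A_{22}(0) have no eigenvalues in common. Then there exists a uniformly bounded block-diagonalizing conjugator T = Id + O(h^p), with uniformly bounded inverse, which is analytic in z on a slit ball around z = 0 with branch cut along the negative real axis and continuous at z = 0. -/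
open Set

attribute [local instance] Matrix.linftyOpNormedAddCommGroup Matrix.linftyOpNormedRing
  Matrix.linftyOpNormedAlgebra Matrix.linftyOpNormedSpace

/-- The slit ball `{ z ∈ ℂ : 0 < |z| < ρ, z ∉ (−∞,0] }` around `0`, with branch cut along
the negative real axis. -/
def SlitBall (ρ : ℝ) : Set ℂ := {z : ℂ | ‖z‖ < ρ ∧ (z.im ≠ 0 ∨ 0 < z.re)}

/-!
The conjugator is sought in the form `T = [1, X; Y, 1]`; it block-diagonalizes the system exactly
when each of `X` and `Y` solves a singular Riccati equation `z h X' = A X - X B + S - X R X` with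
`R` and `S` of size `h ^ p`.

Fix the algebraic solution `X₀` of the equation at `z = 0` and write `X = X₀ + z Y (log z)`. In the
variable `t = log z`, `Y` satisfies a Riccati equation without singular point on a left sector of
the `t`-plane, and boundedness of `Y` gives continuity of `X` at `z = 0`. A conjugation that is
bounded uniformly in `h` makes `A 0` and `B 0` nearly diagonal, so the linear part splits up to a
small error into scalar equations `h u' = (μ i - ν j) u + g` with `μ i - ν j` bounded away from `0`.
For a suitable slope of the sector, `Re ((μ i - ν j) w)` is bounded away from `0` for both boundary
directions `w`, so that each scalar equation can be integrated, either from the apex or from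
infinity along a boundary ray, with a solution bounded by a constant times `sup ‖g‖`, uniformly in
`h`. Picard iteration then solves the Riccati equation.
-/

open Filter Topology

/-- Bounded holomorphic functions on `U`: the function class in which the linear equation is
solved and the Picard iteration takes place. -/
structure BoundedHolomorphicOn {E : Type*} [NormedAddCommGroup E] [NormedSpace ℂ E]
    (f : ℂ → E) (U : Set ℂ) : Prop where
  differentiableOn : DifferentiableOn ℂ f U
  bounded : ∃ M, ∀ t ∈ U, ‖f t‖ ≤ M

/-- `J` solves the linear equation `u' = L u + g` on `U`, with a loss of at most a factor `K` in
the supremum norm. Additivity of `J` is only recorded through the estimate `norm_sub_le`. -/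
structure IsSolutionOperator {E : Type*} [NormedAddCommGroup E] [NormedSpace ℂ E]
    (U : Set ℂ) (L : E → E) (K : ℝ) (J : (ℂ → E) → ℂ → E) : Prop where
  hasDerivAt : ∀ g, BoundedHolomorphicOn g U → ∀ t ∈ U, HasDerivAt (J g) (L (J g t) + g t) t
  norm_le : ∀ g, BoundedHolomorphicOn g U → ∀ M, (∀ s ∈ U, ‖g s‖ ≤ M) →
    ∀ t ∈ U, ‖J g t‖ ≤ K * M
  norm_sub_le : ∀ f g, BoundedHolomorphicOn f U → BoundedHolomorphicOn g U →
    ∀ M, (∀ s ∈ U, ‖f s - g s‖ ≤ M) → ∀ t ∈ U, ‖J f t - J g t‖ ≤ K * M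

section ScalarEquation

variable {U : Set ℂ} {lam : ℂ}

lemma norm_primitive_ray_sub_le {G g : ℂ → ℂ} {M c X : ℝ} {t w : ℂ} (hc : 0 < c)
    (hcw : c ≤ (lam * w).re) (hX : 0 ≤ X) (hmem : ∀ x ∈ Icc 0 X, t + x * w ∈ U)
    (hg : ∀ s ∈ U, ‖g s‖ ≤ M)
    (hG : ∀ s ∈ U, HasDerivAt G (Complex.exp (-(lam * s)) * g s) s) :
    ‖G (t + X * w) - G t‖ ≤ ‖w‖ / c * M * Real.exp (-(lam * t).re) := by
  set A := ‖w‖ * M * Real.exp (-(lam * t).re) with hA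
  have hM : 0 ≤ M := (norm_nonneg _).trans (hg _ (hmem 0 ⟨le_rfl, hX⟩))
  have hray : ∀ x ∈ Icc 0 X, HasDerivAt (fun y : ℝ => G (t + y * w) - G t)
      (Complex.exp (-(lam * (t + x * w))) * g (t + x * w) * w) x := by
    intro x hx
    have hline : HasDerivAt (fun y : ℝ => t + y * w) w x := by
      simpa using ((Complex.ofRealCLM.hasDerivAt (x := x)).mul_const w).const_add t
    exact ((hG _ (hmem x hx)).comp x hline).sub_const _
  have hprimitive : ∀ x : ℝ, HasDerivAt (fun y => A / c * (1 - Real.exp (-c * y)))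
      (A * Real.exp (-c * x)) x := by
    intro x
    refine ((((hasDerivAt_id x).const_mul (-c)).exp.const_sub 1).const_mul (A / c)).congr_deriv ?_
    simp only [id_eq]
    field_simp
  have hspeed : ∀ x ∈ Ico 0 X,
      ‖Complex.exp (-(lam * (t + x * w))) * g (t + x * w) * w‖ ≤ A * Real.exp (-c * x) := by
    intro x hx
    have hre : (-(lam * (t + x * w))).re = -(lam * t).re - x * (lam * w).re := by
      rw [mul_add, mul_left_comm, Complex.neg_re, Complex.add_re, Complex.re_ofReal_mul]
      ring
    have hexp : Real.exp (-(lam * t).re - x * (lam * w).re)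
        ≤ Real.exp (-(lam * t).re) * Real.exp (-c * x) := by
      rw [← Real.exp_add]
      exact Real.exp_le_exp.2 (by nlinarith [hx.1])
    rw [norm_mul, norm_mul, Complex.norm_exp, hre]
    calc _ ≤ Real.exp (-(lam * t).re) * Real.exp (-c * x) * M * ‖w‖ := by
          have := hg _ (hmem x ⟨hx.1, hx.2.le⟩)
          gcongr
      _ = A * Real.exp (-c * x) := by rw [hA]; ring
  have hle := image_norm_le_of_norm_deriv_right_le_deriv_boundary
    (fun x hx => (hray x hx).continuousAt.continuousWithinAt)
    (fun x hx => (hray x ⟨hx.1, hx.2.le⟩).hasDerivWithinAt) (by simp) hprimitive hspeed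
    (right_mem_Icc.2 hX)
  calc _ ≤ A / c * (1 - Real.exp (-c * X)) := hle
    _ ≤ A / c * 1 := by gcongr; linarith [Real.exp_pos (-c * X)]
    _ = ‖w‖ / c * M * Real.exp (-(lam * t).re) := by rw [hA]; ring

/-- The filter `l` is an end of `U` from which the equation `u' = lam * u + g` can be integrated:
the primitives `G` of `exp (-lam s) g(s)` converge along `l` to some `ℓ`, and the solution
`exp (lam t) (G t - ℓ)` is bounded by `K` times the supremum of `g`. -/
def IsIntegrationEnd (U : Set ℂ) (lam : ℂ) (K : ℝ) (l : Filter ℂ) : Prop :=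
  ∀ g : ℂ → ℂ, ∀ M, (∀ s ∈ U, ‖g s‖ ≤ M) →
    ∀ G : ℂ → ℂ, (∀ s ∈ U, HasDerivAt G (Complex.exp (-(lam * s)) * g s) s) →
      ∃ ℓ, Tendsto G l (𝓝 ℓ) ∧
        ∀ t ∈ U, ‖G t - ℓ‖ ≤ K * M * Real.exp (-(lam * t).re)

lemma norm_exp_mul_le_of_norm_le {v t : ℂ} {A : ℝ} (hv : ‖v‖ ≤ A * Real.exp (-(lam * t).re)) :
    ‖Complex.exp (lam * t) * v‖ ≤ A := by
  rw [norm_mul, Complex.norm_exp]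
  calc _ ≤ Real.exp (lam * t).re * (A * Real.exp (-(lam * t).re)) := by gcongr
    _ = A := by rw [Real.exp_neg]; field_simp

lemma hasDerivAt_exp_mul_primitive {G g : ℂ → ℂ} {t : ℂ} (ℓ : ℂ)
    (hG : HasDerivAt G (Complex.exp (-(lam * t)) * g t) t) :
    HasDerivAt (fun s => Complex.exp (lam * s) * (G s - ℓ))
      (lam * (Complex.exp (lam * t) * (G t - ℓ)) + g t) t := by
  have hexp : HasDerivAt (fun s => Complex.exp (lam * s)) (Complex.exp (lam * t) * lam) t := by
    simpa using ((hasDerivAt_id t).const_mul lam).cexp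
  refine (hexp.mul (hG.sub_const ℓ)).congr_deriv ?_
  have hinv : Complex.exp (lam * t) * Complex.exp (-(lam * t)) = 1 := by
    rw [← Complex.exp_add, add_neg_cancel, Complex.exp_zero]
  linear_combination g t * hinv

lemma IsIntegrationEnd.exists_isSolutionOperator {K : ℝ} {l : Filter ℂ} [l.NeBot]
    (hl : IsIntegrationEnd U lam K l) (hU : IsOpen U) (hconv : Convex ℝ U) :
    ∃ J, IsSolutionOperator U (fun u => lam * u) K J := by
  have hprimitive : ∀ g : ℂ → ℂ, BoundedHolomorphicOn g U → ∃ G : ℂ → ℂ, ∃ ℓ,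
      (∀ s ∈ U, HasDerivAt G (Complex.exp (-(lam * s)) * g s) s) ∧ Tendsto G l (𝓝 ℓ) := by
    rintro g ⟨hg, M, hM⟩
    have hdiff : DifferentiableOn ℂ (fun s => Complex.exp (-(lam * s)) * g s) U :=
      DifferentiableOn.mul (by fun_prop) hg
    obtain ⟨G, hG⟩ := hconv.exists_forall_hasDerivWithinAt hdiff
    have hG' := fun s hs => (hG s hs).hasDerivAt (hU.mem_nhds hs)
    obtain ⟨ℓ, hℓ, -⟩ := hl g M hM G hG'
    exact ⟨G, ℓ, hG', hℓ⟩
  choose! G ℓ hG hℓ using hprimitive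
  refine ⟨fun g t => Complex.exp (lam * t) * (G g t - ℓ g), ?_, ?_, ?_⟩
  · exact fun g hg t ht => hasDerivAt_exp_mul_primitive _ (hG g hg t ht)
  · intro g hg M hM t ht
    obtain ⟨ℓ', hℓ', hbound⟩ := hl g M hM _ (hG g hg)
    exact norm_exp_mul_le_of_norm_le (tendsto_nhds_unique hℓ' (hℓ g hg) ▸ hbound t ht)
  · intro f g hf hg M hM t ht
    obtain ⟨ℓ', hℓ', hbound⟩ := hl (fun s => f s - g s) M hM (G f - G g) fun s hs =>
      ((hG f hf s hs).sub (hG g hg s hs)).congr_deriv (by ring)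
    have hlim : ℓ' = ℓ f - ℓ g := tendsto_nhds_unique hℓ' ((hℓ f hf).sub (hℓ g hg))
    rw [← mul_sub]
    refine norm_exp_mul_le_of_norm_le ((le_of_eq (congrArg norm ?_)).trans (hbound t ht))
    rw [hlim, Pi.sub_apply]
    ring

lemma tendsto_exp_sub_mul_atTop {c : ℝ} (hc : 0 < c) (b : ℝ) :
    Tendsto (fun x : ℝ => Real.exp (b - c * x)) atTop (𝓝 0) :=
  Real.tendsto_exp_atBot.comp (tendsto_atBot_add_const_left _ _
    (tendsto_neg_atTop_atBot.comp (tendsto_id.const_mul_atTop hc)))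

lemma norm_exp_neg_mul_mul_le {g : ℂ → ℂ} {M b : ℝ} {s : ℂ} (hg : ‖g s‖ ≤ M)
    (hb : -(lam * s).re ≤ b) : ‖Complex.exp (-(lam * s)) * g s‖ ≤ Real.exp b * M := by
  rw [norm_mul, Complex.norm_exp, Complex.neg_re]
  gcongr

lemma neg_re_mul_le_norm_mul {s : ℂ} {R : ℝ} (hs : ‖s‖ ≤ R) : -(lam * s).re ≤ ‖lam‖ * R :=
  calc -(lam * s).re ≤ ‖lam * s‖ := (neg_le_abs _).trans (Complex.abs_re_le_norm _)
    _ ≤ ‖lam‖ * R := by rw [norm_mul]; gcongr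

lemma tendsto_primitive_ray_sub_ray {G g : ℂ → ℂ} {M c : ℝ} {t t₁ w : ℂ} (hc : 0 < c)
    (hcw : c ≤ (lam * w).re) (hconv : Convex ℝ U) (ht : t ∈ U) (ht₁ : t₁ ∈ U)
    (hray : ∀ s ∈ U, ∀ x : ℝ, 0 ≤ x → s + x * w ∈ U) (hg : ∀ s ∈ U, ‖g s‖ ≤ M)
    (hG : ∀ s ∈ U, HasDerivAt G (Complex.exp (-(lam * s)) * g s) s) :
    Tendsto (fun x : ℝ => G (t + x * w) - G (t₁ + x * w)) atTop (𝓝 0) := by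
  set R := max ‖t‖ ‖t₁‖
  have hsub : ∀ x : ℝ, 0 ≤ x → ‖G (t + x * w) - G (t₁ + x * w)‖
      ≤ Real.exp (‖lam‖ * R - c * x) * M * ‖t - t₁‖ := by
    intro x hx
    have hshift : ∀ s ∈ segment ℝ t₁ t, HasDerivWithinAt (fun s => G (s + x * w))
        (Complex.exp (-(lam * (s + x * w))) * g (s + x * w)) (segment ℝ t₁ t) s := by
      intro s hs
      have hG' := hG _ (hray s (hconv.segment_subset ht₁ ht hs) x hx)
      exact (hG'.comp_add_const s (x * w)).hasDerivWithinAt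
    refine (convex_segment t₁ t).norm_image_sub_le_of_norm_hasDerivWithin_le hshift ?_
      (left_mem_segment ℝ t₁ t) (right_mem_segment ℝ t₁ t)
    intro s hs
    have hsR : ‖s‖ ≤ R := by
      have hball := (convex_closedBall (0 : ℂ) R).segment_subset
        (mem_closedBall_zero_iff.2 (le_max_right ‖t‖ ‖t₁‖))
        (mem_closedBall_zero_iff.2 (le_max_left ‖t‖ ‖t₁‖)) hs
      exact mem_closedBall_zero_iff.1 hball
    refine norm_exp_neg_mul_mul_le (hg _ (hray s (hconv.segment_subset ht₁ ht hs) x hx)) ?_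
    rw [mul_add, mul_left_comm, Complex.add_re, Complex.re_ofReal_mul]
    nlinarith [neg_re_mul_le_norm_mul (lam := lam) hsR]
  have hdecay : Tendsto (fun x : ℝ => Real.exp (‖lam‖ * R - c * x) * M * ‖t - t₁‖)
      atTop (𝓝 0) := by
    simpa using ((tendsto_exp_sub_mul_atTop hc (‖lam‖ * R)).mul_const M).mul_const ‖t - t₁‖
  refine squeeze_zero_norm' ?_ hdecay
  filter_upwards [eventually_ge_atTop 0] with x hx using hsub x hx

lemma exists_tendsto_primitive_ray {G g : ℂ → ℂ} {M c : ℝ} {t w : ℂ} (hc : 0 < c)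
    (hcw : c ≤ (lam * w).re) (hray : ∀ x : ℝ, 0 ≤ x → t + x * w ∈ U)
    (hg : ∀ s ∈ U, ‖g s‖ ≤ M)
    (hG : ∀ s ∈ U, HasDerivAt G (Complex.exp (-(lam * s)) * g s) s) :
    ∃ ℓ, Tendsto (fun x : ℝ => G (t + x * w)) atTop (𝓝 ℓ) := by
  set b : ℝ → ℝ := fun x => ‖w‖ / c * M * Real.exp (-(lam * t).re - c * x)
  have hM : 0 ≤ M := (norm_nonneg _).trans (hg _ (hray 0 le_rfl))
  have htail : ∀ x y : ℝ, 0 ≤ x → x ≤ y → dist (G (t + x * w)) (G (t + y * w)) ≤ b x := by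
    intro x y hx hxy
    have hle := norm_primitive_ray_sub_le (t := t + x * w) (X := y - x) hc hcw
      (sub_nonneg.2 hxy) (fun z hz => ?_) hg hG
    · have hy : t + x * w + ((y - x : ℝ) : ℂ) * w = t + y * w := by push_cast; ring
      rw [hy] at hle
      rw [dist_comm, dist_eq_norm]
      refine hle.trans ?_
      have hexponent : -(lam * (t + x * w)).re ≤ -(lam * t).re - c * x := by
        rw [mul_add, mul_left_comm, Complex.add_re, Complex.re_ofReal_mul]
        nlinarith
      exact mul_le_mul_of_nonneg_left (Real.exp_le_exp.2 hexponent) (by positivity)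
    · have hz' := hray (x + z) (add_nonneg hx hz.1)
      rwa [Complex.ofReal_add, add_mul, ← add_assoc] at hz'
  have hdecay : Tendsto b atTop (𝓝 0) := by
    have htendsto := (tendsto_exp_sub_mul_atTop hc (-(lam * t).re)).const_mul (‖w‖ / c * M)
    rwa [mul_zero] at htendsto
  refine cauchySeq_tendsto_of_complete (Metric.cauchySeq_iff'.2 fun ε hε => ?_)
  obtain ⟨x, hx, hbx⟩ := ((eventually_ge_atTop 0).and (hdecay.eventually_lt_const hε)).exists
  exact ⟨x, fun y hy => (dist_comm _ _).trans_lt ((htail x y hx hy).trans_lt hbx)⟩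

lemma isIntegrationEnd_ray {c : ℝ} {t₁ w : ℂ} (hc : 0 < c) (hcw : c ≤ (lam * w).re)
    (hconv : Convex ℝ U) (ht₁ : t₁ ∈ U) (hray : ∀ s ∈ U, ∀ x : ℝ, 0 ≤ x → s + x * w ∈ U) :
    IsIntegrationEnd U lam (‖w‖ / c) (map (fun x : ℝ => t₁ + x * w) atTop) := by
  intro g M hM G hG
  obtain ⟨ℓ, hℓ⟩ := exists_tendsto_primitive_ray hc hcw (hray t₁ ht₁) hM hG
  refine ⟨ℓ, tendsto_map'_iff.2 hℓ, fun t ht => ?_⟩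
  have hlim : Tendsto (fun x : ℝ => G (t + x * w)) atTop (𝓝 ℓ) := by
    simpa using (tendsto_primitive_ray_sub_ray hc hcw hconv ht ht₁ hray hM hG).add hℓ
  rw [norm_sub_rev]
  refine le_of_tendsto (hlim.sub_const (G t)).norm ?_
  filter_upwards [eventually_ge_atTop 0] with X hX
  exact norm_primitive_ray_sub_le hc hcw hX (fun x hx => hray t ht x hx.1) hM hG

lemma exists_tendsto_primitive_nhdsWithin {G g : ℂ → ℂ} {M : ℝ} {b : ℂ} (hconv : Convex ℝ U)
    (hb : b ∈ closure U) (hg : ∀ s ∈ U, ‖g s‖ ≤ M)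
    (hG : ∀ s ∈ U, HasDerivAt G (Complex.exp (-(lam * s)) * g s) s) :
    ∃ ℓ, Tendsto G (𝓝[U] b) (𝓝 ℓ) := by
  have hne : (𝓝[U] b).NeBot := mem_closure_iff_nhdsWithin_neBot.1 hb
  have hM : 0 ≤ M := by
    obtain ⟨s, hs⟩ := closure_nonempty_iff.1 ⟨b, hb⟩
    exact (norm_nonneg _).trans (hg s hs)
  set C : NNReal := ⟨Real.exp (‖lam‖ * (‖b‖ + 1)) * M, by positivity⟩
  have hlip : LipschitzOnWith C G (U ∩ Metric.ball b 1) := by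
    refine (hconv.inter (convex_ball b 1)).lipschitzOnWith_of_nnnorm_hasDerivWithin_le
      (fun s hs => (hG s hs.1).hasDerivWithinAt) fun s hs => ?_
    refine norm_exp_neg_mul_mul_le (hg s hs.1) (neg_re_mul_le_norm_mul ?_)
    have hsb := mem_ball_iff_norm.1 hs.2
    linarith [norm_le_norm_add_norm_sub' s b]
  have hnear : 𝓝[U] b ≤ 𝓟 (U ∩ Metric.ball b 1) :=
    le_principal_iff.2 (inter_mem self_mem_nhdsWithin
      (mem_nhdsWithin_of_mem_nhds (Metric.ball_mem_nhds b one_pos)))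
  have hcauchy : Cauchy (𝓝[U] b) := cauchy_nhds.mono nhdsWithin_le_nhds
  exact cauchy_map_iff_exists_tendsto.1 (hcauchy.map_of_le hlip.uniformContinuousOn hnear)

lemma isIntegrationEnd_nhdsWithin {c : ℝ} {b : ℂ} (hc : 0 < c) (hconv : Convex ℝ U)
    (hb : b ∈ closure U) (hbU : b ∉ U)
    (hmem : ∀ t ∈ U, ∀ x : ℝ, 0 ≤ x → x < 1 → t + x * (b - t) ∈ U)
    (hcb : ∀ t ∈ U, c * ‖b - t‖ ≤ (lam * (b - t)).re) :
    IsIntegrationEnd U lam (1 / c) (𝓝[U] b) := by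
  intro g M hM G hG
  obtain ⟨ℓ, hℓ⟩ := exists_tendsto_primitive_nhdsWithin hconv hb hM hG
  refine ⟨ℓ, hℓ, fun t ht => ?_⟩
  have hbt : 0 < ‖b - t‖ := norm_pos_iff.2 (sub_ne_zero.2 fun h => hbU (h ▸ ht))
  have hunit : ∀ᶠ x : ℝ in 𝓝[<] 1, 0 ≤ x ∧ x < 1 := by
    filter_upwards [Ioo_mem_nhdsLT zero_lt_one] with x hx using ⟨hx.1.le, hx.2⟩
  have hline : Tendsto (fun x : ℝ => t + x * (b - t)) (𝓝[<] 1) (𝓝[U] b) := by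
    refine tendsto_nhdsWithin_iff.2 ⟨?_, hunit.mono fun x hx => hmem t ht x hx.1 hx.2⟩
    have hcont : Continuous fun x : ℝ => t + x * (b - t) := by fun_prop
    simpa using hcont.continuousWithinAt (s := Iio 1) (x := 1) |>.tendsto
  rw [norm_sub_rev]
  refine le_of_tendsto ((hℓ.comp hline).sub_const (G t)).norm (hunit.mono fun X hX => ?_)
  have hle := norm_primitive_ray_sub_le (mul_pos hc hbt) (hcb t ht) hX.1
    (fun x hx => hmem t ht x hx.1 (hx.2.trans_lt hX.2)) hM hG
  rwa [div_mul_cancel_right₀ hbt.ne', ← one_div] at hle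

end ScalarEquation

section Sector

/-- The open sector with apex `a` on the real axis and half-opening slope `κ`, opening to the
left. Under `z = exp t` it covers a slit ball. -/
def Sector (κ a : ℝ) : Set ℂ := {t : ℂ | |t.im| < κ * (a - t.re)}

variable {κ a : ℝ}

lemma isOpen_sector : IsOpen (Sector κ a) := by
  apply isOpen_lt <;> fun_prop

lemma convex_sector : Convex ℝ (Sector κ a) := by
  have hconvex : ConvexOn ℝ univ fun t : ℂ => |t.im| + κ * t.re := by
    have habs : ConvexOn ℝ univ fun t : ℂ => |t.im| :=
      (convexOn_univ_norm (E := ℝ)).comp_linearMap Complex.imLm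
    exact habs.add ((κ • Complex.reLm).convexOn convex_univ)
  have hsublevel : Sector κ a = {t ∈ univ | |t.im| + κ * t.re < κ * a} := by
    ext t
    simp only [Sector, mem_ofPred_eq, mem_univ, true_and, mul_sub, lt_sub_iff_add_lt]
  exact hsublevel ▸ hconvex.convex_lt (κ * a)

lemma sub_re_pos_of_mem_sector (hκ : 0 < κ) {t : ℂ} (ht : t ∈ Sector κ a) : 0 < a - t.re :=
  (pos_iff_pos_of_mul_pos ((abs_nonneg _).trans_lt ht)).1 hκ

lemma add_mul_mem_sector {t w : ℂ} (ht : t ∈ Sector κ a) (hw : |w.im| ≤ -κ * w.re) {x : ℝ}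
    (hx : 0 ≤ x) : t + x * w ∈ Sector κ a := by
  have him : |(t + x * w).im| ≤ |t.im| + x * |w.im| := by
    rw [Complex.add_im, Complex.im_ofReal_mul, ← abs_of_nonneg hx, ← abs_mul, abs_of_nonneg hx]
    exact abs_add_le _ _
  have hre : (t + x * w).re = t.re + x * w.re := by simp
  have ht' : |t.im| < κ * (a - t.re) := ht
  simp only [Sector, mem_ofPred_eq, hre]
  nlinarith

lemma add_mul_apex_sub_mem_sector {t : ℂ} (ht : t ∈ Sector κ a) {x : ℝ} (hx : x < 1) :
    t + x * ((a : ℂ) - t) ∈ Sector κ a := by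
  have him : (t + x * ((a : ℂ) - t)).im = (1 - x) * t.im := by simp; ring
  have hre : (t + x * ((a : ℂ) - t)).re = t.re + x * (a - t.re) := by simp
  have ht' : |t.im| < κ * (a - t.re) := ht
  simp only [Sector, mem_ofPred_eq, him, hre, abs_mul, abs_of_pos (sub_pos.2 hx)]
  nlinarith

lemma sub_one_mem_sector (hκ : 0 < κ) : ((a - 1 : ℝ) : ℂ) ∈ Sector κ a := by
  simpa [Sector] using hκ

lemma apex_mem_closure_sector (hκ : 0 < κ) : (a : ℂ) ∈ closure (Sector κ a) := by
  have hline : Tendsto (fun x : ℝ => ((a - 1 : ℝ) : ℂ) + x * (a - (a - 1 : ℝ))) (𝓝[<] 1)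
      (𝓝 (a : ℂ)) := by
    have hcont : Continuous fun x : ℝ => ((a - 1 : ℝ) : ℂ) + x * (a - (a - 1 : ℝ)) := by fun_prop
    simpa using (hcont.continuousWithinAt (s := Iio 1) (x := 1)).tendsto
  refine mem_closure_of_tendsto hline (eventually_nhdsWithin_of_forall fun x hx => ?_)
  exact add_mul_apex_sub_mem_sector (sub_one_mem_sector hκ) hx

lemma norm_apex_sub_le (hκ : 0 < κ) (hκ₁ : κ ≤ 1) {t : ℂ} (ht : t ∈ Sector κ a) :
    ‖(a : ℂ) - t‖ ≤ 2 * (a - t.re) := by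
  have hpos := sub_re_pos_of_mem_sector hκ ht
  have ht' : |t.im| < κ * (a - t.re) := ht
  calc ‖(a : ℂ) - t‖ ≤ |((a : ℂ) - t).re| + |((a : ℂ) - t).im| :=
        Complex.norm_le_abs_re_add_abs_im _
    _ = (a - t.re) + |t.im| := by simp [abs_of_pos hpos]
    _ ≤ 2 * (a - t.re) := by nlinarith

lemma mul_apex_sub_re_le {lam : ℂ} {c : ℝ} (hκ : 0 < κ) (h₁ : c ≤ lam.re - κ * lam.im)
    (h₂ : c ≤ lam.re + κ * lam.im) {t : ℂ} (ht : t ∈ Sector κ a) :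
    c * (a - t.re) ≤ (lam * (a - t)).re := by
  have ht' := abs_lt.1 (show |t.im| < κ * (a - t.re) from ht)
  have hre : (lam * (a - t)).re = lam.re * (a - t.re) + lam.im * t.im := by simp
  have hle₁ := mul_le_mul_of_nonneg_right h₁ (show 0 ≤ κ * (a - t.re) - t.im by linarith)
  have hle₂ := mul_le_mul_of_nonneg_right h₂ (show 0 ≤ κ * (a - t.re) + t.im by linarith)
  refine le_of_mul_le_mul_left ?_ hκ
  rw [hre]
  nlinarith

lemma exists_isSolutionOperator_of_apex {lam : ℂ} {c : ℝ} (hκ : 0 < κ) (hκ₁ : κ ≤ 1) (hc : 0 < c)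
    (h₁ : c ≤ lam.re - κ * lam.im) (h₂ : c ≤ lam.re + κ * lam.im) :
    ∃ J, IsSolutionOperator (Sector κ a) (fun u => lam * u) (2 / c) J := by
  have hend : IsIntegrationEnd (Sector κ a) lam (1 / (c / 2)) (𝓝[Sector κ a] (a : ℂ)) := by
    refine isIntegrationEnd_nhdsWithin (by positivity) convex_sector (apex_mem_closure_sector hκ)
      (fun ha => by simpa using sub_re_pos_of_mem_sector hκ ha)
      (fun t ht x _ hx => add_mul_apex_sub_mem_sector ht hx) fun t ht => ?_
    nlinarith [norm_apex_sub_le hκ hκ₁ ht, mul_apex_sub_re_le hκ h₁ h₂ ht]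
  have : (𝓝[Sector κ a] (a : ℂ)).NeBot :=
    mem_closure_iff_nhdsWithin_neBot.1 (apex_mem_closure_sector hκ)
  rw [one_div_div] at hend
  exact hend.exists_isSolutionOperator isOpen_sector convex_sector

lemma exists_isSolutionOperator_of_ray {lam w : ℂ} {c : ℝ} (hκ : 0 < κ) (hc : 0 < c)
    (hw : |w.im| ≤ -κ * w.re) (hcw : c ≤ (lam * w).re) :
    ∃ J, IsSolutionOperator (Sector κ a) (fun u => lam * u) (‖w‖ / c) J :=
  (isIntegrationEnd_ray hc hcw convex_sector (sub_one_mem_sector hκ)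
    fun _ hs _ hx => add_mul_mem_sector hs hw hx).exists_isSolutionOperator
      isOpen_sector convex_sector

lemma norm_neg_one_add_le {y : ℝ} (hy : |y| ≤ 1) : ‖(⟨-1, y⟩ : ℂ)‖ ≤ 2 := by
  refine (Complex.norm_le_abs_re_add_abs_im _).trans ?_
  norm_num
  linarith

lemma IsSolutionOperator.mono {E : Type*} [NormedAddCommGroup E] [NormedSpace ℂ E] {U : Set ℂ}
    {L : E → E} {K K' : ℝ} {J : (ℂ → E) → ℂ → E} (hJ : IsSolutionOperator U L K J)
    (hK : K ≤ K') : IsSolutionOperator U L K' J where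
  hasDerivAt := hJ.hasDerivAt
  norm_le g hg M hM t ht := by
    have : 0 ≤ M := (norm_nonneg _).trans (hM t ht)
    exact (hJ.norm_le g hg M hM t ht).trans (by gcongr)
  norm_sub_le f g hf hg M hM t ht := by
    have : 0 ≤ M := (norm_nonneg _).trans (hM t ht)
    exact (hJ.norm_sub_le f g hf hg M hM t ht).trans (by gcongr)

-- The sign of `Re (lam * w)` for the two boundary directions `w` decides whether to integrate from
-- the apex or from infinity along a boundary ray.
lemma exists_isSolutionOperator_sector {lam : ℂ} {c : ℝ} (hκ : 0 < κ) (hκ₁ : κ ≤ 1) (hc : 0 < c)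
    (h₁ : c ≤ |lam.re - κ * lam.im|) (h₂ : c ≤ |lam.re + κ * lam.im|) :
    ∃ J, IsSolutionOperator (Sector κ a) (fun u => lam * u) (2 / c) J := by
  have hray : ∀ y : ℝ, |y| = κ → c ≤ (lam * ⟨-1, y⟩).re →
      ∃ J, IsSolutionOperator (Sector κ a) (fun u => lam * u) (2 / c) J := by
    intro y hy hcy
    obtain ⟨J, hJ⟩ := exists_isSolutionOperator_of_ray (a := a) hκ hc (by simp [hy]) hcy
    have hnorm := norm_neg_one_add_le (hy.trans_le hκ₁)
    exact ⟨J, hJ.mono (by gcongr)⟩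
  rcases le_abs.1 h₁ with hpos₁ | hneg₁
  · rcases le_abs.1 h₂ with hpos₂ | hneg₂
    · exact exists_isSolutionOperator_of_apex hκ hκ₁ hc hpos₁ hpos₂
    · exact hray κ (abs_of_pos hκ) (by simp; linarith)
  · exact hray (-κ) (by rw [abs_neg, abs_of_pos hκ]) (by simp; linarith)

lemma le_abs_re_add_mul_im_or {lam : ℂ} {δ s κ' : ℝ} (hs : 0 < s) (hlam : δ ≤ ‖lam‖)
    (hκ : κ ∈ Icc 0 (1 / 2)) (hκ' : κ' ∈ Icc 0 (1 / 2)) (hsep : s ≤ |κ - κ'|) :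
    δ * s / 8 ≤ |lam.re + κ * lam.im| ∨ δ * s / 8 ≤ |lam.re + κ' * lam.im| := by
  by_contra! hsmall
  have hs₁ : s ≤ 1 / 2 := hsep.trans (abs_sub_le_of_nonneg_of_le hκ.1 hκ.2 hκ'.1 hκ'.2)
  have hδ : 0 < δ := by
    have : 0 < δ * s / 8 := (abs_nonneg _).trans_lt hsmall.1
    exact (pos_iff_pos_of_mul_pos (by linarith : 0 < δ * s)).2 hs
  have hre : |lam.re| ≤ |lam.re + κ * lam.im| + κ * |lam.im| := by
    have htri := abs_sub (lam.re + κ * lam.im) (κ * lam.im)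
    rwa [add_sub_cancel_right, abs_mul κ, abs_of_nonneg hκ.1] at htri
  have him : δ / 2 ≤ |lam.im| := by
    nlinarith [hlam.trans (Complex.norm_le_abs_re_add_abs_im lam), hκ.2, abs_nonneg lam.im]
  have hdiff : |κ - κ'| * |lam.im| < δ * s / 4 := by
    rw [← abs_mul]
    calc |(κ - κ') * lam.im| = |(lam.re + κ * lam.im) - (lam.re + κ' * lam.im)| := by ring_nf
      _ ≤ |lam.re + κ * lam.im| + |lam.re + κ' * lam.im| := abs_sub _ _
      _ < δ * s / 4 := by linarith
  have : s * (δ / 2) ≤ |κ - κ'| * |lam.im| := by gcongr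
  nlinarith

-- Pigeonhole: each `lam i` is bad for at most one of the `card ι + 1` slopes `s * (k + 1)`.
lemma exists_slope_forall_le_abs {ι : Type*} [Fintype ι] {δ s : ℝ} (lam : ι → ℂ)
    (hlam : ∀ i, δ ≤ ‖lam i‖) (hs : 2 * (Fintype.card ι + 1) * s = 1) :
    ∃ κ ∈ Icc s (1 / 2), ∀ i, δ * s / 8 ≤ |(lam i).re + κ * (lam i).im| := by
  have hs₀ : 0 < s := pos_of_mul_pos_right (hs ▸ one_pos) (by positivity)
  have hslope : ∀ k : Fin (Fintype.card ι + 1), s * (k + 1) ∈ Icc s (1 / 2) := by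
    intro k
    have hk : (k : ℝ) + 1 ≤ Fintype.card ι + 1 := by exact_mod_cast k.2
    constructor <;> nlinarith [(Nat.cast_nonneg k : (0 : ℝ) ≤ (k : ℕ))]
  by_contra! hbad
  choose i hi using fun k => hbad _ (hslope k)
  obtain ⟨k, k', hne, heq⟩ := Fintype.exists_ne_map_eq_of_card_lt i (by simp)
  have hsep : s ≤ |s * ((k : ℝ) + 1) - s * ((k' : ℝ) + 1)| := by
    have hint : ((k : ℕ) : ℤ) - (k' : ℕ) ≠ 0 := by simpa [sub_eq_zero, Fin.val_inj] using hne
    have hcast : (1 : ℝ) ≤ |((k : ℕ) : ℝ) - (k' : ℕ)| := by exact_mod_cast Int.one_le_abs hint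
    rw [← mul_sub, abs_mul, abs_of_pos hs₀, add_sub_add_right_eq_sub]
    exact le_mul_of_one_le_right hs₀.le hcast
  have hIcc : ∀ k, s * ((k : Fin (Fintype.card ι + 1)) + 1 : ℝ) ∈ Icc (0 : ℝ) (1 / 2) :=
    fun k => Icc_subset_Icc_left hs₀.le (hslope k)
  rcases le_abs_re_add_mul_im_or hs₀ (hlam (i k)) (hIcc k) (hIcc k') hsep with h | h
  · exact (hi k).not_ge h
  · exact (hi k').not_ge (heq ▸ h)

lemma exists_slope_forall_le_abs_sub_and_add {ι : Type*} [Fintype ι] {δ s : ℝ} (lam : ι → ℂ)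
    (hlam : ∀ i, δ ≤ ‖lam i‖) (hs : 2 * (2 * Fintype.card ι + 1) * s = 1) :
    ∃ κ ∈ Icc s (1 / 2), ∀ i, δ * s / 8 ≤ |(lam i).re - κ * (lam i).im| ∧
      δ * s / 8 ≤ |(lam i).re + κ * (lam i).im| := by
  obtain ⟨κ, hκ, hbound⟩ := exists_slope_forall_le_abs (δ := δ) (s := s)
    (Sum.elim (fun i => (starRingEnd ℂ) (lam i)) lam)
    (by rintro (i | i) <;> simpa using hlam i)
    (by rw [Fintype.card_sum, Nat.cast_add, ← two_mul (Fintype.card ι : ℝ), hs])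
  exact ⟨κ, hκ, fun i => ⟨by simpa [sub_eq_add_neg] using hbound (Sum.inl i), hbound (Sum.inr i)⟩⟩

lemma log_mem_sector {s R : ℝ} {z : ℂ} (hs : 0 < s) (hκ : s ≤ κ) (hR : 0 < R)
    (hz : z ∈ SlitBall (Real.exp (-(4 / s)) * R)) :
    Complex.log z ∈ Sector κ (Real.log R) := by
  have hnorm : 0 < ‖z‖ := norm_pos_iff.2 (Complex.slitPlane_ne_zero hz.2.symm)
  have hlog : 4 / s ≤ Real.log R - Real.log ‖z‖ := by
    have hlt := Real.log_lt_log hnorm hz.1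
    rw [Real.log_mul (Real.exp_pos _).ne' hR.ne', Real.log_exp] at hlt
    linarith
  simp only [Sector, mem_ofPred_eq, Complex.log_re, Complex.log_im]
  calc |z.arg| ≤ Real.pi := Complex.abs_arg_le_pi z
    _ < s * (4 / s) := by rw [mul_div_cancel₀ _ hs.ne']; exact Real.pi_lt_four
    _ ≤ κ * (Real.log R - Real.log ‖z‖) := mul_le_mul hκ hlog (by positivity) (hs.le.trans hκ)

end Sector

section PicardIteration

variable {S E : Type*} [NormedAddCommGroup E]

lemma exists_tendstoUniformlyOn_of_geometric [CompleteSpace E] {U : Set S} {u : ℕ → S → E} {C : ℝ}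
    (hu : ∀ k, ∀ s ∈ U, ‖u (k + 1) s - u k s‖ ≤ C / 2 ^ k) :
    ∃ f, TendstoUniformlyOn u f atTop U := by
  have hdist : ∀ s ∈ U, ∀ k, dist (u k s) (u (k + 1) s) ≤ 2 * C / 2 / 2 ^ k := by
    intro s hs k
    rw [dist_comm, dist_eq_norm, mul_div_cancel_left₀ C two_ne_zero]
    exact hu k s hs
  have hlim : ∀ s ∈ U, ∃ y, Tendsto (fun k => u k s) atTop (𝓝 y) := fun s hs =>
    cauchySeq_tendsto_of_complete (cauchySeq_of_le_geometric_two (hdist s hs))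
  choose! f hf using hlim
  have hgeometric : Tendsto (fun k : ℕ => 2 * C / 2 ^ k) atTop (𝓝 0) :=
    tendsto_const_nhds.div_atTop (tendsto_pow_atTop_atTop_of_one_lt one_lt_two)
  refine ⟨f, Metric.tendstoUniformlyOn_iff.2 fun ε hε => ?_⟩
  filter_upwards [hgeometric.eventually_lt_const hε] with k hk s hs
  rw [dist_comm]
  exact (dist_le_of_le_geometric_two_of_tendsto (hdist s hs) (hf s hs) k).trans_lt hk

variable {U : Set S} {𝒞 : (S → E) → Prop} {B : ℝ} {Φ : (S → E) → S → E}

/-- `Φ` contracts, by a factor `1 / 2` in the supremum norm over `U`, the functions of the class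
`𝒞` that are bounded by `B` on `U`. -/
structure IsHalfContraction (U : Set S) (𝒞 : (S → E) → Prop) (B : ℝ) (Φ : (S → E) → S → E) :
    Prop where
  mem : ∀ f, 𝒞 f → (∀ s ∈ U, ‖f s‖ ≤ B) → 𝒞 (Φ f)
  norm_sub_le : ∀ f g, 𝒞 f → 𝒞 g → (∀ s ∈ U, ‖f s‖ ≤ B) → (∀ s ∈ U, ‖g s‖ ≤ B) →
    ∀ D, (∀ s ∈ U, ‖f s - g s‖ ≤ D) → ∀ s ∈ U, ‖Φ f s - Φ g s‖ ≤ D / 2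
  norm_zero_le : ∀ s ∈ U, ‖Φ 0 s‖ ≤ B / 2

namespace IsHalfContraction

lemma norm_le (hΦ : IsHalfContraction U 𝒞 B Φ) (hzero : 𝒞 0) {f : S → E} (hf : 𝒞 f)
    (hfB : ∀ s ∈ U, ‖f s‖ ≤ B) : ∀ s ∈ U, ‖Φ f s‖ ≤ B := by
  intro s hs
  have hB : 0 ≤ B := (norm_nonneg _).trans (hfB s hs)
  have hsub := hΦ.norm_sub_le f 0 hf hzero hfB (fun s _ => by simpa using hB) B
    (by simpa using hfB) s hs
  linarith [hΦ.norm_zero_le s hs, norm_le_norm_sub_add (Φ f s) (Φ 0 s)]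

lemma iterate_mem (hΦ : IsHalfContraction U 𝒞 B Φ) (hzero : 𝒞 0) (k : ℕ) :
    𝒞 (Φ^[k] 0) ∧ ∀ s ∈ U, ‖Φ^[k] 0 s‖ ≤ B := by
  induction k with
  | zero =>
    refine ⟨hzero, fun s hs => ?_⟩
    rw [Function.iterate_zero_apply, Pi.zero_apply, norm_zero]
    linarith [(norm_nonneg _).trans (hΦ.norm_zero_le s hs)]
  | succ k ih =>
    rw [Function.iterate_succ_apply']
    exact ⟨hΦ.mem _ ih.1 ih.2, hΦ.norm_le hzero ih.1 ih.2⟩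

lemma norm_iterate_succ_sub_le (hΦ : IsHalfContraction U 𝒞 B Φ) (hzero : 𝒞 0) (k : ℕ) :
    ∀ s ∈ U, ‖Φ^[k + 1] 0 s - Φ^[k] 0 s‖ ≤ B / 2 ^ k := by
  induction k with
  | zero => simpa using (hΦ.iterate_mem hzero 1).2
  | succ k ih =>
    intro s hs
    obtain ⟨hmem, hbound⟩ := hΦ.iterate_mem hzero k
    obtain ⟨hmem', hbound'⟩ := hΦ.iterate_mem hzero (k + 1)
    have hsub := hΦ.norm_sub_le _ _ hmem' hmem hbound' hbound _ ih s hs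
    rwa [← Function.iterate_succ_apply' Φ, ← Function.iterate_succ_apply' Φ, div_div,
      ← pow_succ] at hsub

theorem exists_fixedPoint [CompleteSpace E] (hΦ : IsHalfContraction U 𝒞 B Φ) (hzero : 𝒞 0)
    (hclosed : ∀ (u : ℕ → S → E) (f : S → E), (∀ k, 𝒞 (u k)) → TendstoUniformlyOn u f atTop U →
      (∀ s ∈ U, ‖f s‖ ≤ B) → 𝒞 f) :
    ∃ f, 𝒞 f ∧ (∀ s ∈ U, ‖f s‖ ≤ B) ∧ EqOn (Φ f) f U := by
  have hiterate := hΦ.iterate_mem hzero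
  obtain ⟨f, hf⟩ := exists_tendstoUniformlyOn_of_geometric (u := fun k => Φ^[k] 0)
    (hΦ.norm_iterate_succ_sub_le hzero)
  have hfB : ∀ s ∈ U, ‖f s‖ ≤ B := fun s hs =>
    le_of_tendsto (hf.tendsto_at hs).norm (Eventually.of_forall fun k => (hiterate k).2 s hs)
  have hfC : 𝒞 f := hclosed _ f (fun k => (hiterate k).1) hf hfB
  refine ⟨f, hfC, hfB, fun s hs => ?_⟩
  have hΦf : Tendsto (fun k => Φ^[k + 1] 0 s) atTop (𝓝 (Φ f s)) := by
    refine Metric.tendsto_nhds.2 fun ε hε => ?_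
    filter_upwards [Metric.tendstoUniformlyOn_iff.1 hf ε hε] with k hk
    rw [Function.iterate_succ_apply', dist_eq_norm]
    have hsub := hΦ.norm_sub_le _ _ (hiterate k).1 hfC (hiterate k).2 hfB ε
      (fun s hs => by rw [← dist_eq_norm, dist_comm]; exact (hk s hs).le) s hs
    linarith
  exact tendsto_nhds_unique hΦf ((tendsto_add_atTop_iff_nat 1).2 (hf.tendsto_at hs))

end IsHalfContraction

lemma exists_fixedPoint_of_norm_sub_le [CompleteSpace E] {φ : E → E} (hzero : ‖φ 0‖ ≤ B / 2)
    (hφ : ∀ x y, ‖x‖ ≤ B → ‖y‖ ≤ B → ‖φ x - φ y‖ ≤ ‖x - y‖ / 2) : ∃ x, ‖x‖ ≤ B ∧ φ x = x := by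
  have hcontraction : IsHalfContraction (univ : Set Unit) (fun _ => True) B fun f s => φ (f s) :=
    { mem := fun _ _ _ => trivial
      norm_sub_le := fun f g _ _ hf hg D hD s hs =>
        (hφ _ _ (hf s hs) (hg s hs)).trans (by linarith [hD s hs])
      norm_zero_le := fun _ _ => hzero }
  obtain ⟨f, -, hfB, hfix⟩ := hcontraction.exists_fixedPoint trivial fun _ _ _ _ _ => trivial
  exact ⟨f (), hfB () trivial, hfix trivial⟩

end PicardIteration

section SemilinearEquation

variable {E : Type*} [NormedAddCommGroup E] [NormedSpace ℂ E] [CompleteSpace E]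

theorem IsSolutionOperator.exists_solution {U : Set ℂ} {L : E → E} {K B M q : ℝ}
    {J : (ℂ → E) → ℂ → E} {N : ℂ → E → E} (hJ : IsSolutionOperator U L K J) (hU : IsOpen U)
    (hK : 0 ≤ K) (hq : 0 ≤ q) (hKq : K * q ≤ 1 / 2) (hKM : K * M ≤ B / 2)
    (hN : ∀ u, BoundedHolomorphicOn u U → (∀ t ∈ U, ‖u t‖ ≤ B) →
      BoundedHolomorphicOn (fun t => N t (u t)) U)
    (hN₀ : ∀ t ∈ U, ‖N t 0‖ ≤ M)
    (hlip : ∀ t ∈ U, ∀ x y, ‖x‖ ≤ B → ‖y‖ ≤ B → ‖N t x - N t y‖ ≤ q * ‖x - y‖) :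
    ∃ u, (∀ t ∈ U, ‖u t‖ ≤ B) ∧ ∀ t ∈ U, HasDerivAt u (L (u t) + N t (u t)) t := by
  have hzero : BoundedHolomorphicOn (0 : ℂ → E) U := ⟨differentiableOn_const 0, 0, by simp⟩
  have hB : ∀ t ∈ U, 0 ≤ B := fun t ht => by
    nlinarith [(norm_nonneg _).trans (hN₀ t ht)]
  have hcontraction : IsHalfContraction U (BoundedHolomorphicOn · U) B
      fun u => J fun t => N t (u t) :=
    { mem := fun u hu huB => by
        obtain ⟨M', hM'⟩ := (hN u hu huB).bounded
        exact ⟨fun t ht => (hJ.hasDerivAt _ (hN u hu huB) t ht).differentiableAt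
          |>.differentiableWithinAt, K * M', hJ.norm_le _ (hN u hu huB) M' hM'⟩
      norm_sub_le := fun f g hf hg hfB hgB D hD t ht => by
        have hsub := hJ.norm_sub_le _ _ (hN f hf hfB) (hN g hg hgB) (q * D) (fun s hs =>
          (hlip s hs _ _ (hfB s hs) (hgB s hs)).trans (by gcongr; exact hD s hs)) t ht
        nlinarith [(norm_nonneg _).trans (hD t ht)]
      norm_zero_le := fun t ht =>
        (hJ.norm_le _ (hN 0 hzero (by simpa using hB)) M hN₀ t ht).trans hKM }
  obtain ⟨u, hu, huB, hfix⟩ := hcontraction.exists_fixedPoint hzero fun v f hv hf hfB =>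
    ⟨hf.tendstoLocallyUniformlyOn.differentiableOn
      (Eventually.of_forall fun k => (hv k).differentiableOn) hU, B, hfB⟩
  refine ⟨u, huB, fun t ht => ?_⟩
  have hderiv := hJ.hasDerivAt _ (hN u hu huB) t ht
  rw [hfix ht] at hderiv
  exact hderiv.congr_of_eventuallyEq (hfix.symm.eventuallyEq_of_mem (hU.mem_nhds ht))

end SemilinearEquation

section MatrixAnalysis

variable {l m n : Type*} {𝕜 : Type*} [NontriviallyNormedField 𝕜] {t : 𝕜} {U : Set 𝕜}

lemma hasDerivAt_matrix_iff [Finite n] {f : 𝕜 → Matrix m n 𝕜} {f' : Matrix m n 𝕜} :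
    HasDerivAt f f' t ↔ ∀ i j, HasDerivAt (fun s => f s i j) (f' i j) t :=
  have := Fintype.ofFinite n
  (hasDerivAt_pi (φ := f)).trans (forall_congr' fun _ => hasDerivAt_pi)

lemma differentiableOn_matrix_iff [Finite n] {f : 𝕜 → Matrix m n 𝕜} :
    DifferentiableOn 𝕜 f U ↔ ∀ i j, DifferentiableOn 𝕜 (fun s => f s i j) U :=
  have := Fintype.ofFinite n
  (differentiableOn_pi (Φ := f)).trans (forall_congr' fun _ => differentiableOn_pi)

variable [Fintype m]

lemma hasDerivAt_matrix_mul [Finite n] {f : 𝕜 → Matrix l m 𝕜} {g : 𝕜 → Matrix m n 𝕜}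
    {f' : Matrix l m 𝕜} {g' : Matrix m n 𝕜} (hf : HasDerivAt f f' t) (hg : HasDerivAt g g' t) :
    HasDerivAt (fun s => f s * g s) (f' * g t + f t * g') t := by
  refine hasDerivAt_matrix_iff.2 fun i j => ?_
  simp only [Matrix.mul_apply, Matrix.add_apply, ← Finset.sum_add_distrib]
  exact HasDerivAt.fun_sum fun k _ =>
    (hasDerivAt_matrix_iff.1 hf i k).mul (hasDerivAt_matrix_iff.1 hg k j)

lemma differentiableOn_matrix_mul [Finite n] {f : 𝕜 → Matrix l m 𝕜} {g : 𝕜 → Matrix m n 𝕜}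
    (hf : DifferentiableOn 𝕜 f U) (hg : DifferentiableOn 𝕜 g U) :
    DifferentiableOn 𝕜 (fun s => f s * g s) U := by
  refine differentiableOn_matrix_iff.2 fun i j => ?_
  simp only [Matrix.mul_apply]
  exact DifferentiableOn.fun_sum fun k _ =>
    (differentiableOn_matrix_iff.1 hf i k).mul (differentiableOn_matrix_iff.1 hg k j)

variable [Fintype n]

section Norm

variable {α : Type*} [NormedAddCommGroup α]

lemma norm_matrix_le_iff {X : Matrix m n α} {c : ℝ} (hc : 0 ≤ c) :
    ‖X‖ ≤ c ↔ ∀ i, ∑ j, ‖X i j‖ ≤ c := by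
  lift c to NNReal using hc
  rw [Matrix.linfty_opNorm_def, NNReal.coe_le_coe, Finset.sup_le_iff]
  simp only [Finset.mem_univ, true_imp_iff, ← NNReal.coe_le_coe, NNReal.coe_sum, coe_nnnorm]

lemma sum_norm_row_le_norm (X : Matrix m n α) (i : m) : ∑ j, ‖X i j‖ ≤ ‖X‖ :=
  (norm_matrix_le_iff (norm_nonneg X)).1 le_rfl i

lemma norm_entry_le_norm (X : Matrix m n α) (i : m) (j : n) : ‖X i j‖ ≤ ‖X‖ :=
  (Finset.single_le_sum (f := fun j => ‖X i j‖) (fun _ _ => norm_nonneg _)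
    (Finset.mem_univ j)).trans (sum_norm_row_le_norm X i)

lemma norm_le_card_mul_of_norm_entry_le {X : Matrix m n α} {D : ℝ} (hD : 0 ≤ D)
    (hX : ∀ i j, ‖X i j‖ ≤ D) : ‖X‖ ≤ Fintype.card n * D :=
  (norm_matrix_le_iff (by positivity)).2 fun i =>
    (Finset.sum_le_card_nsmul _ _ D fun j _ => hX i j).trans_eq (by simp)

lemma norm_submatrix_le {k l : Type*} [Fintype k] [Fintype l] (X : Matrix m n α) (f : k → m)
    (g : l ↪ n) : ‖X.submatrix f g‖ ≤ ‖X‖ :=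
  (norm_matrix_le_iff (norm_nonneg X)).2 fun i =>
    calc ∑ j, ‖X (f i) (g j)‖ = ∑ j ∈ Finset.univ.map g, ‖X (f i) j‖ := by rw [Finset.sum_map]
      _ ≤ ∑ j, ‖X (f i) j‖ := Finset.sum_le_univ_sum_of_nonneg fun _ => norm_nonneg _
      _ ≤ ‖X‖ := sum_norm_row_le_norm X (f i)

lemma norm_fromBlocks_le {k l : Type*} [Fintype k] [Fintype l] {X : Matrix m k α} {Y : Matrix m l α}
    {Z : Matrix n k α} {W : Matrix n l α} {c : ℝ} (hc : 0 ≤ c) (htop : ‖X‖ + ‖Y‖ ≤ c)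
    (hbottom : ‖Z‖ + ‖W‖ ≤ c) : ‖Matrix.fromBlocks X Y Z W‖ ≤ c := by
  refine (norm_matrix_le_iff hc).2 (Sum.forall.2 ⟨fun i => ?_, fun i => ?_⟩) <;>
  rw [Fintype.sum_sum_type]
  · exact (add_le_add (sum_norm_row_le_norm X i) (sum_norm_row_le_norm Y i)).trans htop
  · exact (add_le_add (sum_norm_row_le_norm Z i) (sum_norm_row_le_norm W i)).trans hbottom

end Norm

lemma norm_matrix_mul_le_of_le [Fintype l] {X : Matrix l m 𝕜} {Y : Matrix m n 𝕜} {x y : ℝ}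
    (hX : ‖X‖ ≤ x) (hY : ‖Y‖ ≤ y) : ‖X * Y‖ ≤ x * y :=
  (Matrix.linfty_opNorm_mul X Y).trans
    (mul_le_mul hX hY (norm_nonneg Y) ((norm_nonneg X).trans hX))

end MatrixAnalysis

section Riccati

variable {m n : Type*} [Fintype m] [Fintype n]

/-- The Riccati polynomial `A X - X B + S - X R X`. Its zeros are the matrices `X` whose graph is
invariant under the block matrix with rows `(B, R)` and `(S, A)`, and the corresponding
differential equation is the one satisfied by an off-diagonal block of the conjugator. -/
def riccati (A : Matrix m m ℂ) (B : Matrix n n ℂ) (R : Matrix n m ℂ) (S X : Matrix m n ℂ) :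
    Matrix m n ℂ :=
  A * X - X * B + S - X * R * X

/-- Coefficients of a Riccati polynomial that depend holomorphically on a parameter in `U`, where
`e`, `r` and `M` bound the linear, the quadratic and the constant term. -/
structure IsRiccatiData (U : Set ℂ) (e r M : ℝ) (E : ℂ → Matrix m m ℂ) (F : ℂ → Matrix n n ℂ)
    (R : ℂ → Matrix n m ℂ) (S : ℂ → Matrix m n ℂ) : Prop where
  differentiableOn_left : DifferentiableOn ℂ E U
  differentiableOn_right : DifferentiableOn ℂ F U
  differentiableOn_quadratic : DifferentiableOn ℂ R U
  differentiableOn_constant : DifferentiableOn ℂ S U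
  norm_left_le : ∀ z ∈ U, ‖E z‖ ≤ e
  norm_right_le : ∀ z ∈ U, ‖F z‖ ≤ e
  norm_quadratic_le : ∀ z ∈ U, ‖R z‖ ≤ r
  norm_constant_le : ∀ z ∈ U, ‖S z‖ ≤ M

lemma riccati_zero (A : Matrix m m ℂ) (B : Matrix n n ℂ) (R : Matrix n m ℂ) (S : Matrix m n ℂ) :
    riccati A B R S 0 = S := by
  simp [riccati]

lemma riccati_add_left_right (A E : Matrix m m ℂ) (B F : Matrix n n ℂ) (R : Matrix n m ℂ)
    (S X : Matrix m n ℂ) :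
    riccati (A + E) (B + F) R S X = A * X - X * B + riccati E F R S X := by
  simp only [riccati, Matrix.add_mul, Matrix.mul_add]
  abel

lemma norm_riccati_sub_le {E : Matrix m m ℂ} {F : Matrix n n ℂ} {R : Matrix n m ℂ}
    {X Y : Matrix m n ℂ} {e r b : ℝ} (S : Matrix m n ℂ) (hE : ‖E‖ ≤ e) (hF : ‖F‖ ≤ e)
    (hR : ‖R‖ ≤ r) (hX : ‖X‖ ≤ b) (hY : ‖Y‖ ≤ b) :
    ‖riccati E F R S X - riccati E F R S Y‖ ≤ (2 * e + 2 * r * b) * ‖X - Y‖ := by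
  have hsplit : riccati E F R S X - riccati E F R S Y =
      E * (X - Y) - (X - Y) * F - ((X - Y) * (R * X) + Y * R * (X - Y)) := by
    simp only [riccati, Matrix.mul_sub, Matrix.sub_mul, Matrix.mul_assoc]
    abel
  rw [hsplit]
  calc ‖E * (X - Y) - (X - Y) * F - ((X - Y) * (R * X) + Y * R * (X - Y))‖
      ≤ ‖E * (X - Y)‖ + ‖(X - Y) * F‖ + (‖(X - Y) * (R * X)‖ + ‖Y * R * (X - Y)‖) :=
        (norm_sub_le _ _).trans (add_le_add (norm_sub_le _ _) (norm_add_le _ _))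
    _ ≤ e * ‖X - Y‖ + ‖X - Y‖ * e + (‖X - Y‖ * (r * b) + b * r * ‖X - Y‖) := by
        gcongr
        · exact norm_matrix_mul_le_of_le hE le_rfl
        · exact norm_matrix_mul_le_of_le le_rfl hF
        · exact norm_matrix_mul_le_of_le le_rfl (norm_matrix_mul_le_of_le hR hX)
        · exact norm_matrix_mul_le_of_le (norm_matrix_mul_le_of_le hY hR) le_rfl
    _ = (2 * e + 2 * r * b) * ‖X - Y‖ := by ring

lemma norm_riccati_le {E : Matrix m m ℂ} {F : Matrix n n ℂ} {R : Matrix n m ℂ}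
    {S X : Matrix m n ℂ} {e r K M : ℝ} (hE : ‖E‖ ≤ e) (hF : ‖F‖ ≤ e) (hR : ‖R‖ ≤ r)
    (hS : ‖S‖ ≤ M) (hX : ‖X‖ ≤ 2 * K * M) (hsmall : K * (2 * e + 2 * r * (2 * K * M)) ≤ 1 / 2) :
    ‖riccati E F R S X‖ ≤ 2 * M := by
  have hM : 0 ≤ M := (norm_nonneg S).trans hS
  have he : 0 ≤ e := (norm_nonneg E).trans hE
  have hr : 0 ≤ r := (norm_nonneg R).trans hR
  have hKM : 0 ≤ 2 * K * M := (norm_nonneg X).trans hX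
  have hsub := norm_riccati_sub_le S hE hF hR hX (Y := 0) (by simpa using hKM)
  rw [riccati_zero, sub_zero] at hsub
  have hbound : (2 * e + 2 * r * (2 * K * M)) * ‖X‖ ≤ M :=
    calc (2 * e + 2 * r * (2 * K * M)) * ‖X‖ ≤ (2 * e + 2 * r * (2 * K * M)) * (2 * K * M) := by
          gcongr
      _ = K * (2 * e + 2 * r * (2 * K * M)) * (2 * M) := by ring
      _ ≤ 1 / 2 * (2 * M) := by gcongr
      _ = M := by ring
  linarith [norm_le_norm_sub_add (riccati E F R S X) S]

lemma differentiableOn_riccati {U : Set ℂ} {A : ℂ → Matrix m m ℂ} {B : ℂ → Matrix n n ℂ}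
    {R : ℂ → Matrix n m ℂ} {S X : ℂ → Matrix m n ℂ} (hA : DifferentiableOn ℂ A U)
    (hB : DifferentiableOn ℂ B U) (hR : DifferentiableOn ℂ R U) (hS : DifferentiableOn ℂ S U)
    (hX : DifferentiableOn ℂ X U) :
    DifferentiableOn ℂ (fun z => riccati (A z) (B z) (R z) (S z) (X z)) U :=
  (((differentiableOn_matrix_mul hA hX).sub (differentiableOn_matrix_mul hX hB)).add hS).sub
    (differentiableOn_matrix_mul (differentiableOn_matrix_mul hX hR) hX)

lemma IsRiccatiData.exists_hasDerivAt_riccati {U : Set ℂ} {e r M K h : ℝ} {E : ℂ → Matrix m m ℂ}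
    {F : ℂ → Matrix n n ℂ} {R : ℂ → Matrix n m ℂ} {S : ℂ → Matrix m n ℂ} {A : Matrix m m ℂ}
    {B : Matrix n n ℂ} {J : (ℂ → Matrix m n ℂ) → ℂ → Matrix m n ℂ}
    (hdata : IsRiccatiData U e r M E F R S) (hU : IsOpen U) (hh : 0 < h) (hK : 0 ≤ K) (he : 0 ≤ e)
    (hr : 0 ≤ r) (hM : 0 ≤ M)
    (hJ : IsSolutionOperator U (fun X => (h : ℂ)⁻¹ • (A * X - X * B)) (K * h) J)
    (hsmall : K * (2 * e + 2 * r * (2 * K * M)) ≤ 1 / 2) :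
    ∃ Y : ℂ → Matrix m n ℂ, (∀ t ∈ U, ‖Y t‖ ≤ 2 * K * M) ∧ ∀ t ∈ U,
      HasDerivAt Y ((h : ℂ)⁻¹ • riccati (A + E t) (B + F t) (R t) (S t) (Y t)) t := by
  have hnorm : ∀ X : Matrix m n ℂ, ‖(h : ℂ)⁻¹ • X‖ = ‖X‖ / h := fun X => by
    rw [norm_smul, norm_inv, Complex.norm_of_nonneg hh.le, div_eq_inv_mul]
  simp only [riccati_add_left_right, smul_add]
  refine hJ.exists_solution (N := fun t X => (h : ℂ)⁻¹ • riccati (E t) (F t) (R t) (S t) X) hU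
    (q := (2 * e + 2 * r * (2 * K * M)) / h) (M := M / h) (by positivity) (by positivity) ?_ ?_
    (fun Y hY hYB => ⟨?_, 2 * M / h, fun t ht => ?_⟩) (fun t ht => ?_)
    fun t ht X Y hX hY => ?_
  · rwa [mul_assoc, mul_div_cancel₀ _ hh.ne']
  · exact (by field_simp : K * h * (M / h) = 2 * K * M / 2).le
  · exact (differentiableOn_riccati hdata.differentiableOn_left hdata.differentiableOn_right
      hdata.differentiableOn_quadratic hdata.differentiableOn_constant
      hY.differentiableOn).const_smul (h : ℂ)⁻¹
  · rw [hnorm]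
    gcongr
    exact norm_riccati_le (hdata.norm_left_le t ht) (hdata.norm_right_le t ht)
      (hdata.norm_quadratic_le t ht) (hdata.norm_constant_le t ht) (hYB t ht) hsmall
  · rw [hnorm, riccati_zero]
    gcongr
    exact hdata.norm_constant_le t ht
  · rw [← smul_sub, hnorm, div_mul_eq_mul_div]
    gcongr
    exact norm_riccati_sub_le _ (hdata.norm_left_le t ht) (hdata.norm_right_le t ht)
      (hdata.norm_quadratic_le t ht) hX hY

end Riccati

section DiagonalRiccati

variable {m n : Type*} [Fintype m] [Fintype n]

lemma BoundedHolomorphicOn.entry {U : Set ℂ} {g : ℂ → Matrix m n ℂ}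
    (hg : BoundedHolomorphicOn g U) (i : m) (j : n) :
    BoundedHolomorphicOn (fun t => g t i j) U := by
  obtain ⟨M, hM⟩ := hg.bounded
  exact ⟨differentiableOn_matrix_iff.1 hg.differentiableOn i j, M,
    fun t ht => (norm_entry_le_norm _ i j).trans (hM t ht)⟩

lemma norm_entrywise_div_le {δ K : ℝ} {w : m → n → ℂ} (hδ : 0 < δ) (hw : ∀ i j, δ ≤ ‖w i j‖)
    (hK : Fintype.card n * (1 / δ) ≤ K) (X : Matrix m n ℂ) :
    ‖Matrix.of fun i j => X i j / w i j‖ ≤ K * ‖X‖ := by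
  refine (norm_le_card_mul_of_norm_entry_le (D := 1 / δ * ‖X‖) (by positivity) fun i j => ?_).trans
    (by rw [← mul_assoc]; gcongr)
  rw [Matrix.of_apply, norm_div, one_div_mul_eq_div]
  gcongr
  exacts [norm_entry_le_norm X i j, hw i j]

variable [DecidableEq m] [DecidableEq n]

lemma diagonal_mul_sub_mul_diagonal_apply (μ : m → ℂ) (ν : n → ℂ) (X : Matrix m n ℂ) (i : m)
    (j : n) : (Matrix.diagonal μ * X - X * Matrix.diagonal ν) i j = (μ i - ν j) * X i j := by
  rw [Matrix.sub_apply, Matrix.diagonal_mul, Matrix.mul_diagonal]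
  ring

lemma exists_isSolutionOperator_of_entries {U : Set ℂ} {h K : ℝ} {μ : m → ℂ} {ν : n → ℂ}
    (hK : 0 ≤ K)
    (hJ : ∀ i j, ∃ J, IsSolutionOperator U (fun u => (h : ℂ)⁻¹ * (μ i - ν j) * u) K J) :
    ∃ J, IsSolutionOperator U
      (fun X : Matrix m n ℂ => (h : ℂ)⁻¹ • (Matrix.diagonal μ * X - X * Matrix.diagonal ν))
      (Fintype.card n * K) J := by
  choose J hsolves using hJ
  refine ⟨fun g t => Matrix.of fun i j => J i j (fun s => g s i j) t, fun g hg t ht => ?_,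
    fun g hg M hM t ht => ?_, fun f g hf hg M hM t ht => ?_⟩
  · refine hasDerivAt_matrix_iff.2 fun i j =>
      ((hsolves i j).hasDerivAt _ (hg.entry i j) t ht).congr_deriv ?_
    rw [Matrix.add_apply, Matrix.smul_apply, diagonal_mul_sub_mul_diagonal_apply, smul_eq_mul,
      mul_assoc, Matrix.of_apply]
  · have hM₀ : 0 ≤ M := (norm_nonneg _).trans (hM t ht)
    rw [mul_assoc]
    exact norm_le_card_mul_of_norm_entry_le (by positivity) fun i j =>
      (hsolves i j).norm_le _ (hg.entry i j) M
        (fun s hs => (norm_entry_le_norm _ i j).trans (hM s hs)) t ht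
  · have hM₀ : 0 ≤ M := (norm_nonneg _).trans (hM t ht)
    rw [mul_assoc]
    exact norm_le_card_mul_of_norm_entry_le (by positivity) fun i j =>
      (hsolves i j).norm_sub_le _ _ (hf.entry i j) (hg.entry i j) M
        (fun s hs => (norm_entry_le_norm (f s - g s) i j).trans (hM s hs)) t ht

lemma exists_riccati_diagonal_eq_zero {δ e r M K : ℝ} {μ : m → ℂ} {ν : n → ℂ} {E : Matrix m m ℂ}
    {F : Matrix n n ℂ} {R : Matrix n m ℂ} {S : Matrix m n ℂ} (hδ : 0 < δ)
    (hsep : ∀ i j, δ ≤ ‖μ i - ν j‖) (hK : Fintype.card n * (1 / δ) ≤ K) (hE : ‖E‖ ≤ e)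
    (hF : ‖F‖ ≤ e) (hR : ‖R‖ ≤ r) (hS : ‖S‖ ≤ M)
    (hsmall : K * (2 * e + 2 * r * (2 * K * M)) ≤ 1 / 2) :
    ∃ X, ‖X‖ ≤ 2 * K * M ∧ riccati (Matrix.diagonal μ + E) (Matrix.diagonal ν + F) R S X = 0 := by
  have hK₀ : 0 ≤ K := le_trans (by positivity) hK
  have hdiv := norm_entrywise_div_le (w := fun i j => μ i - ν j) hδ hsep hK
  obtain ⟨X, hX, hfix⟩ := exists_fixedPoint_of_norm_sub_le (B := 2 * K * M)
    (φ := fun X => -Matrix.of fun i j => riccati E F R S X i j / (μ i - ν j)) (by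
      rw [riccati_zero, norm_neg]
      calc ‖Matrix.of fun i j => S i j / (μ i - ν j)‖ ≤ K * ‖S‖ := hdiv S
        _ ≤ K * M := by gcongr
        _ = 2 * K * M / 2 := by ring) fun X Y hX hY => by
      have hlip := norm_riccati_sub_le S hE hF hR hX hY
      calc ‖(-Matrix.of fun i j => riccati E F R S X i j / (μ i - ν j)) -
            -Matrix.of fun i j => riccati E F R S Y i j / (μ i - ν j)‖
          = ‖Matrix.of fun i j => (riccati E F R S X - riccati E F R S Y) i j / (μ i - ν j)‖ := by
            rw [← neg_sub', norm_neg]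
            congr 1
            ext i j
            simp only [Matrix.sub_apply, Matrix.of_apply, sub_div]
        _ ≤ K * ((2 * e + 2 * r * (2 * K * M)) * ‖X - Y‖) := (hdiv _).trans (by gcongr)
        _ ≤ 1 / 2 * ‖X - Y‖ := by rw [← mul_assoc]; gcongr
        _ = ‖X - Y‖ / 2 := by ring
  refine ⟨X, hX, ?_⟩
  ext i j
  have hne : μ i - ν j ≠ 0 := norm_pos_iff.1 (hδ.trans_le (hsep i j))
  have hij : -(riccati E F R S X i j / (μ i - ν j)) = X i j := congrFun₂ hfix i j
  rw [riccati_add_left_right, Matrix.add_apply, diagonal_mul_sub_mul_diagonal_apply, ← hij,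
    mul_neg, mul_div_cancel₀ _ hne, neg_add_cancel, Matrix.zero_apply]

end DiagonalRiccati

section SingularRiccati

variable {m n : Type*} [Fintype m] [Fintype n]

/-- A solution of the singular Riccati equation `z h X' = riccati A B R S X` on the slit ball of
radius `ρ`, bounded there by `b` and with a limit at the singular point. -/
structure IsSingularRiccatiSolution (h ρ b : ℝ) (A : ℂ → Matrix m m ℂ) (B : ℂ → Matrix n n ℂ)
    (R : ℂ → Matrix n m ℂ) (S X : ℂ → Matrix m n ℂ) : Prop where
  hasDerivAt : ∀ z ∈ SlitBall ρ,
    HasDerivAt X ((z * h)⁻¹ • riccati (A z) (B z) (R z) (S z) (X z)) z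
  norm_le : ∀ z ∈ SlitBall ρ, ‖X z‖ ≤ b
  exists_tendsto : ∃ X₀, Tendsto X (𝓝[SlitBall ρ] 0) (𝓝 X₀)

lemma hasDerivAt_add_smul_comp_log {E : Type*} [NormedAddCommGroup E] [NormedSpace ℂ E]
    {Y : ℂ → E} {Y' : E} {z : ℂ} (x : E) (hz : z ∈ Complex.slitPlane)
    (hY : HasDerivAt Y Y' (Complex.log z)) :
    HasDerivAt (fun w => x + w • Y (Complex.log w)) (Y (Complex.log z) + Y') z := by
  refine (((hasDerivAt_id z).smul (hY.scomp z (Complex.hasDerivAt_log hz))).const_add x).congr_deriv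
    ?_
  rw [id_eq, smul_smul, mul_inv_cancel₀ (Complex.slitPlane_ne_zero hz), one_smul, one_smul,
    add_comm, Function.comp_apply]

lemma tendsto_add_smul_of_norm_le {E : Type*} [NormedAddCommGroup E] [NormedSpace ℂ E]
    {f : ℂ → E} {s : Set ℂ} {b : ℝ} (x : E) (hf : ∀ z ∈ s, ‖f z‖ ≤ b) :
    Tendsto (fun z => x + z • f z) (𝓝[s] 0) (𝓝 x) := by
  have hbound : IsBoundedUnder (· ≤ ·) (𝓝[s] 0) (norm ∘ f) :=
    ⟨b, eventually_map.2 (eventually_mem_nhdsWithin.mono hf)⟩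
  simpa using ((tendsto_id.mono_left nhdsWithin_le_nhds).zero_smul_isBoundedUnder_le
    hbound).const_add x

variable [DecidableEq m]

lemma add_riccati_blowUp {z h : ℂ} (hz : z ≠ 0) (A : Matrix m m ℂ) (B : Matrix n n ℂ)
    (R : Matrix n m ℂ) (S X Y : Matrix m n ℂ) :
    h • Y + riccati (A - X * R - h • 1) (B + R * X) (z • R) (z⁻¹ • riccati A B R S X) Y =
      z⁻¹ • riccati A B R S (X + z • Y) := by
  simp only [riccati, Matrix.mul_add, Matrix.add_mul, Matrix.sub_mul, Matrix.mul_smul,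
    Matrix.smul_mul, Matrix.one_mul, Matrix.mul_assoc, smul_add, smul_sub, smul_smul]
  match_scalars <;> field_simp
  ring

lemma isSingularRiccatiSolution_of_blowUp {h ρ b b' : ℝ} {U : Set ℂ} {A : ℂ → Matrix m m ℂ}
    {B : ℂ → Matrix n n ℂ} {R : ℂ → Matrix n m ℂ} {S Y : ℂ → Matrix m n ℂ} {X₀ : Matrix m n ℂ}
    (hh : h ≠ 0) (hlog : ∀ z ∈ SlitBall ρ, Complex.log z ∈ U) (hX₀ : ‖X₀‖ ≤ b)
    (hYb : ∀ t ∈ U, ‖Y t‖ ≤ b')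
    (hY : ∀ t ∈ U, HasDerivAt Y ((h : ℂ)⁻¹ • riccati
      (A (Complex.exp t) - X₀ * R (Complex.exp t) - (h : ℂ) • 1)
      (B (Complex.exp t) + R (Complex.exp t) * X₀) (Complex.exp t • R (Complex.exp t))
      ((Complex.exp t)⁻¹ • riccati (A (Complex.exp t)) (B (Complex.exp t)) (R (Complex.exp t))
        (S (Complex.exp t)) X₀) (Y t)) t) :
    IsSingularRiccatiSolution h ρ (b + ρ * b') A B R S fun z => X₀ + z • Y (Complex.log z) := by
  refine ⟨fun z hz => ?_, fun z hz => ?_, X₀,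
    tendsto_add_smul_of_norm_le X₀ fun z hz => hYb _ (hlog z hz)⟩
  · have hslit : z ∈ Complex.slitPlane := hz.2.symm
    have hz₀ : z ≠ 0 := Complex.slitPlane_ne_zero hslit
    have hh' : (h : ℂ) ≠ 0 := Complex.ofReal_ne_zero.2 hh
    refine (hasDerivAt_add_smul_comp_log X₀ hslit (hY _ (hlog z hz))).congr_deriv ?_
    rw [Complex.exp_log hz₀, mul_comm, mul_inv, ← smul_smul, ← add_riccati_blowUp hz₀ (h := h),
      smul_add, inv_smul_smul₀ hh']
  · refine (norm_add_le _ _).trans (add_le_add hX₀ ?_)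
    rw [norm_smul]
    exact mul_le_mul hz.1.le (hYb _ (hlog z hz)) (norm_nonneg _) ((norm_nonneg z).trans hz.1.le)

end SingularRiccati

section BlowUp

variable {m n : Type*} [Fintype m] [Fintype n] [DecidableEq m]

lemma norm_matrix_one_le : ‖(1 : Matrix m m ℂ)‖ ≤ 1 := by
  rw [← Matrix.diagonal_one, Matrix.linfty_opNorm_diagonal]
  exact (pi_norm_le_iff_of_nonneg zero_le_one).2 fun _ => norm_one.le

lemma norm_sub_apply_zero_le {E : Type*} [NormedAddCommGroup E] [NormedSpace ℂ E] {f : ℂ → E}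
    {r C : ℝ} {z : ℂ} (hf : DifferentiableOn ℂ f (Metric.ball 0 r))
    (hC : ∀ w ∈ Metric.ball 0 r, ‖f w‖ ≤ C) (hz : z ∈ Metric.ball 0 r) :
    ‖f z - f 0‖ ≤ 2 * C / r * ‖z‖ := by
  have hmaps : MapsTo f (Metric.ball 0 r) (Metric.closedBall (f 0) (2 * C)) := fun w hw => by
    rw [mem_closedBall_iff_norm, two_mul]
    exact (norm_sub_le _ _).trans
      (add_le_add (hC w hw) (hC 0 (Metric.mem_ball_self (Metric.pos_of_mem_ball hz))))
  simpa only [dist_eq_norm, sub_zero] using Complex.dist_le_div_mul_dist_of_mapsTo_ball hf hmaps hz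

lemma IsRiccatiData.blowUp {U : Set ℂ} {r ε M b h : ℝ} {A : Matrix m m ℂ} {B : Matrix n n ℂ}
    {E : ℂ → Matrix m m ℂ} {F : ℂ → Matrix n n ℂ} {R : ℂ → Matrix n m ℂ} {S : ℂ → Matrix m n ℂ}
    {X₀ : Matrix m n ℂ} (hdata : IsRiccatiData (Metric.ball 0 r) ε ε M E F R S)
    (hexp : ∀ t ∈ U, Complex.exp t ∈ Metric.ball 0 r) (hh : h ∈ Ioc 0 ε) (hX₀ : ‖X₀‖ ≤ b)
    (hzero : riccati (A + E 0) (B + F 0) (R 0) (S 0) X₀ = 0)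
    (hbound : ∀ z ∈ Metric.ball 0 r, ‖riccati (E z) (F z) (R z) (S z) X₀‖ ≤ 2 * M) :
    IsRiccatiData U ((2 + b) * ε) (r * ε) (4 * M / r)
      (fun t => E (Complex.exp t) - X₀ * R (Complex.exp t) - (h : ℂ) • 1)
      (fun t => F (Complex.exp t) + R (Complex.exp t) * X₀)
      (fun t => Complex.exp t • R (Complex.exp t))
      (fun t => (Complex.exp t)⁻¹ • riccati (A + E (Complex.exp t)) (B + F (Complex.exp t))
        (R (Complex.exp t)) (S (Complex.exp t)) X₀) := by
  have hR' := hdata.differentiableOn_quadratic.comp Complex.differentiable_exp.differentiableOn hexp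
  have hriccati : DifferentiableOn ℂ (fun z => riccati (E z) (F z) (R z) (S z) X₀)
      (Metric.ball 0 r) :=
    differentiableOn_riccati hdata.differentiableOn_left hdata.differentiableOn_right
      hdata.differentiableOn_quadratic hdata.differentiableOn_constant (differentiableOn_const X₀)
  have hconstant : ∀ z, riccati (A + E z) (B + F z) (R z) (S z) X₀ =
      riccati (E z) (F z) (R z) (S z) X₀ - riccati (E 0) (F 0) (R 0) (S 0) X₀ := fun z => by
    rw [riccati_add_left_right, add_eq_zero_iff_eq_neg] at hzero
    rw [riccati_add_left_right, hzero, neg_add_eq_sub]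
  simp only [hconstant]
  refine ⟨?_, ?_, ?_, ?_, fun t ht => ?_, fun t ht => ?_, fun t ht => ?_, fun t ht => ?_⟩
  · exact ((hdata.differentiableOn_left.comp Complex.differentiable_exp.differentiableOn hexp).sub
      (differentiableOn_matrix_mul (differentiableOn_const X₀) hR')).sub (differentiableOn_const _)
  · exact (hdata.differentiableOn_right.comp Complex.differentiable_exp.differentiableOn hexp).add
      (differentiableOn_matrix_mul hR' (differentiableOn_const X₀))
  · exact Complex.differentiable_exp.differentiableOn.smul hR'
  · exact (Complex.differentiable_exp.differentiableOn.inv fun t _ => Complex.exp_ne_zero t).smul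
      ((hriccati.comp Complex.differentiable_exp.differentiableOn hexp).sub
        (differentiableOn_const _))
  · have hshift : ‖(h : ℂ) • (1 : Matrix m m ℂ)‖ ≤ ε * 1 := by
      rw [norm_smul, Complex.norm_of_nonneg hh.1.le]
      exact mul_le_mul hh.2 norm_matrix_one_le (norm_nonneg _) (hh.1.le.trans hh.2)
    linarith [norm_sub_le (E (Complex.exp t) - X₀ * R (Complex.exp t)) ((h : ℂ) • 1),
      norm_sub_le (E (Complex.exp t)) (X₀ * R (Complex.exp t)), hdata.norm_left_le _ (hexp t ht),
      norm_matrix_mul_le_of_le hX₀ (hdata.norm_quadratic_le _ (hexp t ht))]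
  · linarith [norm_add_le (F (Complex.exp t)) (R (Complex.exp t) * X₀), hh.1.trans_le hh.2,
      norm_matrix_mul_le_of_le (hdata.norm_quadratic_le _ (hexp t ht)) hX₀,
      hdata.norm_right_le _ (hexp t ht)]
  · rw [norm_smul]
    exact mul_le_mul (mem_ball_zero_iff.1 (hexp t ht)).le (hdata.norm_quadratic_le _ (hexp t ht))
      (norm_nonneg _) (Metric.pos_of_mem_ball (hexp t ht)).le
  · rw [norm_smul, norm_inv, inv_mul_le_iff₀ (norm_pos_iff.2 (Complex.exp_ne_zero t)), mul_comm]
    exact (norm_sub_apply_zero_le hriccati hbound (hexp t ht)).trans_eq (by ring)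

end BlowUp

section DiagonalSingularRiccati

variable {m n : Type*} [Fintype m] [Fintype n] [DecidableEq m] [DecidableEq n]

lemma IsRiccatiData.exists_isSingularRiccatiSolution_of_isSolutionOperator {U : Set ℂ}
    {δ ε h r ρ K M : ℝ} {μ : m → ℂ} {ν : n → ℂ} {E : ℂ → Matrix m m ℂ} {F : ℂ → Matrix n n ℂ}
    {R : ℂ → Matrix n m ℂ} {S : ℂ → Matrix m n ℂ} {J : (ℂ → Matrix m n ℂ) → ℂ → Matrix m n ℂ}
    (hdata : IsRiccatiData (Metric.ball 0 r) ε ε M E F R S) (hδ : 0 < δ) (hr : 0 < r)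
    (hh : h ∈ Ioc 0 ε) (hρ : ρ ≤ r) (hM : M ∈ Icc 0 1) (hsep : ∀ i j, δ ≤ ‖μ i - ν j‖)
    (hK : 1 ≤ K) (hKδ : Fintype.card n * (1 / δ) ≤ K) (hKε : 48 * K ^ 2 * ε ≤ 1) (hU : IsOpen U)
    (hexp : ∀ t ∈ U, Complex.exp t ∈ Metric.ball 0 r)
    (hlog : ∀ z ∈ SlitBall ρ, Complex.log z ∈ U)
    (hJ : IsSolutionOperator U
      (fun X => (h : ℂ)⁻¹ • (Matrix.diagonal μ * X - X * Matrix.diagonal ν)) (K * h) J) :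
    ∃ X, IsSingularRiccatiSolution h ρ (10 * K * M) (fun z => Matrix.diagonal μ + E z)
      (fun z => Matrix.diagonal ν + F z) R S X := by
  have hε : 0 < ε := hh.1.trans_le hh.2
  have hM₀ := hM.1
  have hKM : K * (K * M) ≤ K * K := by nlinarith [hM.2]
  have hsmall : K * (2 * ε + 2 * ε * (2 * K * M)) ≤ 1 / 2 := by
    nlinarith [mul_le_mul_of_nonneg_left hKM hε.le, mul_le_mul_of_nonneg_left hK hε.le]
  have hsmall' : K * (2 * ((2 + 2 * K * M) * ε) + 2 * (r * ε) * (2 * K * (4 * M / r))) ≤ 1 / 2 := by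
    have hcancel : 2 * (r * ε) * (2 * K * (4 * M / r)) = 16 * ε * K * M := by field_simp; ring
    rw [hcancel]
    nlinarith [mul_le_mul_of_nonneg_left hKM hε.le]
  have h0 : (0 : ℂ) ∈ Metric.ball 0 r := Metric.mem_ball_self hr
  obtain ⟨X₀, hX₀, hzero⟩ := exists_riccati_diagonal_eq_zero hδ hsep hKδ (hdata.norm_left_le 0 h0)
    (hdata.norm_right_le 0 h0) (hdata.norm_quadratic_le 0 h0) (hdata.norm_constant_le 0 h0) hsmall
  have hblowUp := hdata.blowUp hexp hh hX₀ hzero fun z hz =>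
    norm_riccati_le (hdata.norm_left_le z hz) (hdata.norm_right_le z hz)
      (hdata.norm_quadratic_le z hz) (hdata.norm_constant_le z hz) hX₀ hsmall
  obtain ⟨Y, hYb, hY⟩ := hblowUp.exists_hasDerivAt_riccati hU hh.1 (by linarith) (by positivity)
    (by positivity) (by positivity) hJ hsmall'
  have hsolution := isSingularRiccatiSolution_of_blowUp (A := fun z => Matrix.diagonal μ + E z)
    (B := fun z => Matrix.diagonal ν + F z) (R := R) (S := S) hh.1.ne' hlog hX₀ hYb fun t ht => by
      simpa only [← add_sub_assoc, ← add_assoc] using hY t ht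
  refine ⟨_, hsolution.hasDerivAt, fun z hz => (hsolution.norm_le z hz).trans ?_,
    hsolution.exists_tendsto⟩
  calc 2 * K * M + ρ * (2 * K * (4 * M / r)) ≤ 2 * K * M + r * (2 * K * (4 * M / r)) := by gcongr
    _ = 10 * K * M := by field_simp; ring

lemma exp_mem_ball_of_mem_sector {κ r : ℝ} {t : ℂ} (hκ : 0 < κ) (hr : 0 < r)
    (ht : t ∈ Sector κ (Real.log r)) : Complex.exp t ∈ Metric.ball 0 r := by
  rw [mem_ball_zero_iff, Complex.norm_exp, ← Real.lt_log_iff_exp_lt hr]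
  exact sub_pos.1 (sub_re_pos_of_mem_sector hκ ht)

lemma exists_isSolutionOperator_sector_diagonal {κ a c h : ℝ} {μ : m → ℂ} {ν : n → ℂ} (hκ : 0 < κ)
    (hκ₁ : κ ≤ 1) (hc : 0 < c) (hh : 0 < h)
    (hslope : ∀ i j, c ≤ |(μ i - ν j).re - κ * (μ i - ν j).im| ∧
      c ≤ |(μ i - ν j).re + κ * (μ i - ν j).im|) :
    ∃ J, IsSolutionOperator (Sector κ a)
      (fun X : Matrix m n ℂ => (h : ℂ)⁻¹ • (Matrix.diagonal μ * X - X * Matrix.diagonal ν))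
      (Fintype.card n * (2 / c) * h) J := by
  have hscale : Fintype.card n * (2 / c) * h = Fintype.card n * (2 / (c / h)) := by field_simp
  rw [hscale]
  refine exists_isSolutionOperator_of_entries (by positivity) fun i j =>
    exists_isSolutionOperator_sector hκ hκ₁ (by positivity) ?_ ?_ <;>
  rw [← Complex.ofReal_inv, Complex.re_ofReal_mul, Complex.im_ofReal_mul, mul_left_comm,
    div_eq_inv_mul]
  · rw [← mul_sub, abs_mul, abs_of_pos (inv_pos.2 hh)]
    exact mul_le_mul_of_nonneg_left (hslope i j).1 (inv_pos.2 hh).le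
  · rw [← mul_add, abs_mul, abs_of_pos (inv_pos.2 hh)]
    exact mul_le_mul_of_nonneg_left (hslope i j).2 (inv_pos.2 hh).le

variable (m n) in
lemma exists_forall_isSingularRiccatiSolution_diagonal {δ : ℝ} (hδ : 0 < δ) :
    ∃ ε > 0, ∃ K > 0, ∃ σ ∈ Ioc (0 : ℝ) 1, ∀ r > 0, ∀ h ∈ Ioc 0 ε, ∀ M ∈ Icc (0 : ℝ) 1,
      ∀ (μ : m → ℂ) (ν : n → ℂ) E F R S, (∀ i j, δ ≤ ‖μ i - ν j‖) →
        IsRiccatiData (Metric.ball 0 r) ε ε M E F R S →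
          ∃ X, IsSingularRiccatiSolution h (σ * r) (K * M) (fun z => Matrix.diagonal μ + E z)
            (fun z => Matrix.diagonal ν + F z) R S X := by
  obtain ⟨s, hs⟩ : ∃ s : ℝ, 2 * (2 * Fintype.card (m × n) + 1) * s = 1 :=
    ⟨_, mul_inv_cancel₀ (by positivity)⟩
  have hs₀ : 0 < s := pos_of_mul_pos_right (hs ▸ one_pos) (by positivity)
  have hs₁ : s ≤ 1 := by nlinarith [(Nat.cast_nonneg (Fintype.card (m × n)) : (0 : ℝ) ≤ _)]
  set c := δ * s / 8 with hc
  have hc₀ : 0 < c := by positivity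
  have hcδ : 1 / δ ≤ 2 / c := by
    rw [div_le_div_iff₀ hδ hc₀, hc]
    nlinarith [mul_le_mul_of_nonneg_left hs₁ hδ.le]
  set K := Fintype.card n * (2 / c) + 1
  have hK₁ : 1 ≤ K := le_add_of_nonneg_left (by positivity)
  have hσ : Real.exp (-(4 / s)) ≤ 1 := Real.exp_le_one_iff.2 (neg_nonpos.2 (by positivity))
  refine ⟨1 / (48 * K ^ 2), by positivity, 10 * K, by positivity, Real.exp (-(4 / s)),
    ⟨Real.exp_pos _, hσ⟩, fun r hr h hh M hM μ ν E F R S hsep hdata => ?_⟩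
  obtain ⟨κ, hκ, hslope⟩ := exists_slope_forall_le_abs_sub_and_add
    (fun ij : m × n => μ ij.1 - ν ij.2) (fun ij => hsep ij.1 ij.2) hs
  have hκ₀ : 0 < κ := hs₀.trans_le hκ.1
  obtain ⟨J, hJ⟩ := exists_isSolutionOperator_sector_diagonal (a := Real.log r) hκ₀
    (by linarith [hκ.2]) hc₀ hh.1 fun i j => hslope (i, j)
  exact hdata.exists_isSingularRiccatiSolution_of_isSolutionOperator hδ hr hh
    (mul_le_of_le_one_left hr.le hσ) hM hsep hK₁
    ((mul_le_mul_of_nonneg_left hcδ (Nat.cast_nonneg _)).trans (le_add_of_nonneg_right zero_le_one))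
    (by field_simp; rfl) isOpen_sector
    (fun t ht => exp_mem_ball_of_mem_sector hκ₀ hr ht) (fun z hz => log_mem_sector hs₀ hκ.1 hr hz)
    (hJ.mono (mul_le_mul_of_nonneg_right (le_add_of_nonneg_right zero_le_one) hh.1.le))

end DiagonalSingularRiccati

section NearDiagonalization

variable {m n : Type*} [Fintype m] [Fintype n]

lemma exists_normalized_eigenvector [Nonempty n] (A : Matrix n n ℂ) :
    ∃ (lam : ℂ) (v : n → ℂ) (i : n), A.mulVec v = lam • v ∧ v i = 1 ∧ ∀ j, ‖v j‖ ≤ 1 := by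
  classical
  obtain ⟨lam, hlam⟩ := Module.End.exists_eigenvalue (Matrix.toLin' A)
  obtain ⟨v, hv⟩ := hlam.exists_hasEigenvector
  obtain ⟨i, hi⟩ := Finite.exists_max fun i => ‖v i‖
  have hvi : v i ≠ 0 := fun hzero => hv.2 <| funext fun j =>
    norm_le_zero_iff.1 ((hi j).trans_eq (norm_eq_zero.2 hzero))
  refine ⟨lam, (v i)⁻¹ • v, i, ?_, inv_mul_cancel₀ hvi, fun j => ?_⟩
  · rw [Matrix.mulVec_smul, ← Matrix.toLin'_apply, hv.apply_eq_smul, smul_comm]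
  · rw [Pi.smul_apply, norm_smul, norm_inv, inv_mul_le_iff₀ (norm_pos_iff.2 hvi), mul_one]
    exact hi j

variable [DecidableEq m] [DecidableEq n]

/-- Conjugating `A` by `P`, whose inverse is `Q`, gives a matrix within `η` of the diagonal matrix
of a family `μ` of eigenvalues of `A`; the conjugators have norm at most `K`. -/
structure IsNearDiagonalization (K η : ℝ) (A P Q : Matrix n n ℂ) (μ : n → ℂ) : Prop where
  mul_eq_one : Q * P = 1
  norm_le : ‖P‖ ≤ K
  norm_inv_le : ‖Q‖ ≤ K
  mem_spectrum : ∀ i, μ i ∈ spectrum ℂ A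
  norm_sub_le : ‖Q * A * P - Matrix.diagonal μ‖ ≤ η

lemma mem_spectrum_fromBlocks_zero₂₁ {A : Matrix m m ℂ} {B : Matrix m n ℂ} {D : Matrix n n ℂ}
    {lam : ℂ} : lam ∈ spectrum ℂ (Matrix.fromBlocks A B 0 D) ↔
      lam ∈ spectrum ℂ A ∨ lam ∈ spectrum ℂ D := by
  simp only [Matrix.mem_spectrum_iff_isRoot_charpoly, Matrix.charpoly_fromBlocks_zero₂₁,
    Polynomial.root_mul]

namespace IsNearDiagonalization

lemma mono {K K' η : ℝ} {A P Q : Matrix n n ℂ} {μ : n → ℂ} (hK : K ≤ K')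
    (h : IsNearDiagonalization K η A P Q μ) : IsNearDiagonalization K' η A P Q μ :=
  ⟨h.mul_eq_one, h.norm_le.trans hK, h.norm_inv_le.trans hK, h.mem_spectrum, h.norm_sub_le⟩

lemma submatrix {K η : ℝ} {A P Q : Matrix n n ℂ} {μ : n → ℂ}
    (h : IsNearDiagonalization K η A P Q μ) (e : m ≃ n) :
    IsNearDiagonalization K η (A.submatrix e e) (P.submatrix e e) (Q.submatrix e e) (μ ∘ e) where
  mul_eq_one := by rw [Matrix.submatrix_mul_equiv, h.mul_eq_one, Matrix.submatrix_one_equiv]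
  norm_le := (norm_submatrix_le P e e.toEmbedding).trans h.norm_le
  norm_inv_le := (norm_submatrix_le Q e e.toEmbedding).trans h.norm_inv_le
  mem_spectrum i := by
    have hchar : (A.submatrix e e).charpoly = A.charpoly := Matrix.charpoly_reindex e.symm A
    rw [Matrix.mem_spectrum_iff_isRoot_charpoly, hchar, ← Matrix.mem_spectrum_iff_isRoot_charpoly]
    exact h.mem_spectrum (e i)
  norm_sub_le := by
    rw [Matrix.submatrix_mul_equiv, Matrix.submatrix_mul_equiv,
      ← Matrix.submatrix_diagonal_equiv]
    exact (norm_submatrix_le (Q * A * P - Matrix.diagonal μ) e e.toEmbedding).trans h.norm_sub_le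

lemma of_conj {K K' η : ℝ} {A P Q P' Q' : Matrix n n ℂ} {μ : n → ℂ}
    (h : IsNearDiagonalization K η (Q' * A * P') P Q μ) (hone : Q' * P' = 1) (hP' : ‖P'‖ ≤ K')
    (hQ' : ‖Q'‖ ≤ K') : IsNearDiagonalization (K' * K) η A (P' * P) (Q * Q') μ where
  mul_eq_one := by
    rw [Matrix.mul_assoc, ← Matrix.mul_assoc Q' P' P, hone, Matrix.one_mul, h.mul_eq_one]
  norm_le := norm_matrix_mul_le_of_le hP' h.norm_le
  norm_inv_le := mul_comm K K' ▸ norm_matrix_mul_le_of_le h.norm_inv_le hQ'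
  mem_spectrum i := by
    have hchar : (Q' * A * P').charpoly = A.charpoly := by
      rw [Matrix.mul_assoc, Matrix.charpoly_mul_comm, Matrix.mul_assoc, mul_eq_one_comm.1 hone,
        Matrix.mul_one]
    rw [Matrix.mem_spectrum_iff_isRoot_charpoly, ← hchar, ← Matrix.mem_spectrum_iff_isRoot_charpoly]
    exact h.mem_spectrum i
  norm_sub_le := by simpa only [Matrix.mul_assoc] using h.norm_sub_le

lemma norm_conj_add_sub_le {K η ε : ℝ} {A E P Q : Matrix n n ℂ} {μ : n → ℂ}
    (h : IsNearDiagonalization K η A P Q μ) (hE : ‖E‖ ≤ ε) :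
    ‖Q * (A + E) * P - Matrix.diagonal μ‖ ≤ η + K * ε * K := by
  rw [Matrix.mul_add, Matrix.add_mul, add_sub_right_comm]
  exact (norm_add_le _ _).trans (add_le_add h.norm_sub_le
    (norm_matrix_mul_le_of_le (norm_matrix_mul_le_of_le h.norm_inv_le hE) h.norm_le))

lemma smul_one {η : ℝ} (hη : 0 ≤ η) (lam : ℂ) :
    IsNearDiagonalization 1 η (lam • (1 : Matrix n n ℂ)) 1 1 fun _ => lam where
  mul_eq_one := Matrix.one_mul 1
  norm_le := norm_matrix_one_le
  norm_inv_le := norm_matrix_one_le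
  mem_spectrum i := by
    have : Nonempty n := ⟨i⟩
    rw [← Algebra.algebraMap_eq_smul_one, spectrum.scalar_eq]
    exact mem_singleton lam
  norm_sub_le := by
    rwa [Matrix.one_mul, Matrix.mul_one, Matrix.smul_one_eq_diagonal, sub_self, norm_zero]

-- Rescaling the second block of the conjugator by `s` rescales the off-diagonal block by `s`.
lemma fromBlocks {K η c : ℝ} {s : ℂ} {A P₁ Q₁ : Matrix m m ℂ} {D P₂ Q₂ : Matrix n n ℂ} {μ : m → ℂ}
    {ν : n → ℂ} {B : Matrix m n ℂ} (hA : IsNearDiagonalization K (η / 2) A P₁ Q₁ μ)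
    (hD : IsNearDiagonalization K η D P₂ Q₂ ν) (hs : s ≠ 0) (hs₁ : ‖s‖ ≤ 1) (hB : ‖B‖ ≤ c)
    (hsc : ‖s‖ * (K * c * K) ≤ η / 2) :
    IsNearDiagonalization (K / ‖s‖) η (Matrix.fromBlocks A B 0 D)
      (Matrix.fromBlocks P₁ 0 0 (s • P₂)) (Matrix.fromBlocks Q₁ 0 0 (s⁻¹ • Q₂))
      (Sum.elim μ ν) := by
  have hK₀ : 0 ≤ K := (norm_nonneg _).trans hA.norm_le
  have hη : 0 ≤ η := (norm_nonneg _).trans hD.norm_sub_le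
  have hsK : K ≤ K / ‖s‖ := le_div_self hK₀ (norm_pos_iff.2 hs) hs₁
  have hconj : Matrix.fromBlocks Q₁ 0 0 (s⁻¹ • Q₂) * Matrix.fromBlocks A B 0 D *
      Matrix.fromBlocks P₁ 0 0 (s • P₂) - Matrix.diagonal (Sum.elim μ ν) =
      Matrix.fromBlocks (Q₁ * A * P₁ - Matrix.diagonal μ) (s • (Q₁ * B * P₂)) 0
        (Q₂ * D * P₂ - Matrix.diagonal ν) := by
    rw [sub_eq_iff_eq_add, ← Matrix.fromBlocks_diagonal, Matrix.fromBlocks_add]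
    simp [Matrix.fromBlocks_multiply, hs]
  refine ⟨?_, ?_, ?_, Sum.forall.2 ⟨fun i => ?_, fun j => ?_⟩, hconj ▸ norm_fromBlocks_le hη ?_ ?_⟩
  · simp [Matrix.fromBlocks_multiply, hA.mul_eq_one, hD.mul_eq_one, hs]
  · have hle := mul_le_mul hs₁ hD.norm_le (norm_nonneg _) zero_le_one
    refine norm_fromBlocks_le (hK₀.trans hsK) ?_ ?_ <;> simp only [norm_zero, norm_smul]
    · linarith [hA.norm_le]
    · linarith
  · refine norm_fromBlocks_le (hK₀.trans hsK) ?_ ?_ <;> simp only [norm_zero, norm_smul, norm_inv]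
    · linarith [hA.norm_inv_le]
    · rw [zero_add, div_eq_inv_mul]
      exact mul_le_mul_of_nonneg_left hD.norm_inv_le (inv_nonneg.2 (norm_nonneg s))
  · exact mem_spectrum_fromBlocks_zero₂₁.2 (Or.inl (hA.mem_spectrum i))
  · exact mem_spectrum_fromBlocks_zero₂₁.2 (Or.inr (hD.mem_spectrum j))
  · rw [norm_smul]
    linarith [hA.norm_sub_le, mul_le_mul_of_nonneg_left (norm_matrix_mul_le_of_le
      (norm_matrix_mul_le_of_le hA.norm_inv_le hB) hD.norm_le) (norm_nonneg s)]
  · simpa only [norm_zero, zero_add] using hD.norm_sub_le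

end IsNearDiagonalization

lemma exists_submatrix_mul_fromRows_eq_smul {k : ℕ} (A : Matrix (Fin (k + 1)) (Fin (k + 1)) ℂ) :
    ∃ (e : Unit ⊕ Fin k ≃ Fin (k + 1)) (lam : ℂ) (w : Matrix (Fin k) Unit ℂ), ‖w‖ ≤ 1 ∧
      A.submatrix e e * Matrix.fromRows (1 : Matrix Unit Unit ℂ) w = lam • Matrix.fromRows 1 w := by
  obtain ⟨lam, v, i, hv, hvi, hv₁⟩ := exists_normalized_eigenvector A
  obtain ⟨e, he⟩ : ∃ e : Unit ⊕ Fin k ≃ Fin (k + 1), e (Sum.inl ()) = i :=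
    ⟨(Equiv.sumComm _ _).trans ((Equiv.optionEquivSumPUnit _).symm.trans (finSuccEquiv' i).symm),
      finSuccEquiv'_symm_none i⟩
  have hrows : Matrix.fromRows 1 (Matrix.of fun j _ => v (e (Sum.inr j))) =
      Matrix.replicateCol Unit (v ∘ e) := by
    ext (_ | j) _
    · simp [he, hvi]
    · rfl
  refine ⟨e, lam, Matrix.of fun j _ => v (e (Sum.inr j)),
    (norm_matrix_le_iff zero_le_one).2 fun j => ?_, ?_⟩
  · simpa using hv₁ _
  · rw [hrows, ← Matrix.replicateCol_mulVec, Matrix.submatrix_mulVec_equiv, Function.comp_assoc,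
      e.self_comp_symm, Function.comp_id, hv]
    rfl

lemma shear_conj_fromBlocks {A : Matrix m m ℂ} {B : Matrix m n ℂ} {C : Matrix n m ℂ}
    {D : Matrix n n ℂ} {w : Matrix n m ℂ} {lam : ℂ}
    (h : Matrix.fromBlocks A B C D * Matrix.fromRows (1 : Matrix m m ℂ) w =
      lam • Matrix.fromRows 1 w) :
    Matrix.fromBlocks 1 0 (-w) 1 * Matrix.fromBlocks A B C D * Matrix.fromBlocks 1 0 w 1 =
      Matrix.fromBlocks (lam • 1) B 0 (D - w * B) := by
  have hrows : Matrix.fromRows (A + B * w) (C + D * w) = Matrix.fromRows (lam • 1) (lam • w) := by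
    rw [← Matrix.mul_one A, ← Matrix.mul_one C, ← Matrix.fromBlocks_mul_fromRows, h]
    ext (_ | _) _ <;> rfl
  obtain ⟨htop, hbottom⟩ := Matrix.fromRows_inj hrows
  rw [Matrix.mul_assoc, Matrix.fromBlocks_multiply A]
  simp only [Matrix.mul_one, Matrix.mul_zero, zero_add, htop, hbottom, Matrix.fromBlocks_multiply]
  simp [neg_add_eq_sub]

lemma norm_shear_le {w : Matrix n m ℂ} (hw : ‖w‖ ≤ 1) :
    ‖Matrix.fromBlocks (1 : Matrix m m ℂ) 0 w (1 : Matrix n n ℂ)‖ ≤ 2 := by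
  refine norm_fromBlocks_le zero_le_two ?_ ?_
  · linarith [norm_matrix_one_le (m := m), norm_zero (E := Matrix m n ℂ)]
  · linarith [norm_matrix_one_le (m := n)]

lemma exists_forall_isNearDiagonalization_of_mul_fromRows {η C K : ℝ} (hη : 0 < η) (hC : 0 ≤ C)
    (hK : 1 ≤ K)
    (hD : ∀ D : Matrix n n ℂ, ‖D‖ ≤ 2 * C → ∃ P Q ν, IsNearDiagonalization K η D P Q ν) :
    ∃ K' ≥ 1, ∀ (A : Matrix (m ⊕ n) (m ⊕ n) ℂ) (lam : ℂ) (w : Matrix n m ℂ), ‖A‖ ≤ C → ‖w‖ ≤ 1 →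
      A * Matrix.fromRows (1 : Matrix m m ℂ) w = lam • Matrix.fromRows 1 w →
        ∃ P Q μ, IsNearDiagonalization K' η A P Q μ := by
  obtain ⟨s, ⟨hs₀, hs₁⟩, hs⟩ : ∃ s ∈ Ioc (0 : ℝ) 1, s * (K * C * K) ≤ η / 2 := by
    refine ⟨min 1 (η / 2 / (K * C * K + 1)), ⟨by positivity, min_le_left _ _⟩, ?_⟩
    have hle := (le_div_iff₀ (by positivity)).1 (min_le_right 1 (η / 2 / (K * C * K + 1)))
    exact (mul_le_mul_of_nonneg_left (le_add_of_nonneg_right zero_le_one) (by positivity)).trans hle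
  have hnorm : ‖(s : ℂ)‖ = s := Complex.norm_of_nonneg hs₀.le
  refine ⟨2 * (K / s), ?_, fun A lam w hA hw heigen => ?_⟩
  · linarith [(one_le_div₀ hs₀).2 (hs₁.trans hK)]
  have hB : ‖A.toBlocks₁₂‖ ≤ C := (norm_submatrix_le A Sum.inl Function.Embedding.inr).trans hA
  have hblock : ‖A.toBlocks₂₂‖ ≤ C := (norm_submatrix_le A Sum.inr Function.Embedding.inr).trans hA
  obtain ⟨P, Q, ν, hν⟩ := hD (A.toBlocks₂₂ - w * A.toBlocks₁₂) <| by
    linarith [norm_sub_le A.toBlocks₂₂ (w * A.toBlocks₁₂), norm_matrix_mul_le_of_le hw hB]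
  have hdiag := ((IsNearDiagonalization.smul_one (n := m) (half_pos hη).le lam).mono hK).fromBlocks
    hν (Complex.ofReal_ne_zero.2 hs₀.ne') (hnorm.trans_le hs₁) hB (hnorm.symm ▸ hs)
  rw [← Matrix.fromBlocks_toBlocks A] at heigen ⊢
  rw [← shear_conj_fromBlocks heigen, hnorm] at hdiag
  exact ⟨_, _, _, hdiag.of_conj (by simp [Matrix.fromBlocks_multiply]) (norm_shear_le hw)
    (norm_shear_le ((norm_neg w).trans_le hw))⟩

lemma exists_forall_isNearDiagonalization_fin {η : ℝ} (hη : 0 < η) (k : ℕ) : ∀ C : ℝ, 0 ≤ C →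
    ∃ K ≥ 1, ∀ A : Matrix (Fin k) (Fin k) ℂ, ‖A‖ ≤ C →
      ∃ P Q μ, IsNearDiagonalization K η A P Q μ := by
  induction k with
  | zero =>
    refine fun C _ => ⟨1, le_rfl, fun A _ => ⟨1, 1, fun _ => 0, ?_⟩⟩
    rw [Subsingleton.elim A ((0 : ℂ) • 1)]
    exact .smul_one hη.le 0
  | succ k ih =>
    intro C hC
    obtain ⟨K, hK, hD⟩ := ih (2 * C) (by positivity)
    obtain ⟨K', hK', hdeflate⟩ :=
      exists_forall_isNearDiagonalization_of_mul_fromRows (m := Unit) hη hC hK hD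
    refine ⟨K', hK', fun A hA => ?_⟩
    obtain ⟨e, lam, w, hw, heigen⟩ := exists_submatrix_mul_fromRows_eq_smul A
    obtain ⟨P, Q, μ, hμ⟩ := hdeflate (A.submatrix e e) lam w
      ((norm_submatrix_le A e e.toEmbedding).trans hA) hw heigen
    have hreindex := hμ.submatrix e.symm
    rw [Matrix.submatrix_submatrix, e.self_comp_symm, Matrix.submatrix_id_id] at hreindex
    exact ⟨_, _, _, hreindex⟩

variable (n) in
theorem exists_forall_isNearDiagonalization {η C : ℝ} (hη : 0 < η) (hC : 0 ≤ C) :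
    ∃ K ≥ 1, ∀ A : Matrix n n ℂ, ‖A‖ ≤ C → ∃ P Q μ, IsNearDiagonalization K η A P Q μ := by
  let e := Fintype.equivFin n
  obtain ⟨K, hK, hfin⟩ := exists_forall_isNearDiagonalization_fin hη (Fintype.card n) C hC
  refine ⟨K, hK, fun A hA => ?_⟩
  obtain ⟨P, Q, μ, hμ⟩ := hfin (A.submatrix e.symm e.symm)
    ((norm_submatrix_le A e.symm e.symm.toEmbedding).trans hA)
  have hreindex := hμ.submatrix e
  rw [Matrix.submatrix_submatrix, e.symm_comp_self, Matrix.submatrix_id_id] at hreindex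
  exact ⟨_, _, _, hreindex⟩

end NearDiagonalization

section GeneralSingularRiccati

variable {m n : Type*} [Fintype m] [Fintype n]

lemma differentiableOn_conj {U : Set ℂ} {f : ℂ → Matrix m n ℂ} (hf : DifferentiableOn ℂ f U)
    (Q : Matrix m m ℂ) (P : Matrix n n ℂ) : DifferentiableOn ℂ (fun z => Q * f z * P) U :=
  differentiableOn_matrix_mul (differentiableOn_matrix_mul (differentiableOn_const Q) hf)
    (differentiableOn_const P)

lemma IsRiccatiData.mono {U : Set ℂ} {e e' r r' M : ℝ} {E : ℂ → Matrix m m ℂ}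
    {F : ℂ → Matrix n n ℂ} {R : ℂ → Matrix n m ℂ} {S : ℂ → Matrix m n ℂ}
    (hdata : IsRiccatiData U e r M E F R S) (he : e ≤ e') (hr : r ≤ r') :
    IsRiccatiData U e' r' M E F R S where
  __ := hdata
  norm_left_le z hz := (hdata.norm_left_le z hz).trans he
  norm_right_le z hz := (hdata.norm_right_le z hz).trans he
  norm_quadratic_le z hz := (hdata.norm_quadratic_le z hz).trans hr

variable [DecidableEq m] [DecidableEq n]

lemma riccati_conj {P Q A : Matrix m m ℂ} {P' Q' B : Matrix n n ℂ} (hPQ : P * Q = 1)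
    (hPQ' : P' * Q' = 1) (R : Matrix n m ℂ) (S X : Matrix m n ℂ) :
    P * riccati (Q * A * P) (Q' * B * P') (Q' * R * P) (Q * S * P') X * Q' =
      riccati A B R S (P * X * Q') := by
  have hcancel : ∀ Y : Matrix m n ℂ, P * (Q * Y) = Y := fun Y => by
    rw [← Matrix.mul_assoc, hPQ, Matrix.one_mul]
  simp only [riccati, Matrix.mul_add, Matrix.mul_sub, Matrix.add_mul, Matrix.sub_mul,
    Matrix.mul_assoc, hcancel, hPQ', Matrix.mul_one]

lemma IsSingularRiccatiSolution.of_conj {h ρ b k : ℝ} {P Q : Matrix m m ℂ} {P' Q' : Matrix n n ℂ}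
    {A : ℂ → Matrix m m ℂ} {B : ℂ → Matrix n n ℂ} {R : ℂ → Matrix n m ℂ} {S X : ℂ → Matrix m n ℂ}
    (hX : IsSingularRiccatiSolution h ρ b (fun z => Q * A z * P) (fun z => Q' * B z * P')
      (fun z => Q' * R z * P) (fun z => Q * S z * P') X)
    (hPQ : P * Q = 1) (hPQ' : P' * Q' = 1) (hP : ‖P‖ ≤ k) (hQ' : ‖Q'‖ ≤ k) :
    IsSingularRiccatiSolution h ρ (k * b * k) A B R S fun z => P * X z * Q' where
  hasDerivAt z hz := by
    refine (hasDerivAt_matrix_mul (hasDerivAt_matrix_mul (hasDerivAt_const z P)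
      (hX.hasDerivAt z hz)) (hasDerivAt_const z Q')).congr_deriv ?_
    rw [Matrix.zero_mul, zero_add, Matrix.mul_zero, add_zero, Matrix.mul_smul, Matrix.smul_mul,
      riccati_conj hPQ hPQ']
  norm_le z hz := norm_matrix_mul_le_of_le (norm_matrix_mul_le_of_le hP (hX.norm_le z hz)) hQ'
  exists_tendsto := by
    obtain ⟨X₀, hX₀⟩ := hX.exists_tendsto
    have hcont : Continuous fun Y : Matrix m n ℂ => P * Y * Q' := by fun_prop
    exact ⟨P * X₀ * Q', (hcont.tendsto X₀).comp hX₀⟩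

lemma IsRiccatiData.conj {U : Set ℂ} {ε η k M : ℝ} {A P Q : Matrix m m ℂ} {B P' Q' : Matrix n n ℂ}
    {μ : m → ℂ} {ν : n → ℂ} {E : ℂ → Matrix m m ℂ} {F : ℂ → Matrix n n ℂ} {R : ℂ → Matrix n m ℂ}
    {S : ℂ → Matrix m n ℂ} (hdata : IsRiccatiData U ε ε M E F R S)
    (hA : IsNearDiagonalization k η A P Q μ) (hB : IsNearDiagonalization k η B P' Q' ν) :
    IsRiccatiData U (η + k * ε * k) (k * ε * k) (k * M * k)
      (fun z => Q * (A + E z) * P - Matrix.diagonal μ)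
      (fun z => Q' * (B + F z) * P' - Matrix.diagonal ν)
      (fun z => Q' * R z * P) (fun z => Q * S z * P') where
  differentiableOn_left :=
    (differentiableOn_conj (hdata.differentiableOn_left.const_add A) Q P).sub_const _
  differentiableOn_right :=
    (differentiableOn_conj (hdata.differentiableOn_right.const_add B) Q' P').sub_const _
  differentiableOn_quadratic := differentiableOn_conj hdata.differentiableOn_quadratic Q' P
  differentiableOn_constant := differentiableOn_conj hdata.differentiableOn_constant Q P'
  norm_left_le z hz := hA.norm_conj_add_sub_le (hdata.norm_left_le z hz)
  norm_right_le z hz := hB.norm_conj_add_sub_le (hdata.norm_right_le z hz)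
  norm_quadratic_le z hz := norm_matrix_mul_le_of_le
    (norm_matrix_mul_le_of_le hB.norm_inv_le (hdata.norm_quadratic_le z hz)) hA.norm_le
  norm_constant_le z hz := norm_matrix_mul_le_of_le
    (norm_matrix_mul_le_of_le hA.norm_inv_le (hdata.norm_constant_le z hz)) hB.norm_le

variable (m n) in
theorem exists_forall_isSingularRiccatiSolution {C δ : ℝ} (hC : 0 ≤ C) (hδ : 0 < δ) :
    ∃ ε > 0, ∃ K > 0, ∃ σ ∈ Ioc (0 : ℝ) 1, ∀ r > 0, ∀ h ∈ Ioc 0 ε, ∀ M ∈ Icc 0 ε,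
      ∀ (A : Matrix m m ℂ) (B : Matrix n n ℂ) E F R S, ‖A‖ ≤ C → ‖B‖ ≤ C →
        (∀ μ ∈ spectrum ℂ A, ∀ ν ∈ spectrum ℂ B, δ ≤ ‖μ - ν‖) →
          IsRiccatiData (Metric.ball 0 r) ε ε M E F R S →
            ∃ X, IsSingularRiccatiSolution h (σ * r) (K * M) (fun z => A + E z) (fun z => B + F z)
              R S X := by
  obtain ⟨ε, hε, K, hK, σ, hσ, hdiag⟩ := exists_forall_isSingularRiccatiSolution_diagonal m n hδ
  obtain ⟨k₁, hk₁, hA⟩ := exists_forall_isNearDiagonalization m (half_pos hε) hC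
  obtain ⟨k₂, -, hB⟩ := exists_forall_isNearDiagonalization n (half_pos hε) hC
  set k := max k₁ k₂
  have hk' : 1 ≤ k := hk₁.le.trans (le_max_left _ _)
  obtain ⟨ε', hε', hε'ε, hε'k, hε'1⟩ : ∃ ε' > 0, ε' ≤ ε ∧ k * ε' * k ≤ ε / 2 ∧ k * ε' * k ≤ 1 := by
    refine ⟨min ε 1 / (2 * k ^ 2), by positivity, ?_, ?_, ?_⟩
    · exact (div_le_self (by positivity) (by nlinarith)).trans (min_le_left _ _)
    all_goals
      have hscale : k * (min ε 1 / (2 * k ^ 2)) * k = min ε 1 / 2 := by field_simp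
      linarith [min_le_left ε 1, min_le_right ε 1]
  refine ⟨ε', hε', k * (K * (k * k)) * k, by positivity, σ, hσ,
    fun r hr h hh M hM A B E F R S hAC hBC hsep hdata => ?_⟩
  obtain ⟨P, Q, μ, hμ⟩ := hA A hAC
  obtain ⟨P', Q', ν, hν⟩ := hB B hBC
  have hkM : k * M * k ∈ Icc 0 1 :=
    ⟨by have := hM.1; positivity, le_trans (by gcongr; exact hM.2) hε'1⟩
  obtain ⟨X, hX⟩ := hdiag r hr h ⟨hh.1, hh.2.trans hε'ε⟩ (k * M * k) hkM μ ν _ _ _ _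
    (fun i j => hsep _ (hμ.mem_spectrum i) _ (hν.mem_spectrum j))
    ((hdata.conj (hμ.mono (le_max_left _ _)) (hν.mono (le_max_right _ _))).mono
      (by linarith) (by linarith))
  simp only [add_sub_cancel] at hX
  have hsolution := hX.of_conj (mul_eq_one_comm.1 hμ.mul_eq_one) (mul_eq_one_comm.1 hν.mul_eq_one)
    (hμ.norm_le.trans (le_max_left _ _)) (hν.norm_inv_le.trans (le_max_right _ _))
  have hbound : k * (K * (k * M * k)) * k = k * (K * (k * k)) * k * M := by ring
  exact ⟨_, hbound ▸ hsolution⟩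

end GeneralSingularRiccati

section BlockDiagonalization

variable {m n : Type*}

lemma hasDerivAt_fromBlocks {k l : Type*} [Finite k] [Finite l] {X : ℂ → Matrix m k ℂ}
    {Y : ℂ → Matrix m l ℂ} {Z : ℂ → Matrix n k ℂ} {W : ℂ → Matrix n l ℂ} {X' : Matrix m k ℂ}
    {Y' : Matrix m l ℂ} {Z' : Matrix n k ℂ} {W' : Matrix n l ℂ} {z : ℂ} (hX : HasDerivAt X X' z)
    (hY : HasDerivAt Y Y' z) (hZ : HasDerivAt Z Z' z) (hW : HasDerivAt W W' z) :
    HasDerivAt (fun w => Matrix.fromBlocks (X w) (Y w) (Z w) (W w))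
      (Matrix.fromBlocks X' Y' Z' W') z := by
  rw [hasDerivAt_matrix_iff] at *
  rintro (i | i) (j | j)
  exacts [hX i j, hY i j, hZ i j, hW i j]

lemma differentiableOn_submatrix {k l : Type*} [Finite n] [Finite l] {U : Set ℂ}
    {f : ℂ → Matrix m n ℂ} (hf : DifferentiableOn ℂ f U) (u : k → m) (v : l → n) :
    DifferentiableOn ℂ (fun z => (f z).submatrix u v) U :=
  differentiableOn_matrix_iff.2 fun i j => differentiableOn_matrix_iff.1 hf (u i) (v j)

lemma fromBlocks_sub_add_smul_toBlocks (A X : Matrix m m ℂ) (B Y : Matrix n n ℂ)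
    (Θ : Matrix (m ⊕ n) (m ⊕ n) ℂ) (c : ℂ) :
    Matrix.fromBlocks (X + (A - X + c • Θ.toBlocks₁₁)) (c • Θ.toBlocks₁₂) (c • Θ.toBlocks₂₁)
      (Y + (B - Y + c • Θ.toBlocks₂₂)) = Matrix.fromBlocks A 0 0 B + c • Θ := by
  conv_rhs => rw [← Matrix.fromBlocks_toBlocks Θ, Matrix.fromBlocks_smul, Matrix.fromBlocks_add]
  simp only [zero_add, ← add_assoc, add_sub_cancel]

variable [Fintype m] [Fintype n]

lemma isUnit_and_norm_le_two_of_norm_sub_one_le_half [DecidableEq m] {T : Matrix m m ℂ}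
    (hT : ‖T - 1‖ ≤ 1 / 2) : IsUnit T ∧ ‖T‖ ≤ 2 ∧ ‖T⁻¹‖ ≤ 2 := by
  have : CompleteSpace (Matrix m m ℂ) := FiniteDimensional.complete ℂ _
  have hunit : IsUnit T := by
    simpa only [sub_sub_cancel] using
      isUnit_one_sub_of_norm_lt_one (x := 1 - T) (by rw [norm_sub_rev]; linarith)
  have hinv : T * T⁻¹ = 1 := Matrix.mul_nonsing_inv T ((Matrix.isUnit_iff_isUnit_det T).1 hunit)
  have hinv_eq : T⁻¹ = 1 - (T - 1) * T⁻¹ := by rw [sub_mul, hinv, one_mul, sub_sub_cancel]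
  have hinv_le : ‖T⁻¹‖ ≤ 1 + 1 / 2 * ‖T⁻¹‖ :=
    calc ‖T⁻¹‖ = ‖1 - (T - 1) * T⁻¹‖ := by rw [← hinv_eq]
      _ ≤ ‖(1 : Matrix m m ℂ)‖ + ‖(T - 1) * T⁻¹‖ := norm_sub_le _ _
      _ ≤ 1 + 1 / 2 * ‖T⁻¹‖ :=
        add_le_add norm_matrix_one_le (norm_matrix_mul_le_of_le hT le_rfl)
  have hle := norm_le_norm_add_norm_sub' T 1
  exact ⟨hunit, by linarith [norm_matrix_one_le (m := m)], by linarith⟩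

lemma IsSingularRiccatiSolution.mono {h ρ ρ' b b' : ℝ} {A : ℂ → Matrix m m ℂ}
    {B : ℂ → Matrix n n ℂ} {R : ℂ → Matrix n m ℂ} {S X : ℂ → Matrix m n ℂ}
    (hX : IsSingularRiccatiSolution h ρ b A B R S X) (hρ : ρ' ≤ ρ) (hb : b ≤ b') :
    IsSingularRiccatiSolution h ρ' b' A B R S X := by
  have hsub : SlitBall ρ' ⊆ SlitBall ρ := fun z hz => ⟨hz.1.trans_le hρ, hz.2⟩
  exact ⟨fun z hz => hX.hasDerivAt z (hsub hz), fun z hz => (hX.norm_le z (hsub hz)).trans hb,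
    hX.exists_tendsto.imp fun _ h => h.mono_left (nhdsWithin_mono 0 hsub)⟩

lemma IsRiccatiData.swap {U : Set ℂ} {e M : ℝ} {E : ℂ → Matrix m m ℂ} {F : ℂ → Matrix n n ℂ}
    {R : ℂ → Matrix n m ℂ} {S : ℂ → Matrix m n ℂ} (hdata : IsRiccatiData U e M M E F R S) :
    IsRiccatiData U e M M F E S R where
  differentiableOn_left := hdata.differentiableOn_right
  differentiableOn_right := hdata.differentiableOn_left
  differentiableOn_quadratic := hdata.differentiableOn_constant
  differentiableOn_constant := hdata.differentiableOn_quadratic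
  norm_left_le := hdata.norm_right_le
  norm_right_le := hdata.norm_left_le
  norm_quadratic_le := hdata.norm_constant_le
  norm_constant_le := hdata.norm_quadratic_le

lemma norm_sub_apply_zero_le_of_mem_ball {E : Type*} [NormedAddCommGroup E] [NormedSpace ℂ E]
    {f : ℂ → E} {r r' C : ℝ} {z : ℂ} (hr : r' ≤ r) (hf : DifferentiableOn ℂ f (Metric.ball 0 r))
    (hC : ∀ w ∈ Metric.ball 0 r, ‖f w‖ ≤ C) (hz : z ∈ Metric.ball 0 r') :
    ‖f z - f 0‖ ≤ 2 * C / r * r' := by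
  have hz' : z ∈ Metric.ball 0 r := Metric.ball_subset_ball hr hz
  have hr₀ : 0 < r := Metric.pos_of_mem_ball hz'
  have hC₀ : 0 ≤ C := (norm_nonneg _).trans (hC z hz')
  refine (norm_sub_apply_zero_le hf hC hz').trans ?_
  gcongr
  exact (mem_ball_zero_iff.1 hz).le

lemma norm_smul_submatrix_le {k l : Type*} [Fintype k] [Fintype l] {X : Matrix m n ℂ} {C : ℝ}
    (hX : ‖X‖ ≤ C) (c : ℂ) (u : k → m) (v : l ↪ n) : ‖c • X.submatrix u v‖ ≤ ‖c‖ * C := by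
  rw [norm_smul]
  exact mul_le_mul_of_nonneg_left ((norm_submatrix_le X u v).trans hX) (norm_nonneg c)

lemma isRiccatiData_sub_apply_zero_add_smul {r r' C ε : ℝ} {A₁ : ℂ → Matrix m m ℂ}
    {A₂ : ℂ → Matrix n n ℂ} {Θ : ℂ → Matrix (m ⊕ n) (m ⊕ n) ℂ} {c : ℂ} (hr : r' ≤ r)
    (hA₁ : DifferentiableOn ℂ A₁ (Metric.ball 0 r)) (hA₂ : DifferentiableOn ℂ A₂ (Metric.ball 0 r))
    (hΘ : DifferentiableOn ℂ Θ (Metric.ball 0 r))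
    (hC : ∀ z ∈ Metric.ball (0 : ℂ) r, ‖A₁ z‖ ≤ C ∧ ‖A₂ z‖ ≤ C ∧ ‖Θ z‖ ≤ C)
    (hε : 2 * C / r * r' + ‖c‖ * C ≤ ε) :
    IsRiccatiData (Metric.ball 0 r') ε (‖c‖ * C) (‖c‖ * C)
      (fun z => A₁ z - A₁ 0 + c • (Θ z).toBlocks₁₁) (fun z => A₂ z - A₂ 0 + c • (Θ z).toBlocks₂₂)
      (fun z => c • (Θ z).toBlocks₂₁) (fun z => c • (Θ z).toBlocks₁₂) := by
  have hsub : Metric.ball (0 : ℂ) r' ⊆ Metric.ball 0 r := Metric.ball_subset_ball hr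
  have hΘ' := hΘ.mono hsub
  have hΘC : ∀ z ∈ Metric.ball (0 : ℂ) r', ‖Θ z‖ ≤ C := fun z hz => (hC z (hsub hz)).2.2
  refine ⟨?_, ?_, ?_, ?_, fun z hz => ?_, fun z hz => ?_, fun z hz => ?_, fun z hz => ?_⟩
  · exact ((hA₁.mono hsub).sub_const _).add ((differentiableOn_submatrix hΘ' _ _).const_smul c)
  · exact ((hA₂.mono hsub).sub_const _).add ((differentiableOn_submatrix hΘ' _ _).const_smul c)
  · exact (differentiableOn_submatrix hΘ' _ _).const_smul c
  · exact (differentiableOn_submatrix hΘ' _ _).const_smul c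
  · exact (norm_add_le_of_le
      (norm_sub_apply_zero_le_of_mem_ball hr hA₁ (fun w hw => (hC w hw).1) hz)
      (norm_smul_submatrix_le (hΘC z hz) c Sum.inl Function.Embedding.inl)).trans hε
  · exact (norm_add_le_of_le
      (norm_sub_apply_zero_le_of_mem_ball hr hA₂ (fun w hw => (hC w hw).2.1) hz)
      (norm_smul_submatrix_le (hΘC z hz) c Sum.inr Function.Embedding.inr)).trans hε
  · exact norm_smul_submatrix_le (hΘC z hz) c Sum.inr Function.Embedding.inl
  · exact norm_smul_submatrix_le (hΘC z hz) c Sum.inl Function.Embedding.inr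

variable [DecidableEq m] [DecidableEq n]

/-- A block-diagonalizing conjugator `T`, with derivative `T'`, of the system `z h W' = 𝒜 W` on the
slit ball of radius `ρ`: the substitution `W = T Z` leads to `z h Z' = blockdiag(D₁, D₂) Z`, which
is expressed by `z h T' = 𝒜 T - T blockdiag(D₁, D₂)`. It is within `b` of the identity and has a
limit at the singular point. -/
structure IsBlockDiagonalizer (h ρ b : ℝ) (𝒜 T T' : ℂ → Matrix (m ⊕ n) (m ⊕ n) ℂ)
    (D₁ : ℂ → Matrix m m ℂ) (D₂ : ℂ → Matrix n n ℂ) : Prop where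
  hasDerivAt : ∀ z ∈ SlitBall ρ, HasDerivAt T (T' z) z
  smul_eq : ∀ z ∈ SlitBall ρ,
    (z * (h : ℂ)) • T' z = 𝒜 z * T z - T z * Matrix.fromBlocks (D₁ z) 0 0 (D₂ z)
  norm_sub_one_le : ∀ z ∈ SlitBall ρ, ‖T z - 1‖ ≤ b
  exists_tendsto : ∃ T₀, Tendsto T (𝓝[SlitBall ρ] 0) (𝓝 T₀)

lemma fromBlocks_zero_riccati_riccati_zero (A : Matrix m m ℂ) (B : Matrix n n ℂ)
    (R Y : Matrix n m ℂ) (S X : Matrix m n ℂ) :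
    Matrix.fromBlocks 0 (riccati A B R S X) (riccati B A S R Y) 0 =
      Matrix.fromBlocks A S R B * Matrix.fromBlocks 1 X Y 1 -
        Matrix.fromBlocks 1 X Y 1 * Matrix.fromBlocks (A + S * Y) 0 0 (B + R * X) := by
  rw [eq_sub_iff_add_eq, Matrix.fromBlocks_multiply, Matrix.fromBlocks_multiply,
    Matrix.fromBlocks_add]
  congr 1
  all_goals
    simp only [riccati, Matrix.mul_one, Matrix.one_mul, Matrix.mul_zero, Matrix.mul_add,
      Matrix.mul_assoc]
    abel

lemma isBlockDiagonalizer_fromBlocks_of_riccati {h ρ b : ℝ} (hh : h ≠ 0) {A : ℂ → Matrix m m ℂ}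
    {B : ℂ → Matrix n n ℂ} {R Y : ℂ → Matrix n m ℂ} {S X : ℂ → Matrix m n ℂ}
    (hX : IsSingularRiccatiSolution h ρ b A B R S X)
    (hY : IsSingularRiccatiSolution h ρ b B A S R Y) :
    IsBlockDiagonalizer h ρ b (fun z => Matrix.fromBlocks (A z) (S z) (R z) (B z))
      (fun z => Matrix.fromBlocks 1 (X z) (Y z) 1)
      (fun z => (z * h : ℂ)⁻¹ • Matrix.fromBlocks 0 (riccati (A z) (B z) (R z) (S z) (X z))
        (riccati (B z) (A z) (S z) (R z) (Y z)) 0)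
      (fun z => A z + S z * Y z) (fun z => B z + R z * X z) where
  hasDerivAt z hz := by
    simpa only [Matrix.fromBlocks_smul, smul_zero] using
      hasDerivAt_fromBlocks (hasDerivAt_const z (1 : Matrix m m ℂ)) (hX.hasDerivAt z hz)
        (hY.hasDerivAt z hz) (hasDerivAt_const z (1 : Matrix n n ℂ))
  smul_eq z hz := by
    have hzh : (z * h : ℂ) ≠ 0 :=
      mul_ne_zero (Complex.slitPlane_ne_zero hz.2.symm) (Complex.ofReal_ne_zero.2 hh)
    rw [smul_inv_smul₀ hzh, fromBlocks_zero_riccati_riccati_zero]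
  norm_sub_one_le z hz := by
    have hsub : Matrix.fromBlocks (1 : Matrix m m ℂ) (X z) (Y z) 1 - 1 =
        Matrix.fromBlocks 0 (X z) (Y z) 0 := by
      rw [sub_eq_iff_eq_add, ← Matrix.fromBlocks_one, Matrix.fromBlocks_add]
      simp only [zero_add, add_zero]
    have hXb := hX.norm_le z hz
    rw [hsub]
    exact norm_fromBlocks_le ((norm_nonneg _).trans hXb) (by rwa [norm_zero, zero_add])
      (by rw [norm_zero, add_zero]; exact hY.norm_le z hz)
  exists_tendsto := by
    obtain ⟨X₀, hX₀⟩ := hX.exists_tendsto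
    obtain ⟨Y₀, hY₀⟩ := hY.exists_tendsto
    have hcont : Continuous fun x : Matrix m n ℂ × Matrix n m ℂ =>
        Matrix.fromBlocks (1 : Matrix m m ℂ) x.1 x.2 (1 : Matrix n n ℂ) :=
      continuous_const.matrix_fromBlocks continuous_fst continuous_snd continuous_const
    exact ⟨_, (hcont.tendsto (X₀, Y₀)).comp (hX₀.prodMk_nhds hY₀)⟩

variable (m n) in
theorem exists_forall_isBlockDiagonalizer {C δ : ℝ} (hC : 0 ≤ C) (hδ : 0 < δ) :
    ∃ ε > 0, ∃ K > 0, ∃ σ ∈ Ioc (0 : ℝ) 1, ∀ r > 0, ∀ h ∈ Ioc 0 ε, ∀ M ∈ Icc 0 ε,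
      ∀ (A : Matrix m m ℂ) (B : Matrix n n ℂ) E F R S, ‖A‖ ≤ C → ‖B‖ ≤ C →
        (∀ μ ∈ spectrum ℂ A, ∀ ν ∈ spectrum ℂ B, δ ≤ ‖μ - ν‖) →
          IsRiccatiData (Metric.ball 0 r) ε M M E F R S →
            ∃ T T' D₁ D₂, IsBlockDiagonalizer h (σ * r) (K * M)
              (fun z => Matrix.fromBlocks (A + E z) (S z) (R z) (B + F z)) T T' D₁ D₂ := by
  obtain ⟨ε₁, hε₁, K₁, hK₁, σ₁, hσ₁, hupper⟩ := exists_forall_isSingularRiccatiSolution m n hC hδ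
  obtain ⟨ε₂, hε₂, K₂, -, σ₂, hσ₂, hlower⟩ := exists_forall_isSingularRiccatiSolution n m hC hδ
  refine ⟨min ε₁ ε₂, lt_min hε₁ hε₂, max K₁ K₂, lt_max_of_lt_left hK₁, min σ₁ σ₂,
    ⟨lt_min hσ₁.1 hσ₂.1, (min_le_left _ _).trans hσ₁.2⟩,
    fun r hr h ⟨hh, hhε⟩ M ⟨hM, hMε⟩ A B E F R S hA hB hsep hdata => ?_⟩
  rw [le_min_iff] at hhε hMε
  obtain ⟨X, hX⟩ := hupper r hr h ⟨hh, hhε.1⟩ M ⟨hM, hMε.1⟩ A B E F R S hA hB hsep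
    (hdata.mono (min_le_left _ _) hMε.1)
  obtain ⟨Y, hY⟩ := hlower r hr h ⟨hh, hhε.2⟩ M ⟨hM, hMε.2⟩ B A F E S R hB hA
    (fun ν hν μ hμ => norm_sub_rev μ ν ▸ hsep μ hμ ν hν)
    (hdata.swap.mono (min_le_right _ _) hMε.2)
  exact ⟨_, _, _, _, isBlockDiagonalizer_fromBlocks_of_riccati hh.ne'
    (hX.mono (by gcongr; exact min_le_left _ _) (by gcongr; exact le_max_left _ _))
    (hY.mono (by gcongr; exact min_le_right _ _) (by gcongr; exact le_max_right _ _))⟩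

variable (m n) in
theorem exists_forall_isBlockDiagonalizer_add_smul {C δ r : ℝ} (hC : 0 < C) (hδ : 0 < δ)
    (hr : 0 < r) :
    ∃ ε > 0, ∃ K > 0, K * ε ≤ 1 / 2 ∧ ∃ ρ ∈ Ioc 0 r, ∀ h ∈ Ioc 0 ε, ∀ c : ℂ, ‖c‖ ≤ ε →
      ∀ (A₁ : ℂ → Matrix m m ℂ) (A₂ : ℂ → Matrix n n ℂ) (Θ : ℂ → Matrix (m ⊕ n) (m ⊕ n) ℂ),
        DifferentiableOn ℂ A₁ (Metric.ball 0 r) → DifferentiableOn ℂ A₂ (Metric.ball 0 r) →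
        DifferentiableOn ℂ Θ (Metric.ball 0 r) →
        (∀ z ∈ Metric.ball (0 : ℂ) r, ‖A₁ z‖ ≤ C ∧ ‖A₂ z‖ ≤ C ∧ ‖Θ z‖ ≤ C) →
        (∀ μ ∈ spectrum ℂ (A₁ 0), ∀ ν ∈ spectrum ℂ (A₂ 0), δ ≤ ‖μ - ν‖) →
          ∃ T T' D₁ D₂, IsBlockDiagonalizer h ρ (K * ‖c‖)
            (fun z => Matrix.fromBlocks (A₁ z) 0 0 (A₂ z) + c • Θ z) T T' D₁ D₂ := by
  obtain ⟨ε₀, hε₀, K, hK, σ, hσ, hdiagonalizer⟩ := exists_forall_isBlockDiagonalizer m n hC.le hδ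
  set ε := min ε₀ (min (ε₀ / (2 * C)) (1 / (2 * (K * C))))
  obtain ⟨hεε₀, hεC, hεK⟩ : ε ≤ ε₀ ∧ ε * C ≤ ε₀ / 2 ∧ K * C * ε ≤ 1 / 2 := by
    refine ⟨min_le_left _ _, ?_, ?_⟩
    · rw [← le_div_iff₀ hC, div_div]
      exact (min_le_right _ _).trans (min_le_left _ _)
    · rw [← le_div_iff₀' (by positivity), div_div]
      exact (min_le_right _ _).trans (min_le_right _ _)
  set r' := min r (ε₀ * r / (4 * C))
  have hr'r : r' ≤ r := min_le_left _ _
  have hr' : 0 < r' := by positivity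
  have hr'C : 2 * C / r * r' ≤ ε₀ / 2 :=
    calc 2 * C / r * r' ≤ 2 * C / r * (ε₀ * r / (4 * C)) := by gcongr; exact min_le_right _ _
      _ = ε₀ / 2 := by field_simp; norm_num
  have hρ : σ * r' ≤ r := (mul_le_of_le_one_left hr'.le hσ.2).trans hr'r
  refine ⟨ε, by positivity, K * C, by positivity, hεK, σ * r', ⟨mul_pos hσ.1 hr', hρ⟩,
    fun h hh c hc A₁ A₂ Θ hA₁ hA₂ hΘ hbound hsep => ?_⟩
  have hcC : ‖c‖ * C ≤ ε₀ / 2 := (mul_le_mul_of_nonneg_right hc hC.le).trans hεC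
  have hbound₀ := hbound 0 (Metric.mem_ball_self hr)
  have hdata := isRiccatiData_sub_apply_zero_add_smul (c := c) hr'r hA₁ hA₂ hΘ hbound
    (add_halves ε₀ ▸ add_le_add hr'C hcC)
  obtain ⟨T, T', D₁, D₂, hT⟩ := hdiagonalizer r' hr' h ⟨hh.1, hh.2.trans hεε₀⟩ (‖c‖ * C)
    ⟨by positivity, by linarith⟩ (A₁ 0) (A₂ 0) _ _ _ _ hbound₀.1 hbound₀.2.1 hsep hdata
  simp only [fromBlocks_sub_add_smul_toBlocks] at hT
  exact ⟨T, T', D₁, D₂, by rwa [mul_assoc, mul_comm C]⟩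

end BlockDiagonalization

theorem exact_block_diagonalization_at_singular_point_general {m n : Type*} [Fintype m] [Fintype n]
    [DecidableEq m] [DecidableEq n] {p : ℕ} (hp : 1 ≤ p) {h₀ r : ℝ} (hh₀ : 0 < h₀) (hr : 0 < r)
    (A₁ : ℂ → ℝ → Matrix m m ℂ) (A₂ : ℂ → ℝ → Matrix n n ℂ)
    (Θ : ℂ → ℝ → Matrix (m ⊕ n) (m ⊕ n) ℂ)
    (hanal : ∀ h ∈ Ioc (0 : ℝ) h₀, DifferentiableOn ℂ (fun z => A₁ z h) (Metric.ball 0 r) ∧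
      DifferentiableOn ℂ (fun z => A₂ z h) (Metric.ball 0 r) ∧
      DifferentiableOn ℂ (fun z => Θ z h) (Metric.ball 0 r))
    (hbd : ∃ C : ℝ, ∀ z ∈ Metric.ball (0 : ℂ) r, ∀ h ∈ Ioc (0 : ℝ) h₀,
      ‖A₁ z h‖ ≤ C ∧ ‖A₂ z h‖ ≤ C ∧ ‖Θ z h‖ ≤ C)
    (hsep : ∃ δ : ℝ, 0 < δ ∧ ∀ h ∈ Ioc (0 : ℝ) h₀,
      ∀ μ₁ ∈ spectrum ℂ (A₁ 0 h), ∀ μ₂ ∈ spectrum ℂ (A₂ 0 h), δ ≤ ‖μ₁ - μ₂‖) :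
    ∃ ρ ∈ Ioc (0 : ℝ) r, ∃ h₁ ∈ Ioc (0 : ℝ) h₀,
    ∃ (T T' : ℂ → ℝ → Matrix (m ⊕ n) (m ⊕ n) ℂ)
      (D₁ : ℂ → ℝ → Matrix m m ℂ) (D₂ : ℂ → ℝ → Matrix n n ℂ) (C' : ℝ), 0 < C' ∧
      (∀ h ∈ Ioc (0 : ℝ) h₁, DifferentiableOn ℂ (fun z => T z h) (SlitBall ρ)) ∧
      (∀ h ∈ Ioc (0 : ℝ) h₁, ∃ T₀ : Matrix (m ⊕ n) (m ⊕ n) ℂ,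
        Tendsto (fun z => T z h) (𝓝[SlitBall ρ] 0) (𝓝 T₀)) ∧
      (∀ h ∈ Ioc (0 : ℝ) h₁, ∀ z ∈ SlitBall ρ,
        IsUnit (T z h) ∧ ‖T z h‖ ≤ C' ∧ ‖(T z h)⁻¹‖ ≤ C' ∧ ‖T z h - 1‖ ≤ C' * h ^ p) ∧
      (∀ h ∈ Ioc (0 : ℝ) h₁, ∀ z ∈ SlitBall ρ,
        HasDerivAt (fun w => T w h) (T' z h) z ∧
        (z * (h : ℂ)) • T' z h
          = (Matrix.fromBlocks (A₁ z h) 0 0 (A₂ z h) + (h : ℂ) ^ p • Θ z h) * T z h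
            - T z h * Matrix.fromBlocks (D₁ z h) 0 0 (D₂ z h)) := by
  obtain ⟨C, hC⟩ := hbd
  obtain ⟨δ, hδ, hsep⟩ := hsep
  obtain ⟨ε, hε, K, hK, hKε, ρ, hρ, hdiagonalizer⟩ := exists_forall_isBlockDiagonalizer_add_smul m n
    (lt_max_of_lt_right one_pos : 0 < max C 1) hδ hr
  have hpow : ∀ h ∈ Ioc 0 (min h₀ (min ε 1)), ‖(h : ℂ) ^ p‖ = h ^ p ∧ h ^ p ≤ ε := fun h hh => by
    have hh' := le_min_iff.1 (le_min_iff.1 hh.2).2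
    rw [norm_pow, Complex.norm_of_nonneg hh.1.le]
    exact ⟨rfl, (pow_le_of_le_one hh.1.le hh'.2 (Nat.one_le_iff_ne_zero.1 hp)).trans hh'.1⟩
  choose! T T' D₁ D₂ hT using fun h (hh : h ∈ Ioc 0 (min h₀ (min ε 1))) =>
    have hh₀' : h ∈ Ioc 0 h₀ := ⟨hh.1, (le_min_iff.1 hh.2).1⟩
    have ⟨hd₁, hd₂, hdΘ⟩ := hanal h hh₀'
    hdiagonalizer h ⟨hh.1, (le_min_iff.1 (le_min_iff.1 hh.2).2).1⟩ (h ^ p)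
      ((hpow h hh).1.trans_le (hpow h hh).2) (A₁ · h) (A₂ · h) (Θ · h) hd₁ hd₂ hdΘ
      (fun z hz => have ⟨h₁, h₂, hΘ⟩ := hC z hz h hh₀'
        ⟨le_max_of_le_left h₁, le_max_of_le_left h₂, le_max_of_le_left hΘ⟩) (hsep h hh₀')
  refine ⟨ρ, hρ, min h₀ (min ε 1), ⟨by positivity, min_le_left _ _⟩, fun z h => T h z,
    fun z h => T' h z, fun z h => D₁ h z, fun z h => D₂ h z, max K 2, by positivity,
    fun h hh z hz => ((hT h hh).hasDerivAt z hz).differentiableAt.differentiableWithinAt,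
    fun h hh => (hT h hh).exists_tendsto, fun h hh z hz => ?_,
    fun h hh z hz => ⟨(hT h hh).hasDerivAt z hz, (hT h hh).smul_eq z hz⟩⟩
  have hclose := (hT h hh).norm_sub_one_le z hz
  rw [(hpow h hh).1] at hclose
  obtain ⟨hunit, hle, hinv⟩ := isUnit_and_norm_le_two_of_norm_sub_one_le_half
    (hclose.trans ((mul_le_mul_of_nonneg_left (hpow h hh).2 hK.le).trans hKε))
  exact ⟨hunit, le_max_of_le_right hle, le_max_of_le_right hinv, hclose.trans
    (mul_le_mul_of_nonneg_right (le_max_left _ _) (pow_nonneg hh.1.le p))⟩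

/-- **Exact block-diagonalization at a regular-singular point** (Corollary 1.6).
Consider the singular ODE `z h W' = blockdiag(A₁₁,A₂₂)(z,h) W + h^p Θ(z,h) W`, `p ≥ 1`, with
`A₁₁, A₂₂, Θ` analytic in `z` and continuous in `h` on `B(0,r) × (0,h₀]`, and with `A₁₁(0)`
and `A₂₂(0)` having no eigenvalues in common (uniformly in `h`).  Then there is a uniformly
bounded block-diagonalizing conjugator `T = Id + O(h^p)`, with uniformly bounded inverse,
analytic in `z` on a slit ball around `z = 0` with branch cut along the negative real axis
and continuous at `z = 0`; i.e. `W = T Z` converts the system to an exactly block-diagonal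
system `z h Z' = blockdiag(D₁₁,D₂₂) Z`, encoded by `z h T' = 𝒜 T − T D` on the slit ball. -/
theorem exact_block_diagonalization_at_singular_point
    (n₁ n₂ : ℕ) (p : ℕ) (hp : 1 ≤ p) (h₀ r : ℝ) (hh₀ : 0 < h₀) (hr : 0 < r)
    (A₁ : ℂ → ℝ → Matrix (Fin n₁) (Fin n₁) ℂ) (A₂ : ℂ → ℝ → Matrix (Fin n₂) (Fin n₂) ℂ)
    (Θ : ℂ → ℝ → Matrix (Fin n₁ ⊕ Fin n₂) (Fin n₁ ⊕ Fin n₂) ℂ)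
    -- analyticity in z and continuity in h on B(0,r) × (0,h₀], with uniform bounds
    (hanal : ∀ h ∈ Ioc (0:ℝ) h₀, DifferentiableOn ℂ (fun z => A₁ z h) (Metric.ball 0 r) ∧
      DifferentiableOn ℂ (fun z => A₂ z h) (Metric.ball 0 r) ∧
      DifferentiableOn ℂ (fun z => Θ z h) (Metric.ball 0 r))
    (hcont : ∀ z ∈ Metric.ball (0:ℂ) r,
      ContinuousOn (fun h => (A₁ z h, A₂ z h, Θ z h)) (Ioc 0 h₀))
    (hbd : ∃ C : ℝ, ∀ z ∈ Metric.ball (0:ℂ) r, ∀ h ∈ Ioc (0:ℝ) h₀,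
      ‖A₁ z h‖ ≤ C ∧ ‖A₂ z h‖ ≤ C ∧ ‖Θ z h‖ ≤ C)
    -- A₁₁(0) and A₂₂(0) have no eigenvalues in common, uniformly in h
    (hsep : ∃ δ : ℝ, 0 < δ ∧ ∀ h ∈ Ioc (0:ℝ) h₀,
      ∀ μ₁ ∈ spectrum ℂ (A₁ 0 h), ∀ μ₂ ∈ spectrum ℂ (A₂ 0 h), δ ≤ ‖μ₁ - μ₂‖) :
    ∃ ρ ∈ Ioc (0:ℝ) r, ∃ h₁ ∈ Ioc (0:ℝ) h₀,
    ∃ (T T' : ℂ → ℝ → Matrix (Fin n₁ ⊕ Fin n₂) (Fin n₁ ⊕ Fin n₂) ℂ)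
      (D₁ : ℂ → ℝ → Matrix (Fin n₁) (Fin n₁) ℂ) (D₂ : ℂ → ℝ → Matrix (Fin n₂) (Fin n₂) ℂ)
      (C' : ℝ), 0 < C' ∧
      -- T is analytic on the slit ball and continuous at z = 0
      (∀ h ∈ Ioc (0:ℝ) h₁, DifferentiableOn ℂ (fun z => T z h) (SlitBall ρ)) ∧
      (∀ h ∈ Ioc (0:ℝ) h₁, ∃ T₀ : Matrix (Fin n₁ ⊕ Fin n₂) (Fin n₁ ⊕ Fin n₂) ℂ,
        Filter.Tendsto (fun z => T z h) (nhdsWithin 0 (SlitBall ρ)) (nhds T₀)) ∧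
      -- T = Id + O(h^p), uniformly bounded with uniformly bounded inverse
      (∀ h ∈ Ioc (0:ℝ) h₁, ∀ z ∈ SlitBall ρ,
        IsUnit (T z h) ∧ ‖T z h‖ ≤ C' ∧ ‖(T z h)⁻¹‖ ≤ C' ∧ ‖T z h - 1‖ ≤ C' * h ^ p) ∧
      -- the conjugation identity  z h T' = 𝒜 T − T D  on the slit ball
      (∀ h ∈ Ioc (0:ℝ) h₁, ∀ z ∈ SlitBall ρ,
        HasDerivAt (fun w => T w h) (T' z h) z ∧
        (z * (h : ℂ)) • T' z h
          = (Matrix.fromBlocks (A₁ z h) 0 0 (A₂ z h) + (h : ℂ) ^ p • Θ z h) * T z h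
            - T z h * Matrix.fromBlocks (D₁ z h) 0 0 (D₂ z h)) :=
  exact_block_diagonalization_at_singular_point_general hp hh₀ hr A₁ A₂ Θ hanal hbd hsep
end

section
/- Let ϑ > 0 and define the C^∞ function θ(x) = e^{−x^{−ϑ}} for x > 0 and θ(x) = 0 for x ≤ 0. Then for every L > 0, the 2×2 triangular semiclassical system h W' = [[x+i, h^p θ(x)],[0, −(x+i)]] W on [−L,L], p ≥ 1, possesses no coordinate change T with T, T^{-1} uniformly bounded in C¹ as h → 0⁺ that converts it to a diagonal system h Z' = D Z. -/
open Set

attribute [local instance] Matrix.linftyOpNormedAddCommGroup Matrix.linftyOpNormedRing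
  Matrix.linftyOpNormedAlgebra Matrix.linftyOpNormedSpace

/-- A uniformly-bounded-in-`C¹` diagonalizing coordinate change for the semiclassical system
`h W' = 𝒜(x,h) W` on `[−L,L] × (0,h₀]`: `T, T', T⁻¹, (T⁻¹)'` are bounded uniformly in
`(x,h)`, `D` is diagonal, and `h T' = 𝒜 T − T D`, i.e. `W = T Z` converts the system to the
diagonal system `h Z' = D Z`. -/
def IsUniformC1Diagonalizer (L h₀ : ℝ) (𝒜 : ℝ → ℝ → Matrix (Fin 2) (Fin 2) ℂ) : Prop :=
  ∃ (T T' D : ℝ → ℝ → Matrix (Fin 2) (Fin 2) ℂ) (C : ℝ), 0 < C ∧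
    ∀ h ∈ Ioc (0:ℝ) h₀, ∀ x ∈ Icc (-L) L,
      HasDerivAt (fun y => T y h) (T' x h) x ∧
      (∀ i j : Fin 2, i ≠ j → D x h i j = 0) ∧
      IsUnit (T x h) ∧
      ‖T x h‖ ≤ C ∧ ‖(T x h)⁻¹‖ ≤ C ∧ ‖T' x h‖ ≤ C ∧
      ‖deriv (fun y => (T y h)⁻¹) x‖ ≤ C ∧
      h • T' x h = 𝒜 x h * T x h - T x h * D x h

/-!
Let `r` be the ratio of the two entries of a column of `T`. Then `h r' = 2(x + i) r + h^p θ`.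
Eliminating `θ` between the two columns shows that the product of the two bottom entries of `T` is
`O(h)`, whereas invertibility keeps the larger one away from `0`; by connectedness of `[-L, L]` the
same column wins everywhere, so for that column `r` is bounded uniformly in `h`.

Put `w(x) = x² + 2ix` and `t = 1/h`. Integrating `(e^{-tw} r)'` over `[-L, L]` bounds
`∫ e^{-tw} θ` by a power of `t` times `e^{-tL²}`. As `θ` vanishes on the left, for `0 < δ < L` the
entire function `F(z) = ∫₀^δ e^{z(w(δ) - w(y))} θ(y) dy` is therefore bounded on the positive real
axis. It has exponential type and is bounded on a wedge of opening greater than `π/2` that contains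
the second quadrant, so Phragmén–Lindelöf in the two remaining sectors bounds it on the whole plane,
and by Liouville it is constant. Since `F(-s) → 0` as `s → +∞`, `F = 0`, and `F(0) = 0` says that
`∫₀^δ θ = 0` for every `δ`: thus `θ` would vanish almost everywhere on `[0, L]`.
-/

section ExponentialTransform

open MeasureTheory Filter Topology

variable {α : Type*} [MeasurableSpace α] {μ : Measure α} {φ f : α → ℂ} {B : ℝ}

/-- The exponential transform `z ↦ ∫ e^{zφ} f dμ` of `f` with phase `φ`. For a bounded phase and an
integrable `f` it is an entire function of exponential type. -/
noncomputable def expTransform (μ : Measure α) (φ f : α → ℂ) (z : ℂ) : ℂ :=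
  ∫ a, Complex.exp (z * φ a) * f a ∂μ

theorem norm_cexp_mul_mul_le {z w u : ℂ} {c : ℝ} (h : (z * w).re ≤ c) :
    ‖Complex.exp (z * w) * u‖ ≤ Real.exp c * ‖u‖ := by
  rw [norm_mul, Complex.norm_exp]
  gcongr

theorem norm_expTransform_le (hf : Integrable f μ) {z : ℂ} {c : ℝ}
    (h : ∀ᵐ a ∂μ, (z * φ a).re ≤ c) :
    ‖expTransform μ φ f z‖ ≤ Real.exp c * ∫ a, ‖f a‖ ∂μ := by
  rw [← integral_const_mul]
  exact norm_integral_le_of_norm_le (hf.norm.const_mul _)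
    (h.mono fun a ha ↦ norm_cexp_mul_mul_le ha)

theorem re_mul_le_of_norm_le {z w : ℂ} (h : ‖w‖ ≤ B) : (z * w).re ≤ B * ‖z‖ :=
  calc (z * w).re ≤ ‖z * w‖ := Complex.re_le_norm _
    _ = ‖w‖ * ‖z‖ := by rw [norm_mul, mul_comm]
    _ ≤ B * ‖z‖ := by gcongr

theorem norm_expTransform_le_exp_mul_norm (hf : Integrable f μ) (hB : ∀ᵐ a ∂μ, ‖φ a‖ ≤ B) (z : ℂ) :
    ‖expTransform μ φ f z‖ ≤ Real.exp (B * ‖z‖) * ∫ a, ‖f a‖ ∂μ :=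
  norm_expTransform_le hf (hB.mono fun _ ha ↦ re_mul_le_of_norm_le ha)

theorem differentiable_expTransform (hφ : AEStronglyMeasurable φ μ) (hf : Integrable f μ)
    (hB : ∀ᵐ a ∂μ, ‖φ a‖ ≤ B) : Differentiable ℂ (expTransform μ φ f) := by
  intro z₀
  have hexp (z : ℂ) : AEStronglyMeasurable (fun a ↦ Complex.exp (z * φ a)) μ :=
    Complex.continuous_exp.comp_aestronglyMeasurable (hφ.const_mul z)
  have hφf : Integrable (fun a ↦ φ a * f a) μ := hf.bdd_mul hφ hB
  have hbound {z : ℂ} (hz : z ∈ Metric.ball z₀ 1) {a : α} (ha : ‖φ a‖ ≤ B) :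
      (z * φ a).re ≤ B * (‖z₀‖ + 1) := by
    have hB0 : 0 ≤ B := (norm_nonneg _).trans ha
    have hz_norm : ‖z‖ ≤ ‖z₀‖ + 1 := by
      linarith [norm_le_norm_add_norm_sub' z z₀, mem_ball_iff_norm.1 hz]
    exact (re_mul_le_of_norm_le ha).trans (by gcongr)
  refine (hasDerivAt_integral_of_dominated_loc_of_deriv_le
    (F' := fun z a ↦ Complex.exp (z * φ a) * (φ a * f a))
    (bound := fun a ↦ Real.exp (B * (‖z₀‖ + 1)) * ‖φ a * f a‖)
    (Metric.ball_mem_nhds z₀ one_pos) (.of_forall fun z ↦ (hexp z).mul hf.1) ?_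
    ((hexp z₀).mul hφf.1) ?_ (hφf.norm.const_mul _) ?_).2.differentiableAt
  · refine hf.bdd_mul (c := Real.exp (B * ‖z₀‖)) (hexp z₀) (hB.mono fun a ha ↦ ?_)
    simpa using norm_cexp_mul_mul_le (u := 1) (re_mul_le_of_norm_le (z := z₀) ha)
  · exact hB.mono fun a ha z hz ↦ norm_cexp_mul_mul_le (hbound hz ha)
  · refine .of_forall fun a z _ ↦ ?_
    simpa [mul_assoc] using (((hasDerivAt_id z).mul_const (φ a)).cexp).mul_const (f a)

theorem tendsto_expTransform_neg_atTop (hφ : AEStronglyMeasurable φ μ) (hf : Integrable f μ)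
    (hpos : ∀ᵐ a ∂μ, 0 < (φ a).re) :
    Tendsto (fun s : ℝ ↦ expTransform μ φ f (-s : ℂ)) atTop (𝓝 0) := by
  rw [← integral_zero α ℂ (μ := μ)]
  refine tendsto_integral_filter_of_dominated_convergence (fun a ↦ ‖f a‖) (.of_forall fun s ↦
    (Complex.continuous_exp.comp_aestronglyMeasurable (hφ.const_mul _)).mul hf.1) ?_ hf.norm ?_
  · filter_upwards [eventually_ge_atTop (0 : ℝ)] with s hs
    filter_upwards [hpos] with a ha
    have hre : (-(s : ℂ) * φ a).re ≤ 0 := by simpa using mul_nonneg hs ha.le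
    simpa using norm_cexp_mul_mul_le (u := f a) hre
  · filter_upwards [hpos] with a ha
    have hexp : Tendsto (fun s : ℝ ↦ Complex.exp (-(s : ℂ) * φ a)) atTop (𝓝 0) := by
      refine Complex.tendsto_exp_nhds_zero_iff.2 ?_
      simpa using tendsto_id.atTop_mul_const ha
    simpa using hexp.mul_const (f a)

end ExponentialTransform

section PhragmenLindelof

open Filter
open scoped Real

variable {E : Type*} [NormedAddCommGroup E] [NormedSpace ℂ E] {f : ℂ → E} {A B M : ℝ}

theorem norm_le_of_exponential_type_of_bounded_on_sector_boundary (hf : Differentiable ℂ f)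
    (htype : ∀ z, ‖f z‖ ≤ Real.exp (B * ‖z‖) * A) {a b : ℝ} (ha : -π < a) (hab : a < b)
    (hb : b ≤ π) (hba : b - a < π) (hfa : ∀ z : ℂ, z ≠ 0 → z.arg = a → ‖f z‖ ≤ M)
    (hfb : ∀ z : ℂ, z ≠ 0 → z.arg = b → ‖f z‖ ≤ M) {z : ℂ} (hz : z ≠ 0) (hza : a ≤ z.arg)
    (hzb : z.arg ≤ b) : ‖f z‖ ≤ M := by
  have arg_cexp {w : ℂ} {c : ℝ} (hw : w.im = c) (hc : c ∈ Ioc (-π) π) :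
      (Complex.exp w).arg = c := by
    subst hw
    rw [← Complex.log_im, Complex.log_exp hc.1 hc.2]
  have growth : (fun w ↦ f (Complex.exp w)) =O[
      comap (_root_.abs ∘ Complex.re) atTop ⊓ 𝓟 (Complex.im ⁻¹' Ioo a b)]
      fun w ↦ Real.exp (|B| * Real.exp (1 * |w.re|)) := by
    have hA : 0 ≤ A := by simpa using (norm_nonneg _).trans (htype 0)
    refine .of_bound A (.of_forall fun w ↦ (htype _).trans ?_)
    rw [mul_comm, Real.norm_of_nonneg (Real.exp_pos _).le, Complex.norm_exp, one_mul]
    gcongr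
    · exact le_abs_self B
    · exact le_abs_self w.re
  have hstrip := PhragmenLindelof.horizontal_strip (f := fun w ↦ f (Complex.exp w))
    (z := Complex.log z) (hf.comp Complex.differentiable_exp).diffContOnCl
    ⟨1, (one_lt_div (sub_pos.2 hab)).2 hba, |B|, growth⟩
    (fun w hw ↦ hfa _ (Complex.exp_ne_zero w) (arg_cexp hw ⟨ha, hab.le.trans hb⟩))
    (fun w hw ↦ hfb _ (Complex.exp_ne_zero w) (arg_cexp hw ⟨ha.trans hab, hb⟩))
    (by rwa [Complex.log_im]) (by rwa [Complex.log_im])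
  rwa [Complex.exp_log hz] at hstrip

/-- The second quadrant widened below the negative real axis to the ray of slope `m`. -/
def leftWedge (m : ℝ) : Set ℂ :=
  {z | z.re ≤ 0 ∧ m * z.re ≤ z.im}

variable {m : ℝ} {z : ℂ}

theorem mem_leftWedge_of_pi_div_two_le_arg (hm : 0 < m) (hz : π / 2 ≤ z.arg) :
    z ∈ leftWedge m := by
  have hre : z.re ≤ 0 := by
    rcases hz.eq_or_lt with h | h
    · exact (Complex.arg_eq_pi_div_two_iff.1 h.symm).1.le
    · exact (not_le.1 fun hre ↦ h.not_ge (abs_le.1 (Complex.abs_arg_le_pi_div_two_iff.2 hre)).2).le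
  have him : 0 ≤ z.im := Complex.arg_nonneg_iff.1 (by linarith [Real.pi_pos])
  exact ⟨hre, (mul_nonpos_of_nonneg_of_nonpos hm.le hre).trans him⟩

theorem mem_leftWedge_of_arg_le_arctan_sub_pi (hz : z.arg ≤ Real.arctan m - π) :
    z ∈ leftWedge m := by
  have harctan := Real.arctan_lt_pi_div_two m
  have hcos : 0 < Real.cos (Real.arctan m) := Real.cos_arctan_pos m
  have hre : z.re ≤ 0 := by
    by_contra! hre
    linarith [(abs_le.1 (Complex.abs_arg_le_pi_div_two_iff.2 hre.le)).1]
  have hsin : 0 ≤ Real.sin (z.arg - Real.arctan m) := by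
    rw [← neg_nonpos, ← Real.sin_add_pi]
    exact Real.sin_nonpos_of_nonpos_of_neg_pi_le (by linarith)
      (by linarith [Complex.neg_pi_lt_arg z])
  have hrot : ‖z‖ * Real.sin (z.arg - Real.arctan m)
      = Real.cos (Real.arctan m) * (z.im - m * z.re) := by
    have hm : Real.sin (Real.arctan m) = m * Real.cos (Real.arctan m) := by
      rw [← Real.tan_mul_cos hcos.ne', Real.tan_arctan]
    rw [Real.sin_sub, hm, ← Complex.norm_mul_cos_arg z, ← Complex.norm_mul_sin_arg z]
    ring
  have hprod : 0 ≤ Real.cos (Real.arctan m) * (z.im - m * z.re) :=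
    hrot ▸ mul_nonneg (norm_nonneg z) hsin
  exact ⟨hre, sub_nonneg.1 (nonneg_of_mul_nonneg_right hprod hcos)⟩

-- Together with the positive real axis, the wedge cuts the plane into sectors of opening `< π`.
theorem norm_le_of_exponential_type_of_bounded_on_leftWedge (hf : Differentiable ℂ f)
    (htype : ∀ z, ‖f z‖ ≤ Real.exp (B * ‖z‖) * A) (hm : 0 < m)
    (hray : ∀ t : ℝ, 0 ≤ t → ‖f t‖ ≤ M) (hwedge : ∀ z ∈ leftWedge m, ‖f z‖ ≤ M) (z : ℂ) :
    ‖f z‖ ≤ M := by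
  have hpi := Real.pi_pos
  have harctan_pos : 0 < Real.arctan m := Real.arctan_pos.2 hm
  have harctan_lt := Real.arctan_lt_pi_div_two m
  have on_ray (w : ℂ) (hw : w.arg = 0) : ‖f w‖ ≤ M := by
    obtain ⟨hre, him⟩ := Complex.arg_eq_zero_iff.1 hw
    have : w = (w.re : ℂ) := Complex.ext rfl him
    exact this ▸ hray w.re hre
  rcases eq_or_ne z 0 with rfl | hz
  · exact on_ray 0 Complex.arg_zero
  rcases le_or_gt 0 z.arg with h0 | h0
  · rcases le_or_gt z.arg (π / 2) with h | h
    · exact norm_le_of_exponential_type_of_bounded_on_sector_boundary hf htype (by linarith)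
        (by positivity) (by linarith) (by linarith) (fun w _ ↦ on_ray w)
        (fun w _ hw ↦ hwedge w (mem_leftWedge_of_pi_div_two_le_arg hm hw.ge)) hz h0 h
    · exact hwedge z (mem_leftWedge_of_pi_div_two_le_arg hm h.le)
  · rcases le_or_gt (Real.arctan m - π) z.arg with h | h
    · exact norm_le_of_exponential_type_of_bounded_on_sector_boundary hf htype (by linarith)
        (by linarith) hpi.le (by linarith)
        (fun w _ hw ↦ hwedge w (mem_leftWedge_of_arg_le_arctan_sub_pi hw.le))
        (fun w _ ↦ on_ray w) hz h h0.le
    · exact hwedge z (mem_leftWedge_of_arg_le_arctan_sub_pi h.le)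

end PhragmenLindelof

section PhaseTransform

open MeasureTheory Filter Topology

/-- The primitive `x² + 2ix` of `2(x + i)`, the gap between the two eigenvalues of the system. -/
noncomputable def phase (x : ℝ) : ℂ :=
  x ^ 2 + 2 * Complex.I * x

theorem continuous_phase : Continuous phase := by
  unfold phase
  fun_prop

theorem hasDerivAt_phase (x : ℝ) : HasDerivAt phase (2 * (x + Complex.I)) x := by
  have hx : HasDerivAt (fun y : ℝ ↦ (y : ℂ)) 1 x := Complex.ofRealCLM.hasDerivAt
  refine ((hx.pow 2).add (hx.const_mul (2 * Complex.I))).congr_deriv ?_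
  push_cast
  ring

theorem phase_re (x : ℝ) : (phase x).re = x ^ 2 := by
  simp [phase, pow_two]

theorem phase_im (x : ℝ) : (phase x).im = 2 * x := by
  simp [phase, pow_two]

theorem re_mul_phase_sub_phase (z : ℂ) (δ y : ℝ) :
    (z * (phase δ - phase y)).re = (δ - y) * (z.re * (δ + y) - 2 * z.im) := by
  rw [Complex.mul_re, Complex.sub_re, Complex.sub_im, phase_re, phase_re, phase_im, phase_im]
  ring

theorem re_mul_phase_sub_phase_nonpos {z : ℂ} {δ y : ℝ} (hz : z ∈ leftWedge (δ / 2))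
    (hy : y ∈ Ioc 0 δ) : (z * (phase δ - phase y)).re ≤ 0 := by
  obtain ⟨hre, him⟩ := hz
  rw [re_mul_phase_sub_phase]
  refine mul_nonpos_of_nonneg_of_nonpos (sub_nonneg.2 hy.2) ?_
  linarith [mul_nonpos_of_nonpos_of_nonneg hre hy.1.le]

/-- The integral `∫₀^δ e^{z(phase δ - phase y)} θ(y) dy`: the oscillatory integral of `θ` over
`[0, δ]`, normalized by its exponential size at the right endpoint. -/
noncomputable def truncatedTransform (θ : ℝ → ℂ) (δ : ℝ) : ℂ → ℂ :=
  expTransform (volume.restrict (Ioc 0 δ)) (fun y ↦ phase δ - phase y) θ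

variable {θ : ℝ → ℂ} {δ : ℝ}

theorem aestronglyMeasurable_phase_sub_phase (δ : ℝ) (μ : Measure ℝ) :
    AEStronglyMeasurable (fun y ↦ phase δ - phase y) μ :=
  (continuous_const.sub continuous_phase).aestronglyMeasurable

theorem exists_ae_norm_phase_sub_phase_le (δ : ℝ) :
    ∃ B, ∀ᵐ y ∂volume.restrict (Ioc 0 δ), ‖phase δ - phase y‖ ≤ B := by
  obtain ⟨B, hB⟩ := isCompact_Icc.exists_bound_of_continuousOn (s := Icc 0 δ)
    (continuous_const.sub continuous_phase : Continuous fun y ↦ phase δ - phase y).continuousOn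
  exact ⟨B, (ae_restrict_iff' measurableSet_Ioc).2 <|
    .of_forall fun y hy ↦ hB y (Ioc_subset_Icc_self hy)⟩

theorem differentiable_truncatedTransform (hθ : IntegrableOn θ (Ioc 0 δ)) :
    Differentiable ℂ (truncatedTransform θ δ) :=
  have ⟨_, hB⟩ := exists_ae_norm_phase_sub_phase_le δ
  differentiable_expTransform (aestronglyMeasurable_phase_sub_phase δ _) hθ hB

theorem norm_truncatedTransform_le_of_mem_leftWedge (hθ : IntegrableOn θ (Ioc 0 δ)) {z : ℂ}
    (hz : z ∈ leftWedge (δ / 2)) :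
    ‖truncatedTransform θ δ z‖ ≤ ∫ y in Ioc 0 δ, ‖θ y‖ := by
  have hre : ∀ᵐ y ∂volume.restrict (Ioc 0 δ), (z * (phase δ - phase y)).re ≤ 0 :=
    (ae_restrict_iff' measurableSet_Ioc).2 <|
      .of_forall fun y hy ↦ re_mul_phase_sub_phase_nonpos hz hy
  simpa [truncatedTransform] using norm_expTransform_le hθ hre

theorem tendsto_truncatedTransform_neg_atTop (hθ : IntegrableOn θ (Ioc 0 δ)) :
    Tendsto (fun s : ℝ ↦ truncatedTransform θ δ (-s : ℂ)) atTop (𝓝 0) := by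
  refine tendsto_expTransform_neg_atTop (aestronglyMeasurable_phase_sub_phase δ _) hθ ?_
  rw [← restrict_Ioo_eq_restrict_Ioc]
  refine (ae_restrict_iff' measurableSet_Ioo).2 (.of_forall fun y hy ↦ ?_)
  rw [Complex.sub_re, phase_re, phase_re, sub_pos]
  exact pow_lt_pow_left₀ hy.2 hy.1.le two_ne_zero

theorem exists_norm_le_on_Ici_of_isBoundedUnder_atTop {E : Type*} [SeminormedAddCommGroup E]
    {g : ℝ → E} (hg : Continuous g) (hbdd : IsBoundedUnder (· ≤ ·) atTop fun t ↦ ‖g t‖) (a : ℝ) :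
    ∃ M, ∀ t, a ≤ t → ‖g t‖ ≤ M := by
  obtain ⟨M, hM⟩ := hbdd
  obtain ⟨R, hR⟩ := eventually_atTop.1 (eventually_map.1 hM)
  obtain ⟨N, hN⟩ := isCompact_Icc.exists_bound_of_continuousOn (s := Icc a R) hg.continuousOn
  refine ⟨max M N, fun t ht ↦ ?_⟩
  rcases le_total R t with h | h
  · exact (hR t h).trans (le_max_left M N)
  · exact (hN t ⟨ht, h⟩).trans (le_max_right M N)

theorem truncatedTransform_eq_zero_of_isBoundedUnder (hδ : 0 < δ) (hθ : IntegrableOn θ (Ioc 0 δ))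
    (hbdd : IsBoundedUnder (· ≤ ·) atTop fun t : ℝ ↦ ‖truncatedTransform θ δ t‖) (z : ℂ) :
    truncatedTransform θ δ z = 0 := by
  have hdiff := differentiable_truncatedTransform hθ
  obtain ⟨M, hM⟩ := exists_norm_le_on_Ici_of_isBoundedUnder_atTop
    (hdiff.continuous.comp Complex.continuous_ofReal) hbdd 0
  obtain ⟨B, hB⟩ := exists_ae_norm_phase_sub_phase_le δ
  have hbounded : Bornology.IsBounded (range (truncatedTransform θ δ)) := by
    refine isBounded_iff_forall_norm_le.2 ⟨max M (∫ y in Ioc 0 δ, ‖θ y‖), ?_⟩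
    rintro _ ⟨w, rfl⟩
    exact norm_le_of_exponential_type_of_bounded_on_leftWedge hdiff
      (norm_expTransform_le_exp_mul_norm hθ hB) (half_pos hδ)
      (fun t ht ↦ (hM t ht).trans (le_max_left _ _))
      (fun w hw ↦ (norm_truncatedTransform_le_of_mem_leftWedge hθ hw).trans (le_max_right _ _)) w
  have hconst (s : ℝ) : truncatedTransform θ δ (-s : ℂ) = truncatedTransform θ δ z :=
    hdiff.apply_eq_apply_of_bounded hbounded _ _
  have hlim := tendsto_truncatedTransform_neg_atTop hθ
  simp only [hconst] at hlim
  exact tendsto_nhds_unique tendsto_const_nhds hlim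

theorem ae_eq_zero_of_forall_intervalIntegral_eq_zero {E : Type*} [NormedAddCommGroup E]
    [NormedSpace ℝ E] [CompleteSpace E] {f : ℝ → E} {a b : ℝ}
    (hf : IntervalIntegrable f volume a b) (h : ∀ c ∈ Ioo a b, ∫ y in a..c, f y = 0) :
    f =ᵐ[volume.restrict (Ioc a b)] 0 := by
  rw [← restrict_Ioo_eq_restrict_Ioc, EventuallyEq, ae_restrict_iff' measurableSet_Ioo]
  filter_upwards [hf.ae_hasDerivAt_integral] with x hx hxab
  have hab : a ≤ b := (hxab.1.trans hxab.2).le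
  have hderiv := hx (uIcc_of_le hab ▸ Ioo_subset_Icc_self hxab) a left_mem_uIcc
  refine hderiv.unique ((hasDerivAt_const x (0 : E)).congr_of_eventuallyEq ?_)
  filter_upwards [Ioo_mem_nhds hxab.1 hxab.2] with c hc using h c hc

theorem ae_eq_zero_of_isBoundedUnder_truncatedTransform {L : ℝ}
    (hθ : IntervalIntegrable θ volume 0 L)
    (hbdd : ∀ δ ∈ Ioo 0 L, IsBoundedUnder (· ≤ ·) atTop fun t : ℝ ↦ ‖truncatedTransform θ δ t‖) :
    θ =ᵐ[volume.restrict (Ioc 0 L)] 0 := by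
  refine ae_eq_zero_of_forall_intervalIntegral_eq_zero hθ fun δ hδ ↦ ?_
  have hθδ : IntegrableOn θ (Ioc 0 δ) := hθ.1.mono_set (Ioc_subset_Ioc_right hδ.2.le)
  rw [intervalIntegral.integral_of_le hδ.1.le]
  simpa [truncatedTransform, expTransform] using
    truncatedTransform_eq_zero_of_isBoundedUnder hδ.1 hθδ (hbdd δ hδ) 0

end PhaseTransform

section BoundedSolution

open MeasureTheory Filter Topology

/-- The scalar equation `h r' = 2(x + i) r + g` has a solution on `[-L, L]` bounded by `K`. It is
the equation for the ratio of the two components of a solution of the triangular system. -/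
def HasBoundedSolution (L h K : ℝ) (g : ℝ → ℂ) : Prop :=
  ∃ r : ℝ → ℂ, ∀ x ∈ Icc (-L) L,
    HasDerivAt r ((2 * (x + Complex.I) * r x + g x) / h) x ∧ ‖r x‖ ≤ K

variable {θ : ℝ → ℂ} {L K δ t : ℝ} {p : ℕ}

theorem norm_cexp_neg_mul_phase (t x : ℝ) :
    ‖Complex.exp (-t * phase x)‖ = Real.exp (-(t * x ^ 2)) := by
  rw [Complex.norm_exp, neg_mul, Complex.neg_re, Complex.re_ofReal_mul, phase_re]

theorem continuous_cexp_mul_phase (z : ℂ) : Continuous fun x ↦ Complex.exp (z * phase x) :=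
  Complex.continuous_exp.comp (continuous_const.mul continuous_phase)

theorem integral_cexp_neg_mul_phase_mul_eq_sub {r g : ℝ → ℂ} {z : ℂ} {a b : ℝ}
    (hr : ∀ x ∈ uIcc a b, HasDerivAt r (z * (2 * (x + Complex.I) * r x + g x)) x)
    (hg : IntervalIntegrable g volume a b) :
    ∫ y in a..b, Complex.exp (-z * phase y) * (z * g y)
      = Complex.exp (-z * phase b) * r b - Complex.exp (-z * phase a) * r a := by
  refine intervalIntegral.integral_eq_sub_of_hasDerivAt
    (f := fun x ↦ Complex.exp (-z * phase x) * r x) (fun x hx ↦ ?_)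
    ((hg.const_mul z).continuousOn_mul (continuous_cexp_mul_phase (-z)).continuousOn)
  exact ((((hasDerivAt_phase x).const_mul (-z)).cexp).mul (hr x hx)).congr_deriv (by ring)

theorem norm_integral_cexp_neg_mul_phase_mul_le (hL : 0 ≤ L) (ht : 0 < t)
    (hθ : IntervalIntegrable θ volume (-L) L)
    (hsol : HasBoundedSolution L t⁻¹ K fun x ↦ ((t⁻¹ : ℝ) : ℂ) ^ p * θ x) :
    ‖∫ y in (-L)..L, Complex.exp (-t * phase y) * θ y‖
      ≤ t ^ p * t⁻¹ * (2 * K * Real.exp (-(t * L ^ 2))) := by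
  obtain ⟨r, hr⟩ := hsol
  have ht0 : (t : ℂ) ≠ 0 := Complex.ofReal_ne_zero.2 ht.ne'
  have hFTC := integral_cexp_neg_mul_phase_mul_eq_sub (r := r) (z := t)
    (g := fun x ↦ ((t⁻¹ : ℝ) : ℂ) ^ p * θ x) (a := -L) (b := L)
    (fun x hx ↦ ((hr x (uIcc_of_le (neg_le_self hL) ▸ hx)).1.congr_deriv (by
      rw [Complex.ofReal_inv, div_inv_eq_mul, mul_comm])))
    (hθ.const_mul _)
  have hscale : ∫ y in (-L)..L, Complex.exp (-t * phase y) * θ y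
      = (t : ℂ) ^ p * (t : ℂ)⁻¹ *
        (Complex.exp (-t * phase L) * r L - Complex.exp (-t * phase (-L)) * r (-L)) := by
    rw [← hFTC, ← intervalIntegral.integral_const_mul]
    congr 1 with y
    rw [Complex.ofReal_inv, inv_pow]
    field_simp
  have hend {x : ℝ} (hx : x ∈ Icc (-L) L) (hxL : x ^ 2 = L ^ 2) :
      ‖Complex.exp (-t * phase x) * r x‖ ≤ Real.exp (-(t * L ^ 2)) * K := by
    rw [norm_mul, norm_cexp_neg_mul_phase, hxL]
    gcongr
    exact (hr x hx).2
  have hright := hend (right_mem_Icc.2 (neg_le_self hL)) rfl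
  have hleft := hend (left_mem_Icc.2 (neg_le_self hL)) (neg_sq L)
  rw [hscale, norm_mul, norm_mul, norm_pow, norm_inv, Complex.norm_of_nonneg ht.le]
  gcongr
  exact (norm_sub_le _ _).trans (by linarith)

theorem norm_integral_cexp_neg_mul_phase_mul_tail_le (hδ : 0 ≤ δ) (hδL : δ ≤ L) (ht : 0 ≤ t)
    (hθ : IntervalIntegrable θ volume δ L) :
    ‖∫ y in δ..L, Complex.exp (-t * phase y) * θ y‖
      ≤ Real.exp (-(t * δ ^ 2)) * ∫ y in δ..L, ‖θ y‖ := by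
  rw [← intervalIntegral.integral_const_mul]
  refine intervalIntegral.norm_integral_le_of_norm_le hδL (.of_forall fun y hy ↦ ?_)
    (hθ.norm.const_mul _)
  rw [norm_mul, norm_cexp_neg_mul_phase]
  have := hy.1.le
  gcongr

theorem truncatedTransform_eq_cexp_mul_integral (hδ : 0 ≤ δ) (z : ℂ) :
    truncatedTransform θ δ z
      = Complex.exp (z * phase δ) * ∫ y in 0..δ, Complex.exp (-z * phase y) * θ y := by
  rw [truncatedTransform, expTransform, ← intervalIntegral.integral_of_le hδ,
    ← intervalIntegral.integral_const_mul]
  congr 1 with y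
  rw [← mul_assoc, ← Complex.exp_add]
  ring_nf

theorem integral_cexp_mul_phase_mul_eq_sub (hδ : δ ∈ Ioo 0 L)
    (hθ : IntervalIntegrable θ volume (-L) L)
    (hleft : θ =ᵐ[volume.restrict (Ioc (-L) 0)] 0) (z : ℂ) :
    ∫ y in 0..δ, Complex.exp (z * phase y) * θ y
      = (∫ y in (-L)..L, Complex.exp (z * phase y) * θ y)
        - ∫ y in δ..L, Complex.exp (z * phase y) * θ y := by
  have hL : 0 < L := hδ.1.trans hδ.2
  have hzero : ∫ y in (-L)..0, Complex.exp (z * phase y) * θ y = 0 := by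
    rw [intervalIntegral.integral_of_le (neg_nonpos.2 hL.le)]
    refine integral_eq_zero_of_ae (hleft.mono fun y hy ↦ ?_)
    simp [hy]
  have hint {a b : ℝ} (ha : a ∈ Icc (-L) L) (hb : b ∈ Icc (-L) L) :
      IntervalIntegrable (fun y ↦ Complex.exp (z * phase y) * θ y) volume a b :=
    (hθ.continuousOn_mul (continuous_cexp_mul_phase z).continuousOn).mono_set <|
      uIcc_subset_uIcc (Icc_subset_uIcc ha) (Icc_subset_uIcc hb)
  have hmem_left : -L ∈ Icc (-L) L := ⟨le_rfl, by linarith⟩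
  have hmem_zero : (0 : ℝ) ∈ Icc (-L) L := ⟨by linarith, hL.le⟩
  have hmem_δ : δ ∈ Icc (-L) L := ⟨by linarith [hδ.1], hδ.2.le⟩
  have hmem_right : L ∈ Icc (-L) L := ⟨by linarith, le_rfl⟩
  rw [← intervalIntegral.integral_add_adjacent_intervals (hint hmem_left hmem_zero)
      (hint hmem_zero hmem_right), hzero, zero_add,
    ← intervalIntegral.integral_add_adjacent_intervals (hint hmem_zero hmem_δ)
      (hint hmem_δ hmem_right), add_sub_cancel_right]

theorem norm_truncatedTransform_le_of_hasBoundedSolution (hδ : δ ∈ Ioo 0 L) (ht : 0 < t)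
    (hθ : IntervalIntegrable θ volume (-L) L) (hleft : θ =ᵐ[volume.restrict (Ioc (-L) 0)] 0)
    (hsol : HasBoundedSolution L t⁻¹ K fun x ↦ ((t⁻¹ : ℝ) : ℂ) ^ p * θ x) :
    ‖truncatedTransform θ δ t‖
      ≤ t ^ p * t⁻¹ * (2 * K) * Real.exp (-((L ^ 2 - δ ^ 2) * t)) + ∫ y in δ..L, ‖θ y‖ := by
  have hL : 0 < L := hδ.1.trans hδ.2
  have hnorm : ‖Complex.exp (t * phase δ)‖ = Real.exp (t * δ ^ 2) := by
    simpa using norm_cexp_neg_mul_phase (-t) δ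
  have hθδ : IntervalIntegrable θ volume δ L := hθ.mono_set <|
    uIcc_subset_uIcc (Icc_subset_uIcc ⟨by linarith [hδ.1], hδ.2.le⟩) right_mem_uIcc
  have hwhole := norm_integral_cexp_neg_mul_phase_mul_le hL.le ht hθ hsol
  have htail := norm_integral_cexp_neg_mul_phase_mul_tail_le hδ.1.le hδ.2.le ht.le hθδ
  rw [truncatedTransform_eq_cexp_mul_integral hδ.1.le, norm_mul, hnorm,
    integral_cexp_mul_phase_mul_eq_sub hδ hθ hleft]
  have hgain : Real.exp (t * δ ^ 2) * Real.exp (-(t * L ^ 2))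
      = Real.exp (-((L ^ 2 - δ ^ 2) * t)) := by
    rw [← Real.exp_add]
    ring_nf
  have hcancel : Real.exp (t * δ ^ 2) * Real.exp (-(t * δ ^ 2)) = 1 := by
    rw [← Real.exp_add, add_neg_cancel, Real.exp_zero]
  calc _ ≤ Real.exp (t * δ ^ 2) * (t ^ p * t⁻¹ * (2 * K * Real.exp (-(t * L ^ 2)))
        + Real.exp (-(t * δ ^ 2)) * ∫ y in δ..L, ‖θ y‖) := by
        gcongr
        exact (norm_sub_le _ _).trans (add_le_add hwhole htail)
    _ = _ := by
        rw [← hgain]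
        linear_combination (∫ y in δ..L, ‖θ y‖) * hcancel

theorem tendsto_pow_mul_inv_mul_exp_neg_mul_atTop (p : ℕ) (c : ℝ) {b : ℝ} (hb : 0 < b) :
    Tendsto (fun t : ℝ ↦ t ^ p * t⁻¹ * c * Real.exp (-(b * t))) atTop (𝓝 0) := by
  have hpow := (tendsto_rpow_mul_exp_neg_mul_atTop_nhds_zero p b hb).mul tendsto_inv_atTop_zero
  refine (by simpa using hpow.const_mul c : Tendsto _ atTop (𝓝 (0 : ℝ))).congr fun t ↦ ?_
  ring

theorem isBoundedUnder_truncatedTransform_of_hasBoundedSolution (hδ : δ ∈ Ioo 0 L)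
    (hθ : IntervalIntegrable θ volume (-L) L) (hleft : θ =ᵐ[volume.restrict (Ioc (-L) 0)] 0)
    (hsol : ∀ᶠ h : ℝ in 𝓝[>] 0, HasBoundedSolution L h K fun x ↦ (h : ℂ) ^ p * θ x) :
    IsBoundedUnder (· ≤ ·) atTop fun t : ℝ ↦ ‖truncatedTransform θ δ t‖ := by
  have hgap : 0 < L ^ 2 - δ ^ 2 := sub_pos.2 (pow_lt_pow_left₀ hδ.2 hδ.1.le two_ne_zero)
  have hlim := (tendsto_pow_mul_inv_mul_exp_neg_mul_atTop p (2 * K) hgap).add_const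
    (∫ y in δ..L, ‖θ y‖)
  refine hlim.isBoundedUnder_le.mono_le ?_
  filter_upwards [tendsto_inv_atTop_nhdsGT_zero.eventually hsol, eventually_gt_atTop 0]
    with t hsol_t ht using norm_truncatedTransform_le_of_hasBoundedSolution hδ ht hθ hleft hsol_t

theorem ae_eq_zero_of_eventually_hasBoundedSolution (hθ : IntervalIntegrable θ volume (-L) L)
    (hleft : θ =ᵐ[volume.restrict (Ioc (-L) 0)] 0)
    (hsol : ∀ᶠ h : ℝ in 𝓝[>] 0, HasBoundedSolution L h K fun x ↦ (h : ℂ) ^ p * θ x) :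
    θ =ᵐ[volume.restrict (Ioc 0 L)] 0 := by
  rcases le_or_gt L 0 with hL | hL
  · simp [Ioc_eq_empty hL.not_gt, EventuallyEq]
  have hθ_right : IntervalIntegrable θ volume 0 L := hθ.mono_set <|
    uIcc_subset_uIcc (Icc_subset_uIcc ⟨neg_nonpos.2 hL.le, hL.le⟩) right_mem_uIcc
  exact ae_eq_zero_of_isBoundedUnder_truncatedTransform hθ_right fun δ hδ ↦
    isBoundedUnder_truncatedTransform_of_hasBoundedSolution hδ hθ hleft hsol

end BoundedSolution

section MatrixNorm

theorem norm_entry_le_linfty_opNorm {m n 𝕜 : Type*} [Fintype m] [Fintype n] [NormedField 𝕜]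
    (A : Matrix m n 𝕜) (i : m) (j : n) : ‖A i j‖ ≤ ‖A‖ := by
  have hrow : ‖A i j‖₊ ≤ ∑ k, ‖A i k‖₊ :=
    Finset.single_le_sum (f := fun k ↦ ‖A i k‖₊) (fun _ _ ↦ zero_le) (Finset.mem_univ j)
  have hsup := Finset.le_sup (f := fun i ↦ ∑ k, ‖A i k‖₊) (Finset.mem_univ i)
  rw [Matrix.linfty_opNorm_def]
  exact_mod_cast hrow.trans hsup

variable {n 𝕜 : Type*} [Fintype n] [DecidableEq n] [NormedField 𝕜]

theorem norm_det_le_factorial_mul_pow (A : Matrix n n 𝕜) :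
    ‖A.det‖ ≤ (Fintype.card n).factorial * ‖A‖ ^ Fintype.card n :=
  (Matrix.det_le (abv := NormedField.toAbsoluteValue 𝕜) (norm_entry_le_linfty_opNorm A)).trans_eq
    (nsmul_eq_mul _ _)

theorem one_le_factorial_mul_pow_mul_norm_det {A : Matrix n n 𝕜} (hA : IsUnit A) {C : ℝ}
    (hC : ‖A⁻¹‖ ≤ C) :
    1 ≤ (Fintype.card n).factorial * C ^ Fintype.card n * ‖A.det‖ := by
  have hdet : ‖A⁻¹.det‖ * ‖A.det‖ = 1 := by
    rw [← norm_mul, ← Matrix.det_mul,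
      Matrix.nonsing_inv_mul A ((Matrix.isUnit_iff_isUnit_det A).1 hA), Matrix.det_one, norm_one]
  calc 1 = ‖A⁻¹.det‖ * ‖A.det‖ := hdet.symm
    _ ≤ (Fintype.card n).factorial * ‖A⁻¹‖ ^ Fintype.card n * ‖A.det‖ := by
        gcongr
        exact norm_det_le_factorial_mul_pow A⁻¹
    _ ≤ _ := by gcongr

end MatrixNorm

section Diagonalization

open Filter Topology

theorem riccati_of_column {R : Type*} [CommRing R] {h a g : R} {T T' D : Matrix (Fin 2) (Fin 2) R}
    (hD : D.IsDiag) (heq : h • T' = !![a, g; 0, -a] * T - T * D) (j : Fin 2) :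
    h * (T' 0 j * T 1 j - T 0 j * T' 1 j) = 2 * a * T 0 j * T 1 j + g * T 1 j ^ 2 := by
  have hcol (i : Fin 2) : (T * D) i j = T i j * D j j := by
    conv_lhs => rw [← hD.diagonal_diag, Matrix.mul_diagonal, Matrix.diag_apply]
  have htop : h * T' 0 j = a * T 0 j + g * T 1 j - T 0 j * D j j := by
    simpa [hcol, Matrix.vecMul, dotProduct, Fin.sum_univ_two] using congrFun (congrFun heq 0) j
  have hbot : h * T' 1 j = -a * T 1 j - T 1 j * D j j := by
    simpa [hcol, Matrix.vecMul, dotProduct, Fin.sum_univ_two] using congrFun (congrFun heq 1) j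
  linear_combination T 1 j * htop - T 0 j * hbot

/-- `T`, with derivative `T'`, brings `h W' = A W` to the diagonal form `h Z' = D Z` at one point,
with `T`, `T⁻¹` and `T'` bounded by `C`. -/
structure IsBoundedDiagonalizerAt (h C : ℝ) (A T T' D : Matrix (Fin 2) (Fin 2) ℂ) : Prop where
  isDiag : D.IsDiag
  isUnit : IsUnit T
  norm_le : ‖T‖ ≤ C
  norm_inv_le : ‖T⁻¹‖ ≤ C
  norm_deriv_le : ‖T'‖ ≤ C
  smul_deriv_eq : h • T' = A * T - T * D

namespace IsBoundedDiagonalizerAt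

variable {h C : ℝ} {a g : ℂ} {A T T' D : Matrix (Fin 2) (Fin 2) ℂ}

theorem norm_apply_le (hT : IsBoundedDiagonalizerAt h C A T T' D) (i j : Fin 2) : ‖T i j‖ ≤ C :=
  (norm_entry_le_linfty_opNorm T i j).trans hT.norm_le

theorem norm_deriv_apply_le (hT : IsBoundedDiagonalizerAt h C A T T' D) (i j : Fin 2) :
    ‖T' i j‖ ≤ C :=
  (norm_entry_le_linfty_opNorm T' i j).trans hT.norm_deriv_le

theorem one_le_norm_det (hT : IsBoundedDiagonalizerAt h C A T T' D) :
    1 ≤ 2 * C ^ 2 * ‖T.det‖ := by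
  simpa using one_le_factorial_mul_pow_mul_norm_det hT.isUnit hT.norm_inv_le

theorem riccati (hT : IsBoundedDiagonalizerAt h C !![a, g; 0, -a] T T' D) (j : Fin 2) :
    h * (T' 0 j * T 1 j - T 0 j * T' 1 j) = 2 * a * T 0 j * T 1 j + g * T 1 j ^ 2 :=
  riccati_of_column hT.isDiag ((Complex.coe_smul h T').trans hT.smul_deriv_eq) j

theorem norm_wronskian_le (hT : IsBoundedDiagonalizerAt h C A T T' D) (j : Fin 2) :
    ‖T' 0 j * T 1 j - T 0 j * T' 1 j‖ ≤ 2 * C ^ 2 := by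
  have hC : 0 ≤ C := (norm_nonneg T).trans hT.norm_le
  calc ‖T' 0 j * T 1 j - T 0 j * T' 1 j‖
      ≤ ‖T' 0 j‖ * ‖T 1 j‖ + ‖T 0 j‖ * ‖T' 1 j‖ := by
        simpa only [norm_mul] using norm_sub_le (T' 0 j * T 1 j) (T 0 j * T' 1 j)
    _ ≤ C * C + C * C := by
        gcongr <;> first | exact hT.norm_apply_le _ _ | exact hT.norm_deriv_apply_le _ _
    _ = 2 * C ^ 2 := by ring

-- Eliminating `g` between the Riccati equations of the two columns makes `det T` appear.
theorem norm_bottom_row_mul_le (hh : 0 ≤ h) (ha : 1 ≤ ‖a‖)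
    (hT : IsBoundedDiagonalizerAt h C !![a, g; 0, -a] T T' D) :
    ‖T 1 0‖ * ‖T 1 1‖ ≤ 4 * h * C ^ 6 := by
  have : 0 ≤ C := (norm_nonneg T).trans hT.norm_le
  have helim : 2 * (a * (T 1 0 * T 1 1 * T.det))
      = h * ((T' 0 0 * T 1 0 - T 0 0 * T' 1 0) * T 1 1 ^ 2
        - (T' 0 1 * T 1 1 - T 0 1 * T' 1 1) * T 1 0 ^ 2) := by
    rw [Matrix.det_fin_two]
    linear_combination T 1 0 ^ 2 * hT.riccati 1 - T 1 1 ^ 2 * hT.riccati 0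
  have hdet : 2 * (‖T 1 0‖ * ‖T 1 1‖ * ‖T.det‖) ≤ 4 * h * C ^ 4 :=
    calc 2 * (‖T 1 0‖ * ‖T 1 1‖ * ‖T.det‖)
        ≤ 2 * (‖a‖ * (‖T 1 0‖ * ‖T 1 1‖ * ‖T.det‖)) :=
          mul_le_mul_of_nonneg_left (le_mul_of_one_le_left (by positivity) ha) zero_le_two
      _ = ‖2 * (a * (T 1 0 * T 1 1 * T.det))‖ := by simp only [norm_mul, Complex.norm_ofNat]
      _ ≤ h * (2 * C ^ 2 * C ^ 2 + 2 * C ^ 2 * C ^ 2) := by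
          rw [helim, norm_mul, Complex.norm_of_nonneg hh]
          gcongr
          refine (norm_sub_le _ _).trans ?_
          simp only [norm_mul _ (_ ^ 2), norm_pow]
          gcongr <;> first | exact hT.norm_wronskian_le _ | exact hT.norm_apply_le _ _
      _ = 4 * h * C ^ 4 := by ring
  calc ‖T 1 0‖ * ‖T 1 1‖ ≤ ‖T 1 0‖ * ‖T 1 1‖ * (2 * C ^ 2 * ‖T.det‖) :=
        le_mul_of_one_le_right (by positivity) hT.one_le_norm_det
    _ = C ^ 2 * (2 * (‖T 1 0‖ * ‖T 1 1‖ * ‖T.det‖)) := by ring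
    _ ≤ C ^ 2 * (4 * h * C ^ 4) := by gcongr
    _ = 4 * h * C ^ 6 := by ring

theorem one_le_mul_max_norm_bottom_row (hT : IsBoundedDiagonalizerAt h C A T T' D) :
    1 ≤ 4 * C ^ 3 * max ‖T 1 0‖ ‖T 1 1‖ := by
  have hC : 0 ≤ C := (norm_nonneg T).trans hT.norm_le
  have hdet : ‖T.det‖ ≤ 2 * (C * max ‖T 1 0‖ ‖T 1 1‖) :=
    calc ‖T.det‖ ≤ ‖T 0 0‖ * ‖T 1 1‖ + ‖T 0 1‖ * ‖T 1 0‖ := by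
          rw [Matrix.det_fin_two]
          simpa only [norm_mul] using norm_sub_le (T 0 0 * T 1 1) (T 0 1 * T 1 0)
      _ ≤ C * max ‖T 1 0‖ ‖T 1 1‖ + C * max ‖T 1 0‖ ‖T 1 1‖ := by
          gcongr
          · exact hT.norm_apply_le 0 0
          · exact le_max_right _ _
          · exact hT.norm_apply_le 0 1
          · exact le_max_left _ _
      _ = 2 * (C * max ‖T 1 0‖ ‖T 1 1‖) := (two_mul _).symm
  calc 1 ≤ 2 * C ^ 2 * ‖T.det‖ := hT.one_le_norm_det
    _ ≤ 2 * C ^ 2 * (2 * (C * max ‖T 1 0‖ ‖T 1 1‖)) := by gcongr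
    _ = 4 * C ^ 3 * max ‖T 1 0‖ ‖T 1 1‖ := by ring

theorem norm_bottom_row_ne (hh : 0 ≤ h) (hsmall : 64 * C ^ 12 * h < 1) (ha : 1 ≤ ‖a‖)
    (hT : IsBoundedDiagonalizerAt h C !![a, g; 0, -a] T T' D) : ‖T 1 0‖ ≠ ‖T 1 1‖ := by
  intro heq
  have hlower := hT.one_le_mul_max_norm_bottom_row
  have hupper := hT.norm_bottom_row_mul_le hh ha
  rw [heq, max_self] at hlower
  rw [heq] at hupper
  have : (1 : ℝ) ≤ 64 * C ^ 12 * h :=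
    calc (1 : ℝ) ≤ (4 * C ^ 3 * ‖T 1 1‖) ^ 2 := one_le_pow₀ hlower
      _ = 16 * C ^ 6 * (‖T 1 1‖ * ‖T 1 1‖) := by ring
      _ ≤ 16 * C ^ 6 * (4 * h * C ^ 6) := by
          have : 0 ≤ C := (norm_nonneg T).trans hT.norm_le
          gcongr
      _ = 64 * C ^ 12 * h := by ring
  linarith

end IsBoundedDiagonalizerAt

theorem forall_lt_or_forall_gt_of_forall_ne {X α : Type*} [TopologicalSpace X] [LinearOrder α]
    [TopologicalSpace α] [OrderClosedTopology α] {s : Set X} (hs : IsPreconnected s) {u v : X → α}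
    (hu : ContinuousOn u s) (hv : ContinuousOn v s) (hne : ∀ x ∈ s, u x ≠ v x) :
    (∀ x ∈ s, u x < v x) ∨ ∀ x ∈ s, v x < u x := by
  by_contra! ⟨⟨x, hx, hvu⟩, y, hy, huv⟩
  obtain ⟨w, hw, heq⟩ := hs.intermediate_value₂ hy hx hu hv huv hvu
  exact hne w hw heq

theorem hasDerivAt_matrix_apply {m n : Type*} [Finite m] [Finite n] {T : ℝ → Matrix m n ℂ}
    {T' : Matrix m n ℂ} {x : ℝ} (hT : HasDerivAt T T' x) (i : m) (j : n) :
    HasDerivAt (fun y ↦ T y i j) (T' i j) x := by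
  have := Fintype.ofFinite m
  have := Fintype.ofFinite n
  exact (Matrix.entryLinearMap ℝ ℂ i j).toContinuousLinearMap.hasFDerivAt.comp_hasDerivAt x hT

theorem one_le_norm_ofReal_add_I (x : ℝ) : 1 ≤ ‖(x : ℂ) + Complex.I‖ := by
  simpa using Complex.abs_im_le_norm ((x : ℂ) + Complex.I)

variable {L h C : ℝ} {g : ℝ → ℂ} {T T' D : ℝ → Matrix (Fin 2) (Fin 2) ℂ}

theorem exists_column_forall_one_le_norm_bottom (hh : 0 ≤ h) (hsmall : 64 * C ^ 12 * h < 1)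
    (hT' : ∀ x ∈ Icc (-L) L, HasDerivAt T (T' x) x)
    (hT : ∀ x ∈ Icc (-L) L, IsBoundedDiagonalizerAt h C
      !![x + Complex.I, g x; 0, -(x + Complex.I)] (T x) (T' x) (D x)) :
    ∃ j, ∀ x ∈ Icc (-L) L, 1 ≤ 4 * C ^ 3 * ‖T x 1 j‖ := by
  have hcont (j : Fin 2) : ContinuousOn (fun x ↦ ‖T x 1 j‖) (Icc (-L) L) := fun x hx ↦
    (hasDerivAt_matrix_apply (hT' x hx) 1 j).continuousAt.norm.continuousWithinAt
  rcases forall_lt_or_forall_gt_of_forall_ne isPreconnected_Icc (hcont 0) (hcont 1) fun x hx ↦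
    (hT x hx).norm_bottom_row_ne hh hsmall (one_le_norm_ofReal_add_I x) with hlt | hgt
  · exact ⟨1, fun x hx ↦ by
      simpa only [max_eq_right (hlt x hx).le] using (hT x hx).one_le_mul_max_norm_bottom_row⟩
  · exact ⟨0, fun x hx ↦ by
      simpa only [max_eq_left (hgt x hx).le] using (hT x hx).one_le_mul_max_norm_bottom_row⟩

theorem hasBoundedSolution_of_isBoundedDiagonalizerAt (hh : 0 < h) (hsmall : 64 * C ^ 12 * h < 1)
    (hT' : ∀ x ∈ Icc (-L) L, HasDerivAt T (T' x) x)
    (hT : ∀ x ∈ Icc (-L) L, IsBoundedDiagonalizerAt h C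
      !![x + Complex.I, g x; 0, -(x + Complex.I)] (T x) (T' x) (D x)) :
    HasBoundedSolution L h (4 * C ^ 4) g := by
  obtain ⟨j, hj⟩ := exists_column_forall_one_le_norm_bottom hh.le hsmall hT' hT
  refine ⟨fun x ↦ T x 0 j / T x 1 j, fun x hx ↦ ?_⟩
  have hne : T x 1 j ≠ 0 := fun h0 ↦ by
    have := hj x hx
    simp only [h0, norm_zero, mul_zero] at this
    linarith
  refine ⟨((hasDerivAt_matrix_apply (hT' x hx) 0 j).div
    (hasDerivAt_matrix_apply (hT' x hx) 1 j) hne).congr_deriv ?_, ?_⟩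
  · have hh0 : (h : ℂ) ≠ 0 := Complex.ofReal_ne_zero.2 hh.ne'
    field_simp
    linear_combination (hT x hx).riccati j
  · have hC : 0 ≤ C := (norm_nonneg _).trans (hT x hx).norm_le
    rw [norm_div, div_le_iff₀ (norm_pos_iff.2 hne)]
    calc ‖T x 0 j‖ ≤ C := (hT x hx).norm_apply_le 0 j
      _ ≤ C * (4 * C ^ 3 * ‖T x 1 j‖) := le_mul_of_one_le_right hC (hj x hx)
      _ = 4 * C ^ 4 * ‖T x 1 j‖ := by ring

theorem exists_eventually_hasBoundedSolution_of_isUniformC1Diagonalizer {h₁ : ℝ} (hh₁ : 0 < h₁)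
    {g : ℝ → ℝ → ℂ} (hdiag : IsUniformC1Diagonalizer L h₁
      fun x h ↦ !![x + Complex.I, g x h; 0, -(x + Complex.I)]) :
    ∃ K, ∀ᶠ h in 𝓝[>] 0, HasBoundedSolution L h K fun x ↦ g x h := by
  obtain ⟨T, T', D, C, -, hT⟩ := hdiag
  have hsmall : ∀ᶠ h : ℝ in 𝓝[>] 0, 64 * C ^ 12 * h < 1 :=
    nhdsWithin_le_nhds <| (continuous_const.mul continuous_id).tendsto' 0 0 (mul_zero _)
      |>.eventually_lt_const one_pos
  refine ⟨4 * C ^ 4, ?_⟩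
  filter_upwards [hsmall, Ioc_mem_nhdsGT hh₁] with h hsmall_h hh
  refine hasBoundedSolution_of_isBoundedDiagonalizerAt hh.1 hsmall_h (T := fun x ↦ T x h)
    (T' := fun x ↦ T' x h) (D := fun x ↦ D x h) (fun x hx ↦ (hT h hh x hx).1) fun x hx ↦ ?_
  obtain ⟨-, hD, hunit, hnorm, hinv, hderiv, -, heq⟩ := hT h hh x hx
  exact ⟨fun i j hij ↦ hD i j hij, hunit, hnorm, hinv, hderiv, heq⟩

end Diagonalization

section Failure

open MeasureTheory Filter

/-- The function `θ` of the theorem, equal to `e^{-x^{-ϑ}}` for `x > 0` and to `0` for `x ≤ 0`,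
with complex values so that it can stand as a matrix entry. -/
noncomputable def flatExp (ϑ x : ℝ) : ℂ :=
  if 0 < x then (Real.exp (-(x ^ (-ϑ))) : ℂ) else 0

theorem norm_flatExp_le_one (ϑ x : ℝ) : ‖flatExp ϑ x‖ ≤ 1 := by
  unfold flatExp
  split_ifs with hx
  · rw [Complex.norm_of_nonneg (Real.exp_pos _).le, Real.exp_le_one_iff, neg_nonpos]
    exact Real.rpow_nonneg hx.le _
  · simp

theorem intervalIntegrable_flatExp (ϑ a b : ℝ) :
    IntervalIntegrable (flatExp ϑ) volume a b := by
  have hmeas : Measurable (flatExp ϑ) :=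
    Measurable.ite measurableSet_Ioi (by fun_prop) measurable_const
  refine (intervalIntegrable_const (c := (1 : ℝ))).mono_fun hmeas.aestronglyMeasurable
    (.of_forall fun x ↦ ?_)
  simpa using norm_flatExp_le_one ϑ x

theorem flatExp_ae_eq_zero_left (ϑ a : ℝ) : flatExp ϑ =ᵐ[volume.restrict (Ioc a 0)] 0 :=
  (ae_restrict_iff' measurableSet_Ioc).2 (.of_forall fun _ hx ↦ if_neg hx.2.not_gt)

theorem not_flatExp_ae_eq_zero_right (ϑ : ℝ) {b : ℝ} (hb : 0 < b) :
    ¬ flatExp ϑ =ᵐ[volume.restrict (Ioc 0 b)] 0 := by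
  intro hzero
  have hfalse : ∀ᵐ _x ∂volume.restrict (Ioc 0 b), False := by
    filter_upwards [hzero, ae_restrict_mem measurableSet_Ioc] with x hx hxb
    rw [flatExp, if_pos hxb.1] at hx
    exact Complex.ofReal_ne_zero.2 (Real.exp_ne_zero _) hx
  rw [eventually_false_iff_eq_bot, ae_eq_bot, Measure.restrict_eq_zero, Real.volume_Ioc, sub_zero,
    ENNReal.ofReal_eq_zero] at hfalse
  exact hb.not_ge hfalse

theorem failure_of_local_conjugators_for_Cinfty_general {L h₁ : ℝ} (hh₁ : 0 < h₁) (p : ℕ)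
    {θ : ℝ → ℂ} (hθ : IntervalIntegrable θ volume (-L) L)
    (hleft : θ =ᵐ[volume.restrict (Ioc (-L) 0)] 0)
    (hright : ¬ θ =ᵐ[volume.restrict (Ioc 0 L)] 0) :
    ¬ IsUniformC1Diagonalizer L h₁ fun x h ↦
        !![(x : ℂ) + Complex.I, (h : ℂ) ^ p * θ x; 0, -((x : ℂ) + Complex.I)] := fun hdiag ↦
  have ⟨_, hsol⟩ := exists_eventually_hasBoundedSolution_of_isUniformC1Diagonalizer hh₁ hdiag
  hright (ae_eq_zero_of_eventually_hasBoundedSolution hθ hleft hsol)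

end Failure

/-- **Failure of local conjugators for `C^∞` coefficients** (Corollary 1.9).
Let `ϑ > 0` and let `θ(x) = e^{−x^{−ϑ}}` for `x > 0`, `θ(x) = 0` for `x ≤ 0` (a `C^∞` but
non-analytic function).  Then for every `L > 0` and `p ≥ 1` the triangular system
`h W' = [[x+i, h^p θ(x)],[0, −(x+i)]] W` on `[−L,L]` possesses no coordinate change `T`
with `T, T⁻¹` uniformly bounded in `C¹` as `h → 0⁺` converting it to a diagonal system. -/
theorem failure_of_local_conjugators_for_Cinfty
    (ϑ : ℝ) (hϑ : 0 < ϑ) (L : ℝ) (hL : 0 < L) (p : ℕ) (hp : 1 ≤ p) (h₀ : ℝ) (hh₀ : 0 < h₀) :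
    ¬ ∃ h₁ ∈ Ioc (0:ℝ) h₀, IsUniformC1Diagonalizer L h₁
        (fun x h => !![(x : ℂ) + Complex.I,
                       (h : ℂ) ^ p * (if 0 < x then (Real.exp (-(x ^ (-ϑ))) : ℂ) else 0);
                       0, -((x : ℂ) + Complex.I)]) := by
  rintro ⟨h₁, hh₁, hdiag⟩
  exact failure_of_local_conjugators_for_Cinfty_general hh₁.1 p (intervalIntegrable_flatExp ϑ _ _)
    (flatExp_ae_eq_zero_left ϑ _) (not_flatExp_ae_eq_zero_right ϑ hL) hdiag
end
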